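/- arXiv:0810.2731 — 5 statements merged into one kernel-verified Lean document; each statement's English description precedes it below -/
import Mathlib

section
/- Fix integers ℓ≥1 and n≥0. The colored q-derangement number d_{ℓ,n}(q) := Σ_{σ ∈ D_{ℓ,n}} q^{fmaj σ} satisfies the explicit formula d_{ℓ,n}(q) = [ℓ]_q[2ℓ]_q⋯[nℓ]_q · Σ_{k=0}^n (−1)^k q^{ℓ·binom(k,2)} / ([ℓ]_q[2ℓ]_q⋯[kℓ]_q) = Σ_{k=0}^n (−1)^k q^{ℓ·binom(k,2)} [(k+1)ℓ]_q[(k+2)ℓ]_q⋯[nℓ]_q. -/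
/-!
Fix a real `q` with `0 < q < 1` and put `Q = q ^ ℓ`. Each colored permutation `σ` is paired with
the sequences `lam` *compatible* with it: `lam` is weakly decreasing, and the word of `σ` is
increasing along every run of equal values of `lam`. A pair is weighted by `Q ^ (∑ lam i)` times
`q ^ col σ`.

* For a fixed `σ` the compatible sequences contribute `q ^ fmaj σ / (Q; Q)_n`
  (`CDer.tsum_compat`).
* The pairs of length `n` are the stable sortings of the words of length `n` over `ℕ × Fin ℓ`, so
  that together they contribute `(1 - q)⁻¹ ^ n` (`CDer.tsum_compat_all`).
* Inside a run of equal `lam` and color `0` the values increase, so the positions with value at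
  most the index come before the others. Hence a fixed point carrying a given part can be
  inserted into a compatible pair as the last fixed point in exactly one place
  (`CDer.compat_ins_isLast_iff`). This gives a recursion on the number of fixed points
  (`CDer.W_succ`), and the `j` fixed points account for a factor `1 / (Q; Q)_j` (`CDer.W_eq`).

With `d_k` the value at `q` of the derangement polynomial, this says
`(∑ d_k x^k / (Q; Q)_k) * (∑ x^j / (Q; Q)_j) = 1 / (1 - x / (1 - q))` as power series in `x`.
Euler's identity (`CDer.euler_mul`) inverts the second factor and yields the formula at `q`;
agreement of two integer polynomials at every `q` in `(0, 1)` makes them equal.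
-/

open Finset

/-- A colored permutation in `G_{ℓ,n} ≅ C_ℓ ≀ S_n`: an underlying permutation of `Fin n`
together with a color (exponent of `ζ`) attached to each position. The letter at (0-based)
position `i` of the word of `σ` is `ζ^(σ.2 i) · (σ.1 i + 1)` (1-based value `σ.1 i + 1`). -/
abbrev CP (ℓ n : ℕ) := Equiv.Perm (Fin n) × (Fin n → Fin ℓ)

namespace CP

variable {ℓ n : ℕ}

/-- `gtLetter a b` : the letter `a = (colorIndex, value)` is greater than `b` in the order
`1 > ζ > ⋯ > ζ^{ℓ-1}` on colors, colors compared first. -/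
def gtLetter (a b : ℕ × ℕ) : Prop := a.1 < b.1 ∨ (a.1 = b.1 ∧ b.2 < a.2)

instance (a b : ℕ × ℕ) : Decidable (gtLetter a b) := by unfold gtLetter; infer_instance

/-- The letter (color index, 0-based absolute value) at 0-based position `i`. -/
def letter (σ : CP ℓ n) (i : ℕ) : ℕ × ℕ :=
  if h : i < n then ((σ.2 ⟨i, h⟩ : ℕ), (σ.1 ⟨i, h⟩ : ℕ)) else (0, 0)

/-- 0-based descent positions : `i < n-1` such that `x_{i+1} > x_{i+2}` (1-based positions). -/
def desSet (σ : CP ℓ n) : Finset ℕ :=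
  (range (n - 1)).filter fun i => gtLetter (letter σ i) (letter σ (i + 1))

/-- Major index: sum of the (1-based) descent places. -/
def maj (σ : CP ℓ n) : ℕ := ∑ i ∈ desSet σ, (i + 1)

/-- Number of descents. -/
def des (σ : CP ℓ n) : ℕ := (desSet σ).card

/-- `col σ = Σ_j j·#{i : ε_{x_i} = ζ^j}`. -/
def col (σ : CP ℓ n) : ℕ := ∑ i, (σ.2 i : ℕ)

/-- flag major index. -/
def fmaj (σ : CP ℓ n) : ℕ := ℓ * maj σ + col σ

/-- The set of fixed points (position fixed and color `ζ^0 = 1`). -/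
def fixSet (σ : CP ℓ n) : Finset (Fin n) :=
  univ.filter fun i => σ.1 i = i ∧ (σ.2 i : ℕ) = 0

def fix (σ : CP ℓ n) : ℕ := (fixSet σ).card

/-- Number of excedances `x_i > i`. -/
def exc (σ : CP ℓ n) : ℕ :=
  (univ.filter fun i : Fin n => (σ.2 i : ℕ) = 0 ∧ (i : ℕ) < (σ.1 i : ℕ)).card

lemma card_nonfix (σ : CP ℓ n) : ((fixSet σ)ᶜ).card = n - fix σ := by
  rw [Finset.card_compl, fix, Fintype.card_fin]

lemma card_vals (σ : CP ℓ n) : (((fixSet σ)ᶜ).image σ.1).card = n - fix σ := by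
  rw [Finset.card_image_of_injective _ σ.1.injective, card_nonfix]

/-- The bijection from nonfixed positions to the set of their values. -/
def derMid (σ : CP ℓ n) :
    {x // x ∈ ((fixSet σ)ᶜ : Finset (Fin n))} ≃ {x // x ∈ ((fixSet σ)ᶜ).image σ.1} where
  toFun p := ⟨σ.1 p.1, Finset.mem_image_of_mem _ p.2⟩
  invFun v := ⟨σ.1.symm v.1, by
    obtain ⟨p, hp, hpv⟩ := Finset.mem_image.mp v.2
    simpa [← hpv] using hp⟩
  left_inv p := by simp
  right_inv v := by simp

/-- The derangement part `Der σ`: delete the fixed points of the word of `σ`, replace each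
absolute value by its rank among the remaining values, and keep the colors. -/
def Der (σ : CP ℓ n) : CP ℓ (n - fix σ) :=
  let eP := ((fixSet σ)ᶜ).orderIsoOfFin (card_nonfix σ)
  let eV := (((fixSet σ)ᶜ).image σ.1).orderIsoOfFin (card_vals σ)
  (eP.toEquiv.trans ((derMid σ).trans eV.toEquiv.symm), fun i => σ.2 (eP i))

/-- `maf σ = maj (Der σ) + Σ_{j=1}^k (i_j − j)` over the (1-based) fixed points
`i_1 < ⋯ < i_k`; with 0-based fixed positions this is `Σ f − k(k−1)/2`. -/
def maf (σ : CP ℓ n) : ℕ := maj (Der σ) + ((∑ i ∈ fixSet σ, (i : ℕ)) - (fix σ).choose 2)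

/-- flag maf. -/
def fmaf (σ : CP ℓ n) : ℕ := ℓ * maf σ + col σ

end CP

/-- The q-integer `[k]_q = 1 + q + ⋯ + q^{k-1}`. -/
def qint {R : Type*} [CommSemiring R] (q : R) (k : ℕ) : R := ∑ i ∈ range k, q ^ i


/-! ### Compatible sequences -/

namespace CDer

open scoped ENNReal

variable {ℓ n : ℕ}

/-- `lam` is compatible with `σ` if it is weakly decreasing and the word of `σ` is strictly
increasing (in the colored order) on each maximal run of positions where `lam` is constant. This is
phrased for all pairs of positions, so that it restricts to subwords. -/
def Compat (σ : CP ℓ n) (lam : Fin n → ℕ) : Prop :=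
  ∀ i j, i < j → lam j < lam i ∨
    (lam i = lam j ∧ (σ.2 j < σ.2 i ∨ (σ.2 i = σ.2 j ∧ σ.1 i < σ.1 j)))

/-- On a run of equal `lam` and equal color the values of `σ` increase at least as fast as the
positions, so non-excedances of color `0` precede excedances. -/
lemma Compat.gap {σ : CP ℓ n} {lam : Fin n → ℕ} (h : Compat σ lam) {i j : Fin n} (hij : i < j)
    (hl : lam i = lam j) (hc : σ.2 i = σ.2 j) : (j : ℕ) + σ.1 i ≤ σ.1 j + i := by
  have key : ∀ a ∈ Ioc i j, σ.1 a ∈ Ioc (σ.1 i) (σ.1 j) := by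
    intro a ha
    rw [mem_Ioc] at ha ⊢
    rcases eq_or_lt_of_le ha.2 with rfl | haj
    · have := h _ _ ha.1
      grind
    · have h1 := h _ _ ha.1
      have h2 := h _ _ haj
      grind
  have hcard := Finset.card_le_card_of_injOn σ.1 key σ.1.injective.injOn
  rw [Fin.card_Ioc, Fin.card_Ioc] at hcard
  have := h _ _ hij
  have : σ.1 i < σ.1 j := by grind
  rw [Fin.lt_def] at hij this
  omega

/-! ### Inserting a fixed point -/

/-- The permutation of `Fin (n + 1)` fixing `p` and acting on the other points as `α`. -/
def insPerm (p : Fin (n + 1)) (α : Equiv.Perm (Fin n)) : Equiv.Perm (Fin (n + 1)) :=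
  (finSuccEquiv' p).trans ((Equiv.optionCongr α).trans (finSuccEquiv' p).symm)

@[simp] lemma insPerm_self (p : Fin (n + 1)) (α : Equiv.Perm (Fin n)) : insPerm p α p = p := by
  simp [insPerm]

@[simp] lemma insPerm_succAbove (p : Fin (n + 1)) (α : Equiv.Perm (Fin n)) (i : Fin n) :
    insPerm p α (p.succAbove i) = p.succAbove (α i) := by
  simp [insPerm]

lemma insPerm_injective (p : Fin (n + 1)) : Function.Injective (insPerm (n := n) p) := by
  intro α β h
  ext1 i
  have := congrArg (fun e => e (p.succAbove i)) h
  simpa using this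

lemma exists_insPerm {p : Fin (n + 1)} {σ : Equiv.Perm (Fin (n + 1))} (h : σ p = p) :
    ∃ α, insPerm p α = σ := by
  let e : Equiv.Perm (Option (Fin n)) :=
    (finSuccEquiv' p).symm.trans (σ.trans (finSuccEquiv' p))
  have he : e none = none := by simp [e, h]
  refine ⟨Equiv.removeNone e, ?_⟩
  ext1 x
  rcases Fin.eq_self_or_eq_succAbove p x with rfl | ⟨i, rfl⟩
  · simp [h]
  · rw [insPerm_succAbove]
    have h1 : ∃ x', e (some i) = some x' := by
      rw [← Option.ne_none_iff_exists']
      intro h2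
      exact absurd (e.injective (h2.trans he.symm)) (by simp)
    have h2 := Equiv.removeNone_some e h1
    have h3 : e (some i) = finSuccEquiv' p (σ (p.succAbove i)) := by simp [e]
    rw [h3] at h2
    exact (finSuccEquiv'_eq_some.1 h2.symm).symm

/-- Insert into the colored permutation `x.2.1` a fixed point at position `p`, and into the
sequence `x.2.2` the value `x.1` at that position. -/
def ins [NeZero ℓ] (p : Fin (n + 1)) (x : ℕ × (CP ℓ n × (Fin n → ℕ))) :
    CP ℓ (n + 1) × (Fin (n + 1) → ℕ) :=
  ((insPerm p x.2.1.1, p.insertNth (α := fun _ => Fin ℓ) 0 x.2.1.2),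
    p.insertNth (α := fun _ => ℕ) x.1 x.2.2)

lemma ins_injective [NeZero ℓ] (p : Fin (n + 1)) : Function.Injective (ins (ℓ := ℓ) p) := by
  rintro ⟨v, ⟨α, c⟩, lam⟩ ⟨v', ⟨α', c'⟩, lam'⟩ h
  simp only [ins, Prod.mk.injEq, Fin.insertNth_inj] at h
  obtain ⟨⟨h1, -, h2⟩, h3, h4⟩ := h
  simp [insPerm_injective p h1, h2, h3, h4]

lemma mem_range_ins [NeZero ℓ] {p : Fin (n + 1)} {y : CP ℓ (n + 1) × (Fin (n + 1) → ℕ)}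
    (h : p ∈ CP.fixSet y.1) : y ∈ Set.range (ins (ℓ := ℓ) p) := by
  obtain ⟨⟨σ, c⟩, lam⟩ := y
  simp only [CP.fixSet, mem_filter, mem_univ, true_and] at h
  obtain ⟨α, hα⟩ := exists_insPerm h.1
  refine ⟨(lam p, (α, p.removeNth c), p.removeNth lam), ?_⟩
  have h0 : (0 : Fin ℓ) = c p := Fin.ext (by simpa using h.2.symm)
  simp only [ins, hα, h0, Fin.insertNth_self_removeNth]

lemma fixSet_ins [NeZero ℓ] (p : Fin (n + 1)) (x : ℕ × (CP ℓ n × (Fin n → ℕ))) :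
    CP.fixSet (ins p x).1 = insert p ((CP.fixSet x.2.1).image p.succAbove) := by
  ext y
  rcases Fin.eq_self_or_eq_succAbove p y with rfl | ⟨i, rfl⟩
  · simp [CP.fixSet, ins]
  · simp [CP.fixSet, ins, Fin.succAbove_ne]

lemma fix_ins [NeZero ℓ] (p : Fin (n + 1)) (x : ℕ × (CP ℓ n × (Fin n → ℕ))) :
    CP.fix (ins p x).1 = CP.fix x.2.1 + 1 := by
  rw [CP.fix, fixSet_ins, card_insert_of_notMem, card_image_of_injective _ Fin.succAbove_right_injective,
    CP.fix]
  simp [Fin.succAbove_ne]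

/-- Positions that must precede a last fixed point carrying the value `v`. -/
def Before (v : ℕ) (σ : CP ℓ n) (lam : Fin n → ℕ) (i : Fin n) : Prop :=
  v < lam i ∨ (lam i = v ∧ ((σ.2 i : ℕ) ≠ 0 ∨ σ.1 i ≤ i))

lemma before_of_lt {v : ℕ} {σ : CP ℓ n} {lam : Fin n → ℕ} (h : Compat σ lam) {i j : Fin n}
    (hij : i < j) (hj : Before v σ lam j) : Before v σ lam i := by
  have h1 := h i j hij
  have h2 := h.gap hij
  unfold Before at *
  rcases h1 with h1 | ⟨h1, h3 | ⟨h3, h4⟩⟩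
  · left; omega
  · rw [Fin.lt_def] at h3; omega
  · have := h2 h1 h3
    rw [h1, h3]
    rw [Fin.le_def] at *
    omega

lemma exists_cut {P : Fin n → Prop} (hP : ∀ i j, i < j → P j → P i) :
    ∃! p : Fin (n + 1), ∀ i, i.castSucc < p ↔ P i := by
  classical
  have hle : (univ.filter P).card ≤ n := by simpa using card_le_univ (univ.filter P)
  refine ⟨⟨(univ.filter P).card, by omega⟩, fun i => ?_, fun p hp => ?_⟩
  · rw [Fin.lt_def]
    simp only [Fin.val_castSucc]
    constructor
    · intro h
      by_contra hi
      have : univ.filter P ⊆ Iio i := by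
        intro j hj
        rw [mem_Iio]
        by_contra hji
        rcases eq_or_lt_of_le (not_lt.1 hji) with rfl | h'
        · exact hi (by simpa using hj)
        · exact hi (hP _ _ h' (by simpa using hj))
      have := card_le_card this
      rw [Fin.card_Iio] at this
      omega
    · intro h
      have : Iic i ⊆ univ.filter P := by
        intro j hj
        rcases eq_or_lt_of_le (mem_Iic.1 hj) with rfl | h'
        · simpa using h
        · simpa using hP _ _ h' h
      have := card_le_card this
      rw [Fin.card_Iic] at this
      omega
  · have : univ.filter P = univ.filter (fun i : Fin n => (i : ℕ) < p) := by
      ext i; simp [← hp i, Fin.lt_def]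
    ext
    simp only [this, Fin.card_filter_val_lt]
    omega

/-- `p` is the last fixed point of `σ`. -/
def IsLast (σ : CP ℓ n) (p : Fin n) : Prop :=
  p ∈ CP.fixSet σ ∧ ∀ i ∈ CP.fixSet σ, i ≤ p

lemma existsUnique_isLast {σ : CP ℓ n} (h : CP.fix σ ≠ 0) : ∃! p, IsLast σ p := by
  have hne : (CP.fixSet σ).Nonempty := card_ne_zero.1 h
  refine ⟨(CP.fixSet σ).max' hne, ⟨max'_mem _ _, fun i hi => le_max' _ _ hi⟩, fun p hp => ?_⟩
  exact le_antisymm (le_max' _ _ hp.1) (hp.2 _ (max'_mem _ _))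

lemma compat_ins_iff [NeZero ℓ] (p : Fin (n + 1)) (v : ℕ) (σ : CP ℓ n) (lam : Fin n → ℕ) :
    Compat (ins p (v, σ, lam)).1 (ins p (v, σ, lam)).2 ↔ Compat σ lam ∧
      (∀ i : Fin n, i.castSucc < p → v < lam i ∨
        (lam i = v ∧ ((σ.2 i : ℕ) ≠ 0 ∨ (σ.1 i).castSucc < p))) ∧
      (∀ i : Fin n, ¬ i.castSucc < p → lam i < v ∨
        (lam i = v ∧ ((σ.2 i : ℕ) = 0 ∧ ¬ (σ.1 i).castSucc < p))) := by
  have hlt : ∀ i : Fin n, p.succAbove i < p ↔ i.castSucc < p :=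
    fun i => Fin.succAbove_lt_iff_castSucc_lt p i
  have hgt : ∀ i : Fin n, p < p.succAbove i ↔ ¬ i.castSucc < p := by
    intro i; rw [Fin.lt_succAbove_iff_le_castSucc, not_lt]
  have hv : ∀ c : Fin ℓ, ((c : ℕ) = 0 ↔ c = 0) := fun c => by rw [Fin.ext_iff]; simp
  constructor
  · intro h
    refine ⟨fun i j hij => ?_, fun i hi => ?_, fun i hi => ?_⟩
    · have := h (p.succAbove i) (p.succAbove j) (Fin.strictMono_succAbove p hij)
      simpa [ins] using this
    · have := h (p.succAbove i) p ((hlt i).2 hi)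
      simp only [ins, Fin.insertNth_apply_same, Fin.insertNth_apply_succAbove, insPerm_self,
        insPerm_succAbove, hlt, Fin.pos_iff_ne_zero] at this
      rw [Ne, hv]
      tauto
    · have := h p (p.succAbove i) ((hgt i).2 hi)
      simp only [ins, Fin.insertNth_apply_same, Fin.insertNth_apply_succAbove, insPerm_self,
        insPerm_succAbove, hgt, Fin.not_lt_zero, false_or] at this
      rw [hv]
      grind
  · rintro ⟨h1, h2, h3⟩ a b hab
    rcases Fin.eq_self_or_eq_succAbove p a with rfl | ⟨i, rfl⟩
    · rcases Fin.eq_self_or_eq_succAbove a b with rfl | ⟨j, rfl⟩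
      · exact absurd hab (lt_irrefl _)
      · have := h3 j ((hgt j).1 hab)
        simp only [ins, Fin.insertNth_apply_same, Fin.insertNth_apply_succAbove, insPerm_self,
          insPerm_succAbove, hgt, Fin.not_lt_zero, false_or]
        rw [hv] at this
        grind
    · rcases Fin.eq_self_or_eq_succAbove p b with rfl | ⟨j, rfl⟩
      · have := h2 i ((hlt i).1 hab)
        simp only [ins, Fin.insertNth_apply_same, Fin.insertNth_apply_succAbove, insPerm_self,
          insPerm_succAbove, hlt, Fin.pos_iff_ne_zero]
        rw [Ne, hv] at this
        tauto
      · have := h1 i j ((Fin.strictMono_succAbove p).lt_iff_lt.1 hab)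
        simpa [ins] using this

/-- The insertion position is forced: inserting a fixed point with value `v` at `p` produces a
compatible pair with last fixed point `p` exactly when `p` separates the positions that are
`Before v` from the others, and no fixed point of `σ` carries a value below `v`. -/
lemma compat_ins_isLast_iff [NeZero ℓ] (p : Fin (n + 1)) (v : ℕ) (σ : CP ℓ n)
    (lam : Fin n → ℕ) :
    (Compat (ins p (v, σ, lam)).1 (ins p (v, σ, lam)).2 ∧ IsLast (ins p (v, σ, lam)).1 p) ↔
      Compat σ lam ∧ (∀ i ∈ CP.fixSet σ, v ≤ lam i) ∧
        ∀ i : Fin n, i.castSucc < p ↔ Before v σ lam i := by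
  have hlast : IsLast (ins p (v, σ, lam)).1 p ↔ ∀ i ∈ CP.fixSet σ, i.castSucc < p := by
    simp only [IsLast, fixSet_ins, mem_insert, true_or, true_and, forall_eq_or_imp, le_refl,
      mem_image, forall_exists_index, and_imp, forall_apply_eq_imp_iff₂]
    refine forall₂_congr fun i _ => ?_
    rw [← Fin.succAbove_lt_iff_castSucc_lt, (Fin.succAbove_ne p i).le_iff_lt]
  have hfix : ∀ i, i ∈ CP.fixSet σ ↔ σ.1 i = i ∧ (σ.2 i : ℕ) = 0 := by simp [CP.fixSet]
  rw [hlast]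
  constructor
  · rintro ⟨hc, hl⟩
    obtain ⟨h1, h2, h3⟩ := (compat_ins_iff p v σ lam).1 hc
    refine ⟨h1, fun i hi => ?_, fun i => ⟨fun hi => ?_, fun hi => ?_⟩⟩
    · have := h2 i (hl i hi); omega
    · rcases h2 i hi with h | ⟨h, h' | h'⟩
      · exact Or.inl h
      · exact Or.inr ⟨h, Or.inl h'⟩
      · refine Or.inr ⟨h, ?_⟩
        by_cases h0 : (σ.2 i : ℕ) = 0
        · right
          -- Between the positions `i` and `p` of the enlarged word the values climb up to `p`.
          have hg := hc.gap (i := p.succAbove i) (j := p)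
            ((Fin.succAbove_lt_iff_castSucc_lt p i).2 hi) (by simpa [ins] using h)
            (by simpa [ins] using (Fin.ext (by simpa using h0) : σ.2 i = 0))
          simp only [ins, insPerm_self, insPerm_succAbove] at hg
          simp only [Fin.succAbove_of_castSucc_lt _ _ hi,
            Fin.succAbove_of_castSucc_lt _ _ h', Fin.val_castSucc] at hg
          rw [Fin.le_def]; omega
        · exact Or.inl h0
    · by_contra hip
      rcases h3 i hip with h | ⟨h, h0, h'⟩
      · rcases hi with hi | hi <;> omega
      · have hg := hc.gap (i := p) (j := p.succAbove i)
            ((Fin.lt_succAbove_iff_le_castSucc p i).2 (not_lt.1 hip)) (by simpa [ins] using h.symm)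
            (by simpa [ins] using (Fin.ext (by simpa using h0.symm) : 0 = σ.2 i))
        simp only [ins, insPerm_self, insPerm_succAbove] at hg
        simp only [Fin.succAbove_of_le_castSucc _ _ (not_lt.1 hip),
          Fin.succAbove_of_le_castSucc _ _ (not_lt.1 h'), Fin.val_succ] at hg
        have hle : σ.1 i ≤ i := by
          rcases hi with hi | ⟨_, hi | hi⟩
          · omega
          · exact absurd h0 hi
          · exact hi
        have : σ.1 i = i := le_antisymm hle (by rw [Fin.le_def]; omega)
        exact hip (hl i ((hfix i).2 ⟨this, h0⟩))
  · rintro ⟨h1, h2, h3⟩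
    refine ⟨(compat_ins_iff p v σ lam).2 ⟨h1, fun i hi => ?_, fun i hi => ?_⟩, fun i hi => ?_⟩
    · rcases (h3 i).1 hi with h | ⟨h, h' | h'⟩
      · exact Or.inl h
      · exact Or.inr ⟨h, Or.inl h'⟩
      · exact Or.inr ⟨h, Or.inr (lt_of_le_of_lt (Fin.castSucc_le_castSucc_iff.2 h') hi)⟩
    · have hb := mt (h3 i).2 hi
      simp only [Before, not_or, not_and, not_lt, not_le, not_not] at hb
      rcases eq_or_lt_of_le hb.1 with h | h
      · refine Or.inr ⟨h, (hb.2 h).1, fun h' => hi (lt_trans ?_ h')⟩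
        exact Fin.castSucc_lt_castSucc_iff.2 (hb.2 h).2
      · exact Or.inl h
    · rw [h3]
      rcases eq_or_lt_of_le (h2 i hi) with h | h
      · exact Or.inr ⟨h.symm, Or.inr ((hfix i).1 hi).1.le⟩
      · exact Or.inl h

/-! ### Generating functions of compatible pairs

All sums are taken in `ℝ≥0∞`, where they can be rearranged freely. -/

/-- The weight `q ^ (ℓ · |lam| + col σ)`. -/
noncomputable def wt (q : ℝ≥0∞) (x : CP ℓ n × (Fin n → ℕ)) : ℝ≥0∞ :=
  q ^ (ℓ * ∑ i, x.2 i + CP.col x.1)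

lemma wt_ins [NeZero ℓ] (q : ℝ≥0∞) (p : Fin (n + 1)) (x : ℕ × (CP ℓ n × (Fin n → ℕ))) :
    wt q (ins p x) = (q ^ ℓ) ^ x.1 * wt q x.2 := by
  have h1 : ∑ i, (ins p x).2 i = x.1 + ∑ i, x.2.2 i := by
    rw [Fin.sum_univ_succAbove _ p]; simp [ins]
  have h2 : CP.col (ins p x).1 = CP.col x.2.1 := by
    rw [CP.col, Fin.sum_univ_succAbove _ p]; simp [ins, CP.col]
  rw [wt, wt, h1, h2, ← pow_mul, ← pow_add]
  congr 1; ring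

/-- `1 / ((1 - Q)(1 - Q²)⋯(1 - Q^j))`. -/
noncomputable def eInv (Q : ℝ≥0∞) (j : ℕ) : ℝ≥0∞ := ∏ i ∈ range j, (1 - Q ^ (i + 1))⁻¹

lemma tsum_tail_geometric (Q : ℝ≥0∞) (j V : ℕ) :
    (∑' v : ℕ, if V ≤ v then Q ^ v * Q ^ (j * v) else 0) =
      Q ^ ((j + 1) * V) * (1 - Q ^ (j + 1))⁻¹ := by
  have hinj : Function.Injective (fun k : ℕ => V + k) := fun a b h => by simpa using h
  rw [← hinj.tsum_eq, ← ENNReal.tsum_geometric, ← ENNReal.tsum_mul_left]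
  · refine tsum_congr fun k => ?_
    rw [if_pos (by omega), ← pow_add, ← pow_mul, ← pow_add]
    congr 1; ring
  · intro v hv
    have : V ≤ v := by
      by_contra h; simp [h] at hv
    exact ⟨v - V, by simp only; omega⟩

open scoped Classical in
/-- The sum of the weights of the compatible pairs of length `n` with exactly `j` fixed points, all
of which carry values at least `V`. -/
noncomputable def W (ℓ : ℕ) (q : ℝ≥0∞) (n j V : ℕ) : ℝ≥0∞ :=
  ∑' x : CP ℓ n × (Fin n → ℕ),
    if Compat x.1 x.2 ∧ CP.fix x.1 = j ∧ ∀ i ∈ CP.fixSet x.1, V ≤ x.2 i then wt q x else 0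

lemma sum_ite_existsUnique {β : Type*} [Fintype β] {P : β → Prop} [DecidablePred P] (h : ∃! p, P p) (a : ℝ≥0∞) :
    ∑ p, (if P p then a else 0) = a := by
  obtain ⟨p, hp, hu⟩ := h
  rw [Finset.sum_eq_single p (fun b _ hb => if_neg fun hb' => hb (hu b hb')) (by simp), if_pos hp]

/-- Removal of the last fixed point. -/
lemma W_succ [NeZero ℓ] (q : ℝ≥0∞) (n j V : ℕ) :
    W ℓ q (n + 1) (j + 1) V = ∑' v : ℕ, if V ≤ v then (q ^ ℓ) ^ v * W ℓ q n j v else 0 := by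
  classical
  have step1 : W ℓ q (n + 1) (j + 1) V = ∑ p : Fin (n + 1),
      ∑' y : CP ℓ (n + 1) × (Fin (n + 1) → ℕ),
        if (Compat y.1 y.2 ∧ IsLast y.1 p) ∧ CP.fix y.1 = j + 1 ∧ V ≤ y.2 p
          then wt q y else 0 := by
    rw [W, ← Summable.tsum_finsetSum (fun _ _ => ENNReal.summable)]
    refine tsum_congr fun y => ?_
    by_cases hf : CP.fix y.1 = j + 1
    · by_cases hc : Compat y.1 y.2
      · have hu : ∃! p, IsLast y.1 p := existsUnique_isLast (by omega)
        rw [← sum_ite_existsUnique hu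
          (if Compat y.1 y.2 ∧ CP.fix y.1 = j + 1 ∧ ∀ i ∈ CP.fixSet y.1, V ≤ y.2 i
            then wt q y else 0)]
        refine Finset.sum_congr rfl fun p _ => ?_
        by_cases hp : IsLast y.1 p
        · have : (∀ i ∈ CP.fixSet y.1, V ≤ y.2 i) ↔ V ≤ y.2 p := by
            refine ⟨fun h => h p hp.1, fun h i hi => h.trans ?_⟩
            rcases eq_or_lt_of_le (hp.2 i hi) with rfl | hlt
            · exact le_rfl
            · have := hc i p hlt
              omega
          simp only [hp, hc, hf, this, if_true, true_and, and_true]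
        · simp [hp]
      · simp [hc]
    · simp [hf]
  have step2 : ∀ p : Fin (n + 1), (∑' y : CP ℓ (n + 1) × (Fin (n + 1) → ℕ),
        if (Compat y.1 y.2 ∧ IsLast y.1 p) ∧ CP.fix y.1 = j + 1 ∧ V ≤ y.2 p
          then wt q y else 0) =
      ∑' x : ℕ × (CP ℓ n × (Fin n → ℕ)),
        if (∀ i : Fin n, i.castSucc < p ↔ Before x.1 x.2.1 x.2.2 i) then
          (if Compat x.2.1 x.2.2 ∧ (CP.fix x.2.1 = j ∧ ∀ i ∈ CP.fixSet x.2.1, x.1 ≤ x.2.2 i) ∧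
            V ≤ x.1 then (q ^ ℓ) ^ x.1 * wt q x.2 else 0) else 0 := by
    intro p
    rw [← (ins_injective (ℓ := ℓ) p).tsum_eq]
    · refine tsum_congr fun ⟨v, σ, lam⟩ => ?_
      rw [wt_ins, ← ite_and]
      refine if_congr ?_ rfl rfl
      rw [compat_ins_isLast_iff, fix_ins]
      have : (ins p (v, σ, lam)).2 p = v := by simp [ins]
      rw [this]
      simp only [Nat.add_right_cancel_iff]
      tauto
    · intro y hy
      refine mem_range_ins ?_
      by_contra h
      exact hy (if_neg fun h' => h h'.1.2.1)
  rw [step1, Finset.sum_congr rfl fun p _ => step2 p,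
    ← Summable.tsum_finsetSum (fun _ _ => ENNReal.summable), ENNReal.tsum_prod']
  refine tsum_congr fun v => ?_
  by_cases hV : V ≤ v
  · rw [if_pos hV, W, ← ENNReal.tsum_mul_left]
    refine tsum_congr fun x => ?_
    by_cases hc : Compat x.1 x.2
    · dsimp only
      rw [sum_ite_existsUnique (exists_cut fun i k hik => before_of_lt hc hik), mul_ite, mul_zero]
      exact if_congr (by simp only [hV, and_true]) rfl rfl
    · simp [hc]
  · simp [hV]

lemma W_eq [NeZero ℓ] (q : ℝ≥0∞) (k j V : ℕ) :
    W ℓ q (k + j) j V = W ℓ q k 0 0 * ((q ^ ℓ) ^ (j * V) * eInv (q ^ ℓ) j) := by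
  classical
  induction j generalizing V with
  | zero =>
    simp only [add_zero, zero_mul, pow_zero, eInv, range_zero, prod_empty, mul_one]
    unfold W
    refine tsum_congr fun x => ?_
    refine if_congr (and_congr_right fun _ => and_congr_right fun h => ?_) rfl rfl
    rw [CP.fix, card_eq_zero] at h
    simp [h]
  | succ j ih =>
    rw [← add_assoc, W_succ]
    simp only [ih]
    have : ∀ v : ℕ, (if V ≤ v then (q ^ ℓ) ^ v *
        (W ℓ q k 0 0 * ((q ^ ℓ) ^ (j * v) * eInv (q ^ ℓ) j)) else 0) =
        (if V ≤ v then (q ^ ℓ) ^ v * (q ^ ℓ) ^ (j * v) else 0) *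
          (W ℓ q k 0 0 * eInv (q ^ ℓ) j) := by
      intro v; split_ifs <;> ring
    rw [tsum_congr this, ENNReal.tsum_mul_right, tsum_tail_geometric]
    simp only [eInv, prod_range_succ]
    ring

lemma tsum_snoc {β : Type*} (f : (Fin (n + 1) → β) → ℝ≥0∞) :
    ∑' g, f g = ∑' (m : β) (h : Fin n → β), f (Fin.snoc (α := fun _ => β) h m) := by
  rw [← (Fin.snocEquiv fun _ => β).tsum_eq, ENNReal.tsum_prod']
  rfl

lemma tsum_pi_prod {β : Type*} (f : β → ℝ≥0∞) (n : ℕ) :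
    ∑' g : Fin n → β, ∏ i, f (g i) = (∑' b, f b) ^ n := by
  induction n with
  | zero => simp
  | succ n ih =>
    rw [tsum_snoc]
    simp only [Fin.prod_univ_castSucc, Fin.snoc_castSucc, Fin.snoc_last, ENNReal.tsum_mul_right, ih,
      ENNReal.tsum_mul_left, pow_succ]

/-- Sequences with prescribed minimal drops `δ`, ending at or above the level `V`. -/
def Drops (δ : ℕ → ℕ) (V : ℕ) (lam : Fin n → ℕ) : Prop :=
  ∀ i : Fin n, (if h : (i : ℕ) + 1 < n then lam ⟨i + 1, h⟩ else V) + δ i ≤ lam i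

lemma drops_snoc (δ : ℕ → ℕ) (V m : ℕ) (lam : Fin n → ℕ) :
    Drops δ V (Fin.snoc (α := fun _ => ℕ) lam m : Fin (n + 1) → ℕ) ↔
      V + δ n ≤ m ∧ Drops δ m lam := by
  unfold Drops
  rw [Fin.forall_fin_succ']
  simp only [Fin.val_castSucc, Fin.snoc_castSucc, Fin.val_last, lt_irrefl, dite_false,
    Fin.snoc_last]
  rw [and_comm]
  refine and_congr_right fun _ => forall_congr' fun i => ?_
  have : (if h : (i : ℕ) + 1 < n + 1 then
      (Fin.snoc (α := fun _ => ℕ) lam m : Fin (n + 1) → ℕ) ⟨i + 1, h⟩ else V) =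
      if h : (i : ℕ) + 1 < n then lam ⟨i + 1, h⟩ else m := by
    rw [dif_pos (by omega)]
    simp [Fin.snoc]
  rw [this]

open scoped Classical in
lemma tsum_drops (Q : ℝ≥0∞) (δ : ℕ → ℕ) (n V : ℕ) :
    (∑' lam : Fin n → ℕ, if Drops δ V lam then Q ^ (∑ i, lam i) else 0) =
      Q ^ (n * V) * Q ^ (∑ i ∈ range n, (i + 1) * δ i) * eInv Q n := by
  induction n generalizing V with
  | zero => simp [Drops, eInv]
  | succ n ih =>
    rw [tsum_snoc]
    have : ∀ m : ℕ, (∑' lam : Fin n → ℕ,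
        if Drops δ V (Fin.snoc (α := fun _ => ℕ) lam m : Fin (n + 1) → ℕ) then
          Q ^ (∑ i, (Fin.snoc (α := fun _ => ℕ) lam m : Fin (n + 1) → ℕ) i) else 0) =
        (if V + δ n ≤ m then Q ^ m * Q ^ (n * m) else 0) *
          (Q ^ (∑ i ∈ range n, (i + 1) * δ i) * eInv Q n) := by
      intro m
      by_cases hm : V + δ n ≤ m
      · rw [if_pos hm, mul_assoc, ← mul_assoc (Q ^ (n * m)), ← ih, ← ENNReal.tsum_mul_left]
        refine tsum_congr fun lam => ?_
        simp only [drops_snoc, hm, true_and, Fin.sum_univ_castSucc, Fin.snoc_castSucc,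
          Fin.snoc_last, mul_ite, mul_zero, pow_add, mul_comm]
      · simp [drops_snoc, hm]
    rw [tsum_congr this, ENNReal.tsum_mul_right, tsum_tail_geometric, sum_range_succ]
    simp only [eInv, prod_range_succ, pow_add, mul_add]
    ring

open scoped Classical in
lemma compat_iff_drops (σ : CP ℓ n) (lam : Fin n → ℕ) :
    Compat σ lam ↔ Drops (fun i => if i ∈ CP.desSet σ then 1 else 0) 0 lam := by
  cases n with
  | zero => simp [Compat, Drops]
  | succ n =>
    let r : Fin (n + 1) → Fin (n + 1) → Prop := fun i j => lam j < lam i ∨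
      (lam i = lam j ∧ (σ.2 j < σ.2 i ∨ (σ.2 i = σ.2 j ∧ σ.1 i < σ.1 j)))
    have : IsTrans _ r := ⟨fun a b c => by simp only [r]; grind⟩
    have h1 : Compat σ lam ↔ ∀ i : Fin n, r i.castSucc i.succ :=
      Fin.liftFun_iff_succ r (f := id)
    rw [h1, Drops, Fin.forall_fin_succ']
    have hlast : n ∉ CP.desSet σ := by simp [CP.desSet]
    simp only [Fin.val_last, lt_irrefl, dite_false, hlast, if_false, add_zero, zero_le, and_true,
      Fin.val_castSucc]
    refine forall_congr' fun i => ?_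
    rw [dif_pos (by omega)]
    have hs : (⟨(i : ℕ) + 1, by omega⟩ : Fin (n + 1)) = i.succ := rfl
    have hc : (⟨(i : ℕ), by omega⟩ : Fin (n + 1)) = i.castSucc := rfl
    have hd : (i : ℕ) ∈ CP.desSet σ ↔ (σ.2 i.castSucc < σ.2 i.succ ∨
        (σ.2 i.castSucc = σ.2 i.succ ∧ σ.1 i.succ < σ.1 i.castSucc)) := by
      simp [CP.desSet, CP.gtLetter, CP.letter, hs, hc, Fin.ext_iff]
    have hne : σ.1 i.castSucc ≠ σ.1 i.succ :=
      fun h => absurd (σ.1.injective h) (Fin.castSucc_lt_succ).ne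
    rw [hs]
    simp only [r]
    split_ifs with h
    · rw [hd] at h
      grind
    · rw [hd] at h
      grind

lemma sum_drop_eq_maj (σ : CP ℓ n) :
    ∑ i ∈ range n, (i + 1) * (if i ∈ CP.desSet σ then 1 else 0) = CP.maj σ := by
  simp only [mul_ite, mul_one, mul_zero]
  rw [← sum_filter, CP.maj]
  congr 1
  ext i
  simp only [mem_filter, mem_range, CP.desSet]
  constructor
  · exact fun h => h.2
  · intro h; exact ⟨by omega, h⟩

open scoped Classical in
/-- MacMahon's principle: the pairs compatible with a fixed `σ` are counted by
`q ^ fmaj σ / ((1 - q^ℓ)⋯(1 - q^{nℓ}))`. -/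
lemma tsum_compat (q : ℝ≥0∞) (σ : CP ℓ n) :
    (∑' lam : Fin n → ℕ, if Compat σ lam then wt q (σ, lam) else 0) =
      q ^ CP.fmaj σ * eInv (q ^ ℓ) n := by
  have h := tsum_drops (q ^ ℓ) (fun i => if i ∈ CP.desSet σ then 1 else 0) n 0
  simp only [← compat_iff_drops] at h
  rw [sum_drop_eq_maj, mul_zero, pow_zero, one_mul] at h
  have h2 : ∀ lam : Fin n → ℕ, (if Compat σ lam then wt q (σ, lam) else 0) =
      (if Compat σ lam then (q ^ ℓ) ^ (∑ i, lam i) else 0) * q ^ CP.col σ := by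
    intro lam
    rw [ite_mul, zero_mul, wt, pow_add, pow_mul]
  rw [tsum_congr h2, ENNReal.tsum_mul_right, h, CP.fmaj, pow_add, pow_mul]
  ring

lemma W_zero (q : ℝ≥0∞) (n : ℕ) :
    W ℓ q n 0 0 = (∑ σ ∈ (univ : Finset (CP ℓ n)).filter fun σ => CP.fix σ = 0,
      q ^ CP.fmaj σ) * eInv (q ^ ℓ) n := by
  classical
  rw [W, ENNReal.tsum_prod', tsum_fintype, sum_mul, sum_filter]
  refine Finset.sum_congr rfl fun σ _ => ?_
  split_ifs with h
  · rw [← tsum_compat]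
    simp [h]
  · simp [h]

open scoped Classical in
/-- A compatible pair is the stable sorting of an arbitrary word in `ℕ × Fin ℓ`, with both
components sorted decreasingly. -/
lemma tsum_compat_all (q : ℝ≥0∞) (n : ℕ) :
    (∑' x : CP ℓ n × (Fin n → ℕ), if Compat x.1 x.2 then wt q x else 0) =
      ((1 - q ^ ℓ)⁻¹ * ∑ i ∈ range ℓ, q ^ i) ^ n := by
  let w : ℕ × Fin ℓ → ℝ≥0∞ := fun b => (q ^ ℓ) ^ b.1 * q ^ (b.2 : ℕ)
  let key : (Fin n → ℕ × Fin ℓ) → Fin n → (ℕᵒᵈ ×ₗ (Fin ℓ)ᵒᵈ) := fun g i =>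
    toLex (OrderDual.toDual (g i).1, OrderDual.toDual (g i).2)
  have hcompat : ∀ (σ : Equiv.Perm (Fin n)) (g : Fin n → ℕ × Fin ℓ),
      Compat (σ, fun i => (g i).2) (fun i => (g i).1) ↔
        σ = Tuple.sort (key (g ∘ σ.symm)) := by
    intro σ g
    have hk : ∀ i, key (g ∘ σ.symm) (σ i) = key g i := fun i => by simp [key]
    rw [Tuple.eq_sort_iff]
    simp only [hk]
    have hmono : Monotone (key (g ∘ σ.symm) ∘ σ) ↔ ∀ i j, i < j → key g i ≤ key g j := by
      rw [monotone_iff_forall_lt]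
      simp only [Function.comp_apply, hk]
    rw [hmono]
    have hle : ∀ i j, key g i ≤ key g j ↔ (g j).1 < (g i).1 ∨
        ((g i).1 = (g j).1 ∧ (g j).2 ≤ (g i).2) := by
      intro i j
      simp [key, Prod.Lex.toLex_le_toLex]
    have heq : ∀ i j, key g i = key g j ↔ ((g i).1 = (g j).1 ∧ (g i).2 = (g j).2) := by
      intro i j
      simp [key]
    simp only [hle, heq, Compat]
    constructor
    · intro h
      refine ⟨fun i j hij => ?_, fun i j hij he => ?_⟩
      · have := h i j hij; grind
      · have := h i j hij; grind
    · rintro ⟨h, h'⟩ i j hij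
      have h1 := h i j hij
      have h2 := h' i j hij
      grind
  let E : Equiv.Perm (Fin n) × (Fin n → ℕ × Fin ℓ) ≃ CP ℓ n × (Fin n → ℕ) :=
    { toFun := fun x => ((x.1, fun i => (x.2 i).2), fun i => (x.2 i).1)
      invFun := fun y => (y.1.1, fun i => (y.2 i, y.1.2 i))
      left_inv := fun x => rfl
      right_inv := fun y => rfl }
  have hw : ∀ x, wt q (E x) = ∏ i, w (x.2 i) := by
    intro x
    simp only [wt, E, Equiv.coe_fn_mk, w, prod_mul_distrib, prod_pow_eq_pow_sum, CP.col, pow_add,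
      pow_mul]
  have hfib : ∀ σ : Equiv.Perm (Fin n), (∑' g : Fin n → ℕ × Fin ℓ,
      if Compat (E (σ, g)).1 (E (σ, g)).2 then wt q (E (σ, g)) else 0) =
      ∑' f : Fin n → ℕ × Fin ℓ, if σ = Tuple.sort (key f) then ∏ i, w (f i) else 0 := by
    intro σ
    refine Eq.trans ?_ ((Equiv.arrowCongr σ (Equiv.refl (ℕ × Fin ℓ))).tsum_eq _)
    refine tsum_congr fun g => ?_
    rw [hw]
    have h1 : (Equiv.arrowCongr σ (Equiv.refl (ℕ × Fin ℓ))) g = g ∘ σ.symm := by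
      ext i <;> simp
    rw [h1]
    have h2 : ∏ i, w ((g ∘ σ.symm) i) = ∏ i, w (g i) :=
      Equiv.prod_comp σ.symm fun i => w (g i)
    rw [h2]
    exact if_congr (hcompat σ g) rfl rfl
  rw [← E.tsum_eq, ENNReal.tsum_prod', tsum_congr hfib, ENNReal.tsum_comm]
  have hone : ∀ f : Fin n → ℕ × Fin ℓ,
      (∑' σ : Equiv.Perm (Fin n), if σ = Tuple.sort (key f) then ∏ i, w (f i) else 0) =
        ∏ i, w (f i) := fun f => tsum_ite_eq _ _
  rw [tsum_congr hone, tsum_pi_prod]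
  congr 1
  simp only [w]
  rw [ENNReal.tsum_prod']
  simp only [ENNReal.tsum_mul_left, ENNReal.tsum_mul_right, ENNReal.tsum_geometric]
  rw [tsum_fintype, Fin.sum_univ_eq_sum_range (fun i => q ^ i)]

lemma tsum_compat_by_fix (q : ℝ≥0∞) [NeZero ℓ] (n : ℕ) :
    ((1 - q ^ ℓ)⁻¹ * ∑ i ∈ range ℓ, q ^ i) ^ n =
      ∑ x ∈ antidiagonal n, (∑ σ ∈ (univ : Finset (CP ℓ x.1)).filter fun σ => CP.fix σ = 0,
        q ^ CP.fmaj σ) * eInv (q ^ ℓ) x.1 * eInv (q ^ ℓ) x.2 := by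
  classical
  have h1 : ∀ x ∈ antidiagonal n, (∑ σ ∈ (univ : Finset (CP ℓ x.1)).filter fun σ => CP.fix σ = 0,
        q ^ CP.fmaj σ) * eInv (q ^ ℓ) x.1 * eInv (q ^ ℓ) x.2 = W ℓ q n x.2 0 := by
    intro x hx
    rw [← W_zero]
    obtain ⟨k, j⟩ := x
    obtain rfl : k + j = n := by simpa using hx
    simp [W_eq]
  rw [sum_congr rfl h1, ← tsum_compat_all, ← Finset.Nat.sum_antidiagonal_swap,
    Finset.Nat.sum_antidiagonal_eq_sum_range_succ_mk]
  simp only [W, Prod.swap]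
  rw [← Summable.tsum_finsetSum (fun _ _ => ENNReal.summable)]
  refine tsum_congr fun x => ?_
  have hx : CP.fix x.1 ∈ range n.succ := by
    rw [mem_range, CP.fix]
    have := card_le_univ (CP.fixSet x.1)
    rw [Fintype.card_fin] at this
    omega
  rw [Finset.sum_eq_single (CP.fix x.1)]
  · simp
  · intro b _ hb
    exact if_neg fun h => hb h.2.1.symm
  · intro h; exact absurd hx h

/-! ### Inversion over the reals -/

/-- Real version of `eInv`. -/
noncomputable def eR (Q : ℝ) (j : ℕ) : ℝ := ∏ i ∈ range j, (1 - Q ^ (i + 1))⁻¹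

lemma one_sub_pow_pos {Q : ℝ} (h0 : 0 < Q) (h1 : Q < 1) {m : ℕ} (hm : m ≠ 0) : 0 < 1 - Q ^ m :=
  sub_pos.2 (pow_lt_one₀ h0.le h1 hm)

lemma toReal_one_sub_ofReal {Q : ℝ} (h0 : 0 < Q) (h1 : Q < 1) :
    (1 - ENNReal.ofReal Q).toReal = 1 - Q := by
  rw [ENNReal.toReal_sub_of_le (by simpa using h1.le) (by simp), ENNReal.toReal_ofReal h0.le]
  simp

lemma toReal_eInv {Q : ℝ} (h0 : 0 < Q) (h1 : Q < 1) (j : ℕ) :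
    (eInv (ENNReal.ofReal Q) j).toReal = eR Q j := by
  rw [eInv, eR, ENNReal.toReal_prod]
  refine prod_congr rfl fun i _ => ?_
  rw [ENNReal.toReal_inv, ← ENNReal.ofReal_pow h0.le,
    toReal_one_sub_ofReal (pow_pos h0 _) (pow_lt_one₀ h0.le h1 (by omega))]

lemma eInv_ne_top {Q : ℝ} (h0 : 0 < Q) (h1 : Q < 1) (j : ℕ) :
    eInv (ENNReal.ofReal Q) j ≠ ⊤ := by
  refine ENNReal.prod_ne_top fun i _ => ENNReal.inv_ne_top.2 ?_
  rw [← ENNReal.ofReal_pow h0.le]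
  intro h
  have := toReal_one_sub_ofReal (pow_pos h0 (i + 1)) (pow_lt_one₀ h0.le h1 (by omega))
  rw [h, ENNReal.toReal_zero] at this
  exact absurd this (one_sub_pow_pos h0 h1 (by omega)).ne

/-- The colored `q`-derangement number at a real `q`. -/
noncomputable def dR (ℓ : ℕ) (q : ℝ) (n : ℕ) : ℝ :=
  ∑ σ ∈ (univ : Finset (CP ℓ n)).filter fun σ => CP.fix σ = 0, q ^ CP.fmaj σ

lemma real_identity [NeZero ℓ] {q : ℝ} (h0 : 0 < q) (h1 : q < 1) (n : ℕ) :
    ((1 - q)⁻¹) ^ n = ∑ x ∈ antidiagonal n,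
      dR ℓ q x.1 * eR (q ^ ℓ) x.1 * eR (q ^ ℓ) x.2 := by
  have hQ0 : 0 < q ^ ℓ := pow_pos h0 _
  have hQ1 : q ^ ℓ < 1 := pow_lt_one₀ h0.le h1 (NeZero.ne ℓ)
  have hpt : ∀ m : ℕ, ENNReal.ofReal q ^ m ≠ ⊤ := fun m => ENNReal.pow_ne_top ENNReal.ofReal_ne_top
  have h := congrArg ENNReal.toReal (tsum_compat_by_fix (ℓ := ℓ) (ENNReal.ofReal q) n)
  rw [← ENNReal.ofReal_pow h0.le, ENNReal.toReal_pow, ENNReal.toReal_mul, ENNReal.toReal_inv,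
    toReal_one_sub_ofReal hQ0 hQ1, ENNReal.toReal_sum fun _ _ => hpt _,
    ENNReal.toReal_sum fun x _ => ENNReal.mul_ne_top (ENNReal.mul_ne_top
      (ENNReal.sum_ne_top.2 fun _ _ => hpt _) (eInv_ne_top hQ0 hQ1 _)) (eInv_ne_top hQ0 hQ1 _)] at h
  simp only [ENNReal.toReal_mul, ENNReal.toReal_pow, toReal_eInv hQ0 hQ1,
    ENNReal.toReal_sum fun _ _ => hpt _, ENNReal.toReal_ofReal h0.le] at h
  have hg : (1 - q ^ ℓ)⁻¹ * ∑ i ∈ range ℓ, q ^ i = (1 - q)⁻¹ := by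
    have h2 := mul_neg_geom_sum q ℓ
    have h3 : 1 - q ≠ 0 := (sub_pos.2 h1).ne'
    have h4 : 1 - q ^ ℓ ≠ 0 := (sub_pos.2 hQ1).ne'
    field_simp
    linarith
  rw [hg] at h
  exact h

open PowerSeries in
/-- Euler: `∑ (-1)^k Q^{k(k-1)/2} x^k / (Q;Q)_k` is inverse to `∑ x^k / (Q;Q)_k`. The product is
invariant under `x ↦ Qx`, hence constant. -/
lemma euler_mul {Q : ℝ} (h0 : 0 < Q) (h1 : Q < 1) :
    (PowerSeries.mk fun k => (-1) ^ k * Q ^ (k.choose 2) * eR Q k) * PowerSeries.mk (eR Q) = 1 := by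
  set E : ℝ⟦X⟧ := PowerSeries.mk fun k => (-1) ^ k * Q ^ (k.choose 2) * eR Q k with hE
  set e : ℝ⟦X⟧ := PowerSeries.mk (eR Q) with he
  have hstep : ∀ m, eR Q m = (1 - Q ^ (m + 1)) * eR Q (m + 1) := by
    intro m
    have := (one_sub_pow_pos h0 h1 (m := m + 1) (by omega)).ne'
    rw [eR, eR, prod_range_succ, mul_comm (∏ _ ∈ _, _), mul_inv_cancel_left₀ this]
  have h2 : rescale Q e = (1 - X) * e := by
    ext m
    rw [coeff_rescale, sub_mul, one_mul, map_sub]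
    cases m with
    | zero => simp [he]
    | succ m =>
      rw [coeff_succ_X_mul]
      simp only [he, coeff_mk]
      rw [hstep m]; ring
  have h3 : E = (1 - X) * rescale Q E := by
    ext m
    rw [sub_mul, one_mul, map_sub]
    cases m with
    | zero => simp [hE]
    | succ m =>
      rw [coeff_succ_X_mul, coeff_rescale, coeff_rescale]
      simp only [hE, coeff_mk]
      rw [hstep m, Nat.choose_succ_succ' m 1, Nat.choose_one_right]
      ring
  have h4 : rescale Q (E * e) = E * e := by
    rw [map_mul, h2]
    conv_rhs => rw [h3]
    ring
  ext m
  cases m with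
  | zero => simp [hE, he, eR]
  | succ m =>
    have h5 := congrArg (coeff (m + 1)) h4
    rw [coeff_rescale] at h5
    have h6 := one_sub_pow_pos h0 h1 (m := m + 1) (by omega)
    have h7 : (1 - Q ^ (m + 1)) * coeff (m + 1) (E * e) = 0 := by linarith
    rw [coeff_one, if_neg (by omega)]
    exact (mul_eq_zero.1 h7).resolve_left h6.ne'

lemma eR_mul_pow [NeZero ℓ] {q : ℝ} (h0 : 0 < q) (h1 : q < 1) {k n : ℕ} (hkn : k ≤ n) :
    ((1 - q)⁻¹) ^ (n - k) * eR (q ^ ℓ) k =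
      (∏ j ∈ Icc (k + 1) n, qint q (j * ℓ)) * eR (q ^ ℓ) n := by
  have hq : 1 - q ≠ 0 := (sub_pos.2 h1).ne'
  induction n, hkn using Nat.le_induction with
  | base => simp
  | succ n hkn ih =>
    have hQ := (one_sub_pow_pos (pow_pos h0 ℓ) (pow_lt_one₀ h0.le h1 (NeZero.ne ℓ))
      (m := n + 1) (by omega)).ne'
    have h2 : (1 - q) * qint q ((n + 1) * ℓ) = 1 - (q ^ ℓ) ^ (n + 1) := by
      rw [qint, mul_neg_geom_sum, ← pow_mul, mul_comm]
    have h3 : qint q ((n + 1) * ℓ) * (1 - (q ^ ℓ) ^ (n + 1))⁻¹ = (1 - q)⁻¹ := by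
      rw [← h2] at hQ ⊢
      have := right_ne_zero_of_mul hQ
      field_simp
    rw [Nat.sub_add_comm hkn, pow_succ, prod_Icc_succ_top (by omega)]
    have h4 : eR (q ^ ℓ) (n + 1) = eR (q ^ ℓ) n * (1 - (q ^ ℓ) ^ (n + 1))⁻¹ := by
      rw [eR, prod_range_succ, eR]
    rw [h4]
    calc _ = (((1 - q)⁻¹) ^ (n - k) * eR (q ^ ℓ) k) * (1 - q)⁻¹ := by ring
      _ = _ := by rw [ih, ← h3]; ring

lemma dR_eq [NeZero ℓ] {q : ℝ} (h0 : 0 < q) (h1 : q < 1) (n : ℕ) :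
    dR ℓ q n = ∑ k ∈ range (n + 1), (-1) ^ k * q ^ (ℓ * k.choose 2) *
      ∏ j ∈ Icc (k + 1) n, qint q (j * ℓ) := by
  have hQ0 : 0 < q ^ ℓ := pow_pos h0 _
  have hQ1 : q ^ ℓ < 1 := pow_lt_one₀ h0.le h1 (NeZero.ne ℓ)
  have hA : (PowerSeries.mk fun k => dR ℓ q k * eR (q ^ ℓ) k) * PowerSeries.mk (eR (q ^ ℓ)) =
      PowerSeries.mk fun n => ((1 - q)⁻¹) ^ n := by
    ext m
    simp only [PowerSeries.coeff_mul, PowerSeries.coeff_mk]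
    exact (real_identity h0 h1 m).symm
  have hD := congrArg (fun f => (PowerSeries.mk fun k =>
    (-1) ^ k * (q ^ ℓ) ^ (k.choose 2) * eR (q ^ ℓ) k) * f) hA
  rw [mul_left_comm, euler_mul hQ0 hQ1, mul_one] at hD
  have hc := congrArg (PowerSeries.coeff n) hD
  simp only [PowerSeries.coeff_mul, PowerSeries.coeff_mk] at hc
  rw [Finset.Nat.sum_antidiagonal_eq_sum_range_succ_mk] at hc
  have hne : eR (q ^ ℓ) n ≠ 0 :=
    prod_ne_zero_iff.2 fun i _ => inv_ne_zero (one_sub_pow_pos hQ0 hQ1 (by omega)).ne'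
  refine mul_right_cancel₀ hne ?_
  rw [hc, sum_mul]
  refine sum_congr rfl fun k hk => ?_
  have hk' : k ≤ n := by rw [mem_range] at hk; omega
  rw [mul_assoc _ (∏ _ ∈ _, _), ← eR_mul_pow h0 h1 hk', pow_mul]
  ring

end CDer

open Polynomial in
/-- Explicit formula for the colored q-derangement numbers
`d_{ℓ,n}(q) = Σ_{σ ∈ D_{ℓ,n}} q^{fmaj σ}
            = Σ_{k=0}^n (−1)^k q^{ℓ·C(k,2)} [(k+1)ℓ]_q ⋯ [nℓ]_q`. -/
theorem colored_q_derangement_formula (ℓ n : ℕ) (hℓ : 1 ≤ ℓ) :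
    (∑ σ ∈ (univ : Finset (CP ℓ n)).filter fun σ => CP.fix σ = 0,
        (X : Polynomial ℤ) ^ CP.fmaj σ) =
      ∑ k ∈ range (n + 1), (-1) ^ k * (X : Polynomial ℤ) ^ (ℓ * k.choose 2) *
        ∏ j ∈ Icc (k + 1) n, qint (X : Polynomial ℤ) (j * ℓ) := by
  have : NeZero ℓ := ⟨by omega⟩
  apply Polynomial.map_injective (Int.castRingHom ℝ) Int.cast_injective
  refine Polynomial.eq_of_infinite_eval_eq _ _ ((Set.Ioo_infinite (zero_lt_one' ℝ)).mono ?_)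
  rintro q ⟨h0, h1⟩
  have h := CDer.dR_eq (ℓ := ℓ) h0 h1 n
  simp only [CDer.dR, qint] at h
  simpa [Polynomial.eval_finsetSum, Polynomial.eval_prod, qint, Polynomial.map_sum,
    Polynomial.map_prod] using h
end

section
/- Fix an integer ℓ≥1. The colored q-derangement numbers satisfy the recurrence d_{ℓ,n+1}(q) = [ℓ(n+1)]_q · d_{ℓ,n}(q) + (−1)^{n+1} q^{ℓ·binom(n+1,2)} for every n≥0. -/
/-!
Let `d_k` be the generating function of `fmaj` over colored derangements, and `A_n` the one over
all colored permutations. The recurrence follows from two facts: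

* `A_{n+1} = [ℓ(n+1)]_q A_n` (`sum_fmaj_succ`);
* `A_n = ∑_k [n choose k]_{q^ℓ} d_k` (`sum_fmaj_eq`).

Indeed, by the absorption identity `[k+1][n+1 choose k+1] = [n+1][n choose k]` and the vanishing of
`∑_k (-1)^k q^{ℓ(k choose 2)} [n choose k]_{q^ℓ}` for `n > 0`, a sequence given by the recurrence
satisfies the second relation, and that relation has only one solution
(`recurrence_of_convolution`).

Both facts come from one shuffle lemma (`shuffle_sum`). Take a word of length `k` each of whose
letters is either bigger or smaller than all of `f` new letters, and insert these in increasing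
order in all possible ways: the generating function of `maj` is multiplied by
`[k + f choose f]_q`. The proof is an induction that removes the last letter, with separate closed
forms according to the origin of the last letter (`end_closed`).

For the first fact, `f = 1` and the new letter is the largest absolute value with an arbitrary
color. For the second one, a colored permutation is determined by the set `S` of its fixed points
and a colored derangement `τ` on the other places. Its descents are those of the shuffle in which
the excedances of `τ` count as bigger than every fixed point and all other letters of `τ` as smaller
(`desP_place`): next to a fixed point `i`, an excedance at `i - 1` is at least `i`, hence exceeds
`i`, and similarly in the other cases.
-/

open Finset

/-! ### Gaussian binomial coefficients -/

section Algebra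

variable {R : Type*} [CommRing R]

/-- The Gaussian binomial coefficient `[a + b choose a]_q`, indexed by the two parts `a`, `b` so
that no truncated subtraction is needed, and defined through the `q`-Pascal rule. -/
def gauss (q : R) : ℕ → ℕ → R
  | 0, _ => 1
  | _ + 1, 0 => 1
  | a + 1, b + 1 => gauss q a (b + 1) + q ^ (a + 1) * gauss q (a + 1) b
termination_by a b => a + b

lemma gauss_zero_left (q : R) (b : ℕ) : gauss q 0 b = 1 := by simp [gauss]

lemma gauss_zero_right (q : R) (a : ℕ) : gauss q a 0 = 1 := by cases a <;> simp [gauss]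

lemma gauss_succ_succ (q : R) (a b : ℕ) :
    gauss q (a + 1) (b + 1) = gauss q a (b + 1) + q ^ (a + 1) * gauss q (a + 1) b := by
  rw [gauss]

/-- The second `q`-Pascal rule. -/
lemma gauss_succ_succ' (q : R) (a b : ℕ) :
    gauss q (a + 1) (b + 1) = gauss q (a + 1) b + q ^ (b + 1) * gauss q a (b + 1) := by
  induction a generalizing b with
  | zero =>
    induction b with
    | zero => simp [gauss_succ_succ, gauss_zero_left, gauss_zero_right]
    | succ b ihb =>
      have h1 := gauss_succ_succ q 0 (b + 1)
      have h2 := gauss_succ_succ q 0 b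
      simp only [gauss_zero_left] at *
      linear_combination h1 - h2 + q * ihb
  | succ a iha =>
    induction b with
    | zero =>
      have h := iha 0
      have h1 := gauss_succ_succ q (a + 1) 0
      have h2 := gauss_succ_succ q a 0
      simp only [gauss_zero_right] at *
      linear_combination h1 + h - q * h2
    | succ b ihb =>
      have h1 := gauss_succ_succ q (a + 1) (b + 1)
      have h2 := gauss_succ_succ q (a + 1) b
      have h3 := gauss_succ_succ q a (b + 1)
      have h4 := iha (b + 1)
      linear_combination h1 + h4 + q ^ (a + 2) * ihb - h2 - q ^ (b + 2) * h3

lemma qint_succ (q : R) (k : ℕ) : qint q (k + 1) = qint q k + q ^ k := by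
  simp [qint, Finset.sum_range_succ]

lemma qint_add (q : R) (a b : ℕ) : qint q (a + b) = qint q a + q ^ a * qint q b := by
  simp [qint, Finset.sum_range_add, pow_add, Finset.mul_sum]

lemma qint_mul (q : R) (l m : ℕ) : qint q (l * m) = qint q l * qint (q ^ l) m := by
  induction m with
  | zero => simp [qint]
  | succ m ih => rw [Nat.mul_succ, qint_add, ih, qint_succ, pow_mul]; ring

/-- The two absorption identities `[a+1][a+1+b choose b] = [a+1+b][a+b choose b]` and its mirror
image; each of them is used to prove the other one. -/
lemma gauss_absorb (q : R) (s : ℕ) : ∀ a b : ℕ, a + b = s →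
    qint q (a + 1) * gauss q (a + 1) b = qint q (a + b + 1) * gauss q a b ∧
    qint q (b + 1) * gauss q a (b + 1) = qint q (a + b + 1) * gauss q a b := by
  induction s with
  | zero =>
    intro a b h
    obtain ⟨rfl, rfl⟩ : a = 0 ∧ b = 0 := by omega
    simp [gauss_zero_left, gauss_zero_right]
  | succ s ih =>
    intro a b h
    constructor
    · cases b with
      | zero => simp [gauss_zero_right]
      | succ b =>
        obtain ⟨h1, h2⟩ := ih a b (by omega)
        have h3 := qint_add q (a + 1) (b + 1)
        rw [show a + (b + 1) + 1 = a + 1 + (b + 1) by ring]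
        rw [gauss_succ_succ]
        linear_combination q ^ (a + 1) * h1 - q ^ (a + 1) * h2 - gauss q a (b + 1) * h3
    · cases a with
      | zero => simp [gauss_zero_left]
      | succ a =>
        obtain ⟨h1, h2⟩ := ih a b (by omega)
        have h3 := qint_add q (b + 1) (a + 1)
        rw [show a + 1 + b + 1 = b + 1 + (a + 1) by ring]
        rw [gauss_succ_succ']
        linear_combination q ^ (b + 1) * h2 - q ^ (b + 1) * h1 - gauss q (a + 1) b * h3

lemma gauss_one_right (q : R) (n : ℕ) : gauss q n 1 = qint q (n + 1) := by
  have h := (gauss_absorb q n n 0 rfl).2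
  simpa [gauss_zero_right, qint] using h

/-- The `q`-binomial theorem at `1`: the alternating sum telescopes by the `q`-Pascal rule. -/
lemma alternating_gauss (q : R) (n : ℕ) :
    ∑ p ∈ antidiagonal (n + 1), (-1) ^ p.1 * q ^ (p.1.choose 2) * gauss q p.1 p.2 = 0 := by
  cases n with
  | zero => simp [Finset.Nat.antidiagonal_succ, gauss_zero_left, gauss_zero_right]
  | succ n =>
    let u : ℕ → ℕ → R := fun k f => (-1) ^ k * q ^ ((k + 1).choose 2) * gauss q k f
    have e1 := Finset.Nat.sum_antidiagonal_succ (n := n) (f := fun p => u p.1 p.2)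
    have e2 := Finset.Nat.sum_antidiagonal_succ' (n := n) (f := fun p => u p.1 p.2)
    have key : ∀ k f, (-1) ^ (k + 1) * q ^ ((k + 1).choose 2) * gauss q (k + 1) (f + 1)
        = u (k + 1) f - u k (f + 1) := by
      intro k f
      simp only [u]
      rw [gauss_succ_succ, Nat.choose_succ_succ' (k + 1) 1, Nat.choose_one_right, pow_add q]
      ring
    rw [Finset.Nat.sum_antidiagonal_succ, Finset.Nat.sum_antidiagonal_succ']
    simp only [key, Finset.sum_sub_distrib]
    simp only [u, gauss_zero_left, gauss_zero_right] at *
    simp at *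
    rw [pow_succ (-1 : R) (n + 1)]
    linear_combination e2 - e1

/-- Inversion: the relations `∑_k [n choose k] d_k = A_n` with `A_{n+1} = [ℓ(n+1)] A_n` determine
`d`, and force its recurrence. -/
lemma recurrence_of_convolution (q : R) (l : ℕ) (d A : ℕ → R) (hA0 : A 0 = 1)
    (hA : ∀ n, A (n + 1) = qint q (l * (n + 1)) * A n)
    (h : ∀ n, ∑ p ∈ antidiagonal n, gauss (q ^ l) p.1 p.2 * d p.1 = A n) (n : ℕ) :
    d (n + 1) = qint q (l * (n + 1)) * d n + (-1) ^ (n + 1) * q ^ (l * (n + 1).choose 2) := by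
  have hd0 : d 0 = 1 := by
    have := h 0
    simpa [gauss_zero_left, hA0] using this
  induction n using Nat.strong_induction_on with
  | _ n ih =>
  have hsum : ∑ p ∈ antidiagonal n, gauss (q ^ l) (p.1 + 1) p.2 *
      (d (p.1 + 1) - (qint q (l * (p.1 + 1)) * d p.1 +
        (-1) ^ (p.1 + 1) * q ^ (l * (p.1 + 1).choose 2))) = 0 := by
    have h1 := h (n + 1)
    have h2 := alternating_gauss (q ^ l) n
    rw [Finset.Nat.sum_antidiagonal_succ] at h1 h2
    have h3 : ∑ p ∈ antidiagonal n, gauss (q ^ l) (p.1 + 1) p.2 * (qint q (l * (p.1 + 1)) * d p.1)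
        = qint q (l * (n + 1)) * A n := by
      rw [← h n, Finset.mul_sum]
      refine Finset.sum_congr rfl fun p hp => ?_
      have hp' : p.1 + p.2 = n := by simpa using hp
      have := (gauss_absorb (q ^ l) n p.1 p.2 hp').1
      rw [qint_mul, qint_mul, ← hp']
      linear_combination qint q l * d p.1 * this
    simp only [mul_sub, mul_add, Finset.sum_sub_distrib, Finset.sum_add_distrib]
    simp only [mul_add, mul_one] at h3 ⊢
    rw [h3]
    simp only [gauss_zero_left, hd0] at h1 h2
    have h4 : ∑ p ∈ antidiagonal n, gauss (q ^ l) (p.1 + 1) p.2 *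
          ((-1) ^ (p.1 + 1) * q ^ (l * (p.1 + 1).choose 2)) =
        ∑ p ∈ antidiagonal n, (-1) ^ (p.1 + 1) * (q ^ l) ^ ((p.1 + 1).choose 2) *
          gauss (q ^ l) (p.1 + 1) p.2 :=
      Finset.sum_congr rfl fun p _ => by rw [pow_mul]; ring
    rw [h4]
    have h5 := hA n
    simp at h1 h2
    simp only [mul_add, mul_one] at h5
    linear_combination h1 - h2 + h5
  rw [Finset.sum_eq_single (n, 0)] at hsum
  · simp only [gauss_zero_right, one_mul] at hsum
    exact sub_eq_zero.mp hsum
  · intro p hp hne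
    have hp' : p.1 + p.2 = n := by simpa using hp
    have hlt : p.1 < n := by
      by_contra hc
      exact hne (Prod.ext (by simp; omega) (by simp; omega))
    rw [ih p.1 hlt, sub_self, mul_zero]
  · intro hn
    simp at hn

end Algebra

/-! ### Shuffling a word with increasing letters -/

section Shuffle

open Classical in
/-- The index, in the word made of the letters at places outside `S`, of the first such letter at
place `i` or later. -/
noncomputable def cnt (S : Finset ℕ) (i : ℕ) : ℕ := Nat.count (fun j => j ∉ S) i

/-- Descents of a shuffle. The places in `S` are occupied by increasing letters `F`, the other ones
by the successive letters of a word `w`. Here `d j` says that `w` has a descent at `j`, and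
`b j` says that the letter `w j` is bigger than the letters `F`. -/
def shufDes (S : Finset ℕ) (d b : ℕ → Prop) (i : ℕ) : Prop :=
  (i ∈ S ∧ i + 1 ∉ S ∧ ¬ b (cnt S i)) ∨ (i ∉ S ∧ i + 1 ∈ S ∧ b (cnt S i)) ∨
    (i ∉ S ∧ i + 1 ∉ S ∧ d (cnt S i))

open Classical in
/-- The major index of a word with `m + 1` letters and descent predicate `d`. -/
noncomputable def wmaj (d : ℕ → Prop) (m : ℕ) : ℕ :=
  ∑ i ∈ range m, if d i then i + 1 else 0

lemma wmaj_zero (d : ℕ → Prop) : wmaj d 0 = 0 := by simp [wmaj]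

open Classical in
lemma wmaj_succ (d : ℕ → Prop) (m : ℕ) :
    wmaj d (m + 1) = wmaj d m + if d m then m + 1 else 0 := by
  simp [wmaj, Finset.sum_range_succ]

open Classical in
lemma wmaj_congr {d d' : ℕ → Prop} {m : ℕ} (h : ∀ i < m, (d i ↔ d' i)) :
    wmaj d m = wmaj d' m := by
  refine Finset.sum_congr rfl fun i hi => ?_
  exact if_congr (h i (Finset.mem_range.mp hi)) rfl rfl

lemma cnt_congr {S T : Finset ℕ} {i : ℕ} (h : ∀ j < i, (j ∈ S ↔ j ∈ T)) : cnt S i = cnt T i := by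
  unfold cnt
  rw [Nat.count_eq_card_filter_range, Nat.count_eq_card_filter_range]
  congr 1
  refine Finset.filter_congr fun j hj => ?_
  rw [h j (Finset.mem_range.mp hj)]

lemma cnt_of_subset {S : Finset ℕ} {k f : ℕ} (hS : S ∈ powersetCard f (range (k + f))) :
    cnt S (k + f) = k := by
  obtain ⟨h1, h2⟩ := Finset.mem_powersetCard.mp hS
  unfold cnt
  rw [Nat.count_eq_card_filter_range]
  have : (range (k + f)).filter (fun j => j ∉ S) = range (k + f) \ S := by
    ext j; simp
  rw [this, Finset.card_sdiff_of_subset h1, h2, Finset.card_range]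
  omega

lemma smaj_congr {S T : Finset ℕ} {d b : ℕ → Prop} {m : ℕ} (h : ∀ j ≤ m, (j ∈ S ↔ j ∈ T)) :
    wmaj (shufDes S d b) m = wmaj (shufDes T d b) m := by
  refine wmaj_congr fun i hi => ?_
  have hc : cnt S i = cnt T i := cnt_congr fun j hj => h j (by omega)
  simp only [shufDes, hc, h i hi.le, h (i + 1) hi]

variable {R : Type*} [CommRing R]

/-- Generating function of the shuffles with `n + 1` letters, `f` of them letters `F`, whose last
letter comes from the word. -/
noncomputable def endW (q : R) (d b : ℕ → Prop) (n f : ℕ) : R :=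
  ∑ S ∈ powersetCard f (range n), q ^ wmaj (shufDes S d b) n

/-- Generating function of the shuffles with `n + 1` letters, `f + 1` of them letters `F`, whose
last letter is an `F`. -/
noncomputable def endF (q : R) (d b : ℕ → Prop) (n f : ℕ) : R :=
  ∑ S ∈ powersetCard f (range n), q ^ wmaj (shufDes (insert n S) d b) n

lemma sum_powersetCard_range_succ (n f : ℕ) (g : Finset ℕ → R) :
    ∑ S ∈ powersetCard (f + 1) (range (n + 1)), g S =
      ∑ S ∈ powersetCard (f + 1) (range n), g S +
        ∑ S ∈ powersetCard f (range n), g (insert n S) := by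
  have hnot : ∀ (f : ℕ) (S : Finset ℕ), S ∈ powersetCard f (range n) → n ∉ S := fun f S hS hn => by
    simpa using (Finset.mem_powersetCard.mp hS).1 hn
  rw [Finset.range_add_one, Finset.powersetCard_succ_insert (by simp), Finset.sum_union]
  · congr 1
    refine Finset.sum_image fun S hS T hT h => ?_
    rw [← Finset.erase_insert (hnot f S hS), h, Finset.erase_insert (hnot f T hT)]
  · rw [Finset.disjoint_left]
    intro S hS hS'
    obtain ⟨T, _, rfl⟩ := Finset.mem_image.mp hS'
    exact hnot _ _ hS (Finset.mem_insert_self _ _)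

open Classical in
/-- The factor `q ^ m` recorded by a descent. -/
noncomputable def wt (q : R) (P : Prop) (m : ℕ) : R := if P then q ^ m else 1

lemma pow_wmaj_succ (q : R) (d : ℕ → Prop) (m : ℕ) :
    q ^ wmaj d (m + 1) = q ^ wmaj d m * wt q (d m) (m + 1) := by
  rw [wmaj_succ, pow_add, wt]
  split_ifs <;> simp

section

variable {d b : ℕ → Prop} {k f : ℕ} {S : Finset ℕ}

lemma not_mem_of_powersetCard (hS : S ∈ powersetCard f (range (k + f))) {m : ℕ} (hm : k + f ≤ m) :
    m ∉ S := fun h => by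
  have := (Finset.mem_powersetCard.mp hS).1 h
  simp at this
  omega

/-- Word letter followed by word letter. -/
lemma step_WW (q : R) (hS : S ∈ powersetCard f (range (k + f))) :
    q ^ wmaj (shufDes S d b) (k + f + 1) =
      q ^ wmaj (shufDes S d b) (k + f) * wt q (d k) (k + f + 1) := by
  rw [pow_wmaj_succ]
  congr 2
  simp [shufDes, not_mem_of_powersetCard hS le_rfl, not_mem_of_powersetCard hS (Nat.le_succ _),
    cnt_of_subset hS]

/-- Letter `F` followed by word letter. -/
lemma step_FW (q : R) (hS : S ∈ powersetCard f (range (k + f))) :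
    q ^ wmaj (shufDes (insert (k + f) S) d b) (k + f + 1) =
      q ^ wmaj (shufDes (insert (k + f) S) d b) (k + f) * wt q (¬ b k) (k + f + 1) := by
  rw [pow_wmaj_succ]
  have hc : cnt (insert (k + f) S) (k + f) = k := by
    refine Eq.trans (cnt_congr fun j hj => ?_) (cnt_of_subset hS)
    simp [hj.ne]
  congr 2
  simp [shufDes, not_mem_of_powersetCard hS (Nat.le_succ _), hc]

/-- Word letter followed by letter `F`. -/
lemma step_WF (q : R) (hS : S ∈ powersetCard f (range (k + f))) :
    q ^ wmaj (shufDes (insert (k + f + 1) S) d b) (k + f + 1) =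
      q ^ wmaj (shufDes S d b) (k + f) * wt q (b k) (k + f + 1) := by
  have hc : cnt (insert (k + f + 1) S) (k + f) = k := by
    refine Eq.trans (cnt_congr fun j hj => ?_) (cnt_of_subset hS)
    simp [show j ≠ k + f + 1 by omega]
  rw [pow_wmaj_succ]
  congr 2
  · refine smaj_congr fun j hj => ?_
    simp [show j ≠ k + f + 1 by omega]
  · simp [shufDes, not_mem_of_powersetCard hS le_rfl, hc]

/-- Letter `F` followed by letter `F`. -/
lemma step_FF (q : R) (n : ℕ) :
    q ^ wmaj (shufDes (insert (n + 1) (insert n S)) d b) (n + 1) =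
      q ^ wmaj (shufDes (insert n S) d b) n := by
  rw [pow_wmaj_succ]
  have : wt q (shufDes (insert (n + 1) (insert n S)) d b n) (n + 1) = 1 := by
    simp [wt, shufDes]
  rw [this, mul_one]
  congr 1
  refine smaj_congr fun j hj => ?_
  simp [show j ≠ n + 1 by omega]

end

variable (q : R) (d b : ℕ → Prop)

lemma endW_zero (k : ℕ) : endW q d b (k + 1) 0 = endW q d b k 0 * wt q (d k) (k + 1) := by
  have h := step_WW (d := d) (b := b) (k := k) (f := 0) (S := ∅) q (by simp)
  simpa [endW] using h

lemma endW_diag (f : ℕ) :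
    endW q d b (f + 1) (f + 1) = endF q d b f f * wt q (¬ b 0) (f + 1) := by
  unfold endW endF
  rw [sum_powersetCard_range_succ, Finset.powersetCard_eq_empty.mpr (by simp), Finset.sum_empty,
    zero_add, Finset.sum_mul]
  refine Finset.sum_congr rfl fun S hS => ?_
  have h := step_FW (d := d) (b := b) (k := 0) (f := f) (S := S) q (by simpa using hS)
  simpa using h

lemma endW_succ (k f : ℕ) :
    endW q d b (k + f + 2) (f + 1) = endW q d b (k + f + 1) (f + 1) * wt q (d k) (k + f + 2) +
      endF q d b (k + 1 + f) f * wt q (¬ b (k + 1)) (k + f + 2) := by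
  unfold endW endF
  rw [sum_powersetCard_range_succ, Finset.sum_mul, Finset.sum_mul]
  congr 1
  · exact Finset.sum_congr rfl fun S hS => step_WW (k := k) (f := f + 1) q hS
  · rw [show k + f + 2 = k + 1 + f + 1 by ring, show k + f + 1 = k + 1 + f by ring]
    exact Finset.sum_congr rfl fun S hS => step_FW (k := k + 1) (f := f) q hS

lemma endF_zero (k : ℕ) : endF q d b (k + 1) 0 = endW q d b k 0 * wt q (b k) (k + 1) := by
  have h := step_WF (d := d) (b := b) (k := k) (f := 0) (S := ∅) q (by simp)
  simpa [endW, endF] using h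

lemma endF_diag (f : ℕ) : endF q d b (f + 1) (f + 1) = endF q d b f f := by
  unfold endF
  rw [sum_powersetCard_range_succ, Finset.powersetCard_eq_empty.mpr (by simp), Finset.sum_empty,
    zero_add]
  exact Finset.sum_congr rfl fun S hS => step_FF q f

lemma endF_succ (k f : ℕ) :
    endF q d b (k + f + 2) (f + 1) = endW q d b (k + f + 1) (f + 1) * wt q (b k) (k + f + 2) +
      endF q d b (k + 1 + f) f := by
  unfold endW endF
  rw [sum_powersetCard_range_succ, Finset.sum_mul]
  congr 1
  · exact Finset.sum_congr rfl fun S hS => step_WF (k := k) (f := f + 1) q hS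
  · rw [show k + f + 2 = k + f + 1 + 1 by ring, show k + 1 + f = k + f + 1 by ring]
    exact Finset.sum_congr rfl fun S hS => step_FF q _

/-- Closed forms of both refined generating functions. The hypothesis says that the letters `F`
cut the order of the letters of the word: a big letter followed by a small one is a descent, a
small letter followed by a big one is not. -/
lemma end_closed (n : ℕ) :
    (∀ k f, k + f = n → (∀ i < k, (b i → ¬ b (i + 1) → d i) ∧ (¬ b i → b (i + 1) → ¬ d i)) →
      endW q d b n f = q ^ wmaj d k * gauss q k f * wt q (¬ b k) f) ∧
    (∀ f, f = n → endF q d b n f = 1) ∧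
    (∀ k f, k + 1 + f = n →
      (∀ i < k, (b i → ¬ b (i + 1) → d i) ∧ (¬ b i → b (i + 1) → ¬ d i)) →
      endF q d b n f = q ^ wmaj d k * gauss q (k + 1) f * wt q (b k) (k + 1)) := by
  induction n with
  | zero =>
    refine ⟨?_, ?_, ?_⟩
    · rintro k f h -
      obtain ⟨rfl, rfl⟩ : k = 0 ∧ f = 0 := by omega
      simp [endW, wmaj, gauss_zero_left, wt]
    · rintro f rfl
      simp [endF, wmaj]
    · intro k f h
      omega
  | succ n ih =>
    obtain ⟨ihW, ihF0, ihF⟩ := ih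
    refine ⟨?_, ?_, ?_⟩
    · intro k f h hk
      rcases k with _ | k
      · obtain rfl : f = n + 1 := by omega
        rw [endW_diag, ihF0 n rfl]
        simp [wmaj_zero, gauss_zero_left]
      · rcases f with _ | f
        · obtain rfl : k = n := by omega
          rw [endW_zero, ihW k 0 rfl fun i hi => hk i (by omega), pow_wmaj_succ]
          simp [gauss_zero_right, wt]
        · obtain rfl : n = k + f + 1 := by omega
          rw [endW_succ, ihW k (f + 1) rfl fun i hi => hk i (by omega),
            show k + f + 1 = k + 1 + f by ring] at *
          rw [ihF k f rfl fun i hi => hk i (by omega), pow_wmaj_succ]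
          obtain ⟨h1, h2⟩ := hk k (by omega)
          have e1 := gauss_succ_succ q k f
          have e2 := gauss_succ_succ' q k f
          by_cases p1 : b k <;> by_cases p2 : b (k + 1) <;> by_cases p3 : d k <;>
            simp only [p1, p2, p3, wt, not_true_eq_false, not_false_eq_true, if_true, if_false,
              forall_const] at * <;> try contradiction
          · linear_combination (-q ^ (wmaj d k + (k + 1))) * e2
          · linear_combination (-q ^ wmaj d k) * e1
          · linear_combination (-q ^ (wmaj d k + (k + 1) + (f + 1))) * e1
          · linear_combination (-q ^ wmaj d k) * e2
          · linear_combination (-q ^ (wmaj d k + (k + 1) + (f + 1))) * e2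
          · linear_combination (-q ^ (wmaj d k + (f + 1))) * e1
    · rintro f rfl
      rw [endF_diag, ihF0 n rfl]
    · intro k f h hk
      rcases f with _ | f
      · obtain rfl : k = n := by omega
        rw [endF_zero, ihW k 0 rfl hk]
        simp [gauss_zero_right, wt]
      · obtain rfl : n = k + f + 1 := by omega
        rw [endF_succ, ihW k (f + 1) rfl hk, show k + 1 + f = k + f + 1 by ring,
          ihF k f (by omega) hk]
        have e2 := gauss_succ_succ' q k f
        by_cases p1 : b k <;>
          simp only [p1, wt, not_true_eq_false, not_false_eq_true, if_true, if_false]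
        · linear_combination (-q ^ (wmaj d k + (k + 1))) * e2
        · linear_combination (-q ^ wmaj d k) * e2

/-- Shuffling a word of length `k` with `f` letters `F`: the generating function of the major
index is `[k + f choose f]_q` times the term of the word. -/
lemma shuffle_sum (k f : ℕ)
    (hk : ∀ i, i + 1 < k → (b i → ¬ b (i + 1) → d i) ∧ (¬ b i → b (i + 1) → ¬ d i)) :
    ∑ S ∈ powersetCard f (range (k + f)), q ^ wmaj (shufDes S d b) (k + f - 1) =
      q ^ wmaj d (k - 1) * gauss q k f := by
  rcases k with _ | k
  · rcases f with _ | f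
    · simp [wmaj_zero, gauss_zero_left]
    · have h := (end_closed q d b f).2.1 f rfl
      rw [zero_add, sum_powersetCard_range_succ, Finset.powersetCard_eq_empty.mpr (by simp)]
      simpa [endF, wmaj_zero, gauss_zero_left] using h
  · have hk' : ∀ i < k, (b i → ¬ b (i + 1) → d i) ∧ (¬ b i → b (i + 1) → ¬ d i) :=
      fun i hi => hk i (by omega)
    rcases f with _ | f
    · have h := (end_closed q d b k).1 k 0 rfl hk'
      simpa [endW, gauss_zero_right, wt] using h
    · have h1 := (end_closed q d b (k + f + 1)).1 k (f + 1) rfl hk'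
      have h2 := (end_closed q d b (k + f + 1)).2.2 k f (by ring) hk'
      rw [show k + 1 + (f + 1) = k + f + 1 + 1 by ring, sum_powersetCard_range_succ]
      unfold endW at h1
      unfold endF at h2
      simp only [Nat.add_sub_cancel]
      rw [h1, h2]
      have e1 := gauss_succ_succ q k f
      have e2 := gauss_succ_succ' q k f
      by_cases p1 : b k <;>
        simp only [p1, wt, not_true_eq_false, not_false_eq_true, if_true, if_false]
      · linear_combination (-q ^ wmaj d k) * e1
      · linear_combination (-q ^ wmaj d k) * e2

end Shuffle

/-! ### Descents of colored permutations -/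

namespace CP

variable {ℓ n : ℕ}

/-- The word of `σ` has a descent at the 0-based place `i`. -/
def desP (σ : CP ℓ n) (i : ℕ) : Prop := gtLetter (letter σ i) (letter σ (i + 1))

open Classical in
lemma maj_eq_wmaj (σ : CP ℓ n) : maj σ = wmaj (desP σ) (n - 1) := by
  unfold maj desSet wmaj
  rw [Finset.sum_filter]
  exact Finset.sum_congr rfl fun i _ => if_congr Iff.rfl rfl rfl

lemma fix_eq_zero_iff (σ : CP ℓ n) :
    fix σ = 0 ↔ ∀ i, ¬ (σ.1 i = i ∧ (σ.2 i : ℕ) = 0) := by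
  simp [fix, fixSet, Finset.filter_eq_empty_iff]

lemma letter_val (σ : CP ℓ n) (i : Fin n) : letter σ i = ((σ.2 i : ℕ), (σ.1 i : ℕ)) := by
  simp [letter]

lemma fmaj_pow {R : Type*} [CommRing R] (q : R) (σ : CP ℓ n) :
    q ^ fmaj σ = q ^ col σ * (q ^ ℓ) ^ maj σ := by
  rw [fmaj, pow_add, pow_mul, mul_comm]

end CP

/-! ### Inserting the largest value -/

section Insert

variable {ℓ n : ℕ}

lemma cnt_singleton (p i : ℕ) : cnt {p} i = if i ≤ p then i else i - 1 := by
  induction i with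
  | zero => simp [cnt]
  | succ i ih =>
    unfold cnt at *
    rw [Nat.count_succ, ih]
    simp only [Finset.mem_singleton]
    split_ifs <;> omega

lemma cnt_succAbove (p : Fin (n + 1)) (j : Fin n) : cnt {(p : ℕ)} (p.succAbove j) = j := by
  rw [cnt_singleton]
  rcases lt_or_ge j.castSucc p with h | h
  · rw [Fin.succAbove_of_castSucc_lt _ _ h]
    have : (j : ℕ) < p := h
    simp
    omega
  · rw [Fin.succAbove_of_le_castSucc _ _ h]
    have : (p : ℕ) ≤ j := h
    simp
    omega

/-- Insert the largest absolute value, with color `x.2.1`, at place `x.1` of the word of `x.2.2`. -/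
def ins (x : Fin (n + 1) × Fin ℓ × CP ℓ n) : CP ℓ (n + 1) :=
  ((finSuccEquiv' x.1).trans ((Equiv.optionCongr x.2.2.1).trans (finSuccEquiv' (Fin.last n)).symm),
    Fin.insertNth (α := fun _ => Fin ℓ) x.1 x.2.1 x.2.2.2)

variable (p : Fin (n + 1)) (c : Fin ℓ) (τ : CP ℓ n)

lemma ins_fst_self : (ins (p, c, τ)).1 p = Fin.last n := by
  simp [ins]

lemma ins_fst_succAbove (j : Fin n) : (ins (p, c, τ)).1 (p.succAbove j) = (τ.1 j).castSucc := by
  simp [ins]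

lemma ins_snd_self : (ins (p, c, τ)).2 p = c := by simp [ins]

lemma ins_snd_succAbove (j : Fin n) : (ins (p, c, τ)).2 (p.succAbove j) = τ.2 j := by simp [ins]

lemma ins_bijective : Function.Bijective (ins (ℓ := ℓ) (n := n)) := by
  rw [Fintype.bijective_iff_injective_and_card]
  constructor
  · rintro ⟨p, c, τ⟩ ⟨p', c', τ'⟩ h
    obtain rfl : p = p' := by
      apply (ins (p, c, τ)).1.injective
      rw [ins_fst_self, h, ins_fst_self]
    obtain rfl : c = c' := by
      rw [← ins_snd_self p c τ, h, ins_snd_self]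
    obtain rfl : τ = τ' := by
      refine Prod.ext (Equiv.ext fun j => ?_) (funext fun j => ?_)
      · apply Fin.castSucc_injective n
        rw [← ins_fst_succAbove p c τ, h, ins_fst_succAbove]
      · rw [← ins_snd_succAbove p c τ, h, ins_snd_succAbove]
    rfl
  · simp [Fintype.card_perm, Nat.factorial_succ, pow_succ]
    ring

lemma col_ins : CP.col (ins (p, c, τ)) = c + CP.col τ := by
  unfold CP.col
  rw [Fin.sum_univ_succAbove _ p]
  simp only [ins_snd_self, ins_snd_succAbove]

lemma letter_ins_self : CP.letter (ins (p, c, τ)) p = ((c : ℕ), n) := by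
  rw [CP.letter_val, ins_fst_self, ins_snd_self, Fin.val_last]

lemma letter_ins_of_ne {i : ℕ} (hi : i < n + 1) (hp : i ≠ p) :
    cnt {(p : ℕ)} i < n ∧
      CP.letter (ins (p, c, τ)) i = CP.letter τ (cnt {(p : ℕ)} i) := by
  rcases Fin.eq_self_or_eq_succAbove p ⟨i, hi⟩ with h | ⟨j, hj⟩
  · exact absurd (congrArg Fin.val h) hp
  · have hij : i = (p.succAbove j : ℕ) := congrArg Fin.val hj
    rw [hij, cnt_succAbove, CP.letter_val, CP.letter_val, ins_fst_succAbove, ins_snd_succAbove]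
    simp

lemma letter_snd_lt {i : ℕ} (hi : i < n) : (CP.letter τ i).2 < n := by
  simp [CP.letter, hi]

lemma desP_ins {i : ℕ} (hi : i < n) :
    CP.desP (ins (p, c, τ)) i ↔
      shufDes {(p : ℕ)} (CP.desP τ) (fun j => (CP.letter τ j).1 < c) i := by
  unfold CP.desP shufDes
  by_cases h1 : i = p
  · have h2 : i + 1 ≠ p := by omega
    obtain ⟨hlt, h⟩ := letter_ins_of_ne p c τ (show i + 1 < n + 1 by omega) h2
    have hc : cnt {(p : ℕ)} (i + 1) = cnt {(p : ℕ)} i := by simp [cnt_singleton, h1]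
    have := letter_snd_lt τ hlt
    rw [h, hc] at *
    subst h1
    rw [letter_ins_self]
    simp [CP.gtLetter]
    omega
  · obtain ⟨hlt, h⟩ := letter_ins_of_ne p c τ (show i < n + 1 by omega) h1
    rw [h]
    by_cases h2 : i + 1 = p
    · rw [h2, letter_ins_self]
      have := letter_snd_lt τ hlt
      simp [CP.gtLetter, h1]
      omega
    · obtain ⟨hlt', h'⟩ := letter_ins_of_ne p c τ (show i + 1 < n + 1 by omega) h2
      have hc : cnt {(p : ℕ)} (i + 1) = cnt {(p : ℕ)} i + 1 := by
        simp only [cnt_singleton]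
        split_ifs <;> omega
      rw [h', hc]
      simp [h1, h2]

variable {R : Type*} [CommRing R] (q : R)

/-- The flag major index is Mahonian: `∑_σ q^{fmaj σ}` gains the factor `[ℓ(n+1)]_q`. -/
lemma sum_fmaj_succ :
    ∑ σ : CP ℓ (n + 1), q ^ CP.fmaj σ = qint q (ℓ * (n + 1)) * ∑ σ : CP ℓ n, q ^ CP.fmaj σ := by
  have key : ∀ (c : Fin ℓ) (τ : CP ℓ n), ∑ p : Fin (n + 1), q ^ CP.fmaj (ins (p, c, τ)) =
      q ^ (c : ℕ) * (qint (q ^ ℓ) (n + 1) * q ^ CP.fmaj τ) := by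
    intro c τ
    have h := shuffle_sum (q ^ ℓ) (CP.desP τ) (fun j => (CP.letter τ j).1 < c) n 1 (by
      intro i _
      simp only [CP.desP, CP.gtLetter]
      omega)
    rw [Finset.powersetCard_one, Finset.sum_map, gauss_one_right, ← CP.maj_eq_wmaj,
      Finset.sum_range] at h
    have h' : ∀ p : Fin (n + 1), q ^ CP.fmaj (ins (p, c, τ)) = q ^ (c + CP.col τ) *
        (q ^ ℓ) ^ wmaj (shufDes {(p : ℕ)} (CP.desP τ) (fun j => (CP.letter τ j).1 < c)) n := by
      intro p
      rw [CP.fmaj_pow, col_ins, CP.maj_eq_wmaj]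
      congr 2
      exact wmaj_congr fun i hi => desP_ins p c τ hi
    simp only [h', ← Finset.mul_sum]
    simp only [Nat.add_sub_cancel, Function.Embedding.coeFn_mk] at h
    rw [h, CP.fmaj_pow, pow_add]
    ring
  rw [← ins_bijective.sum_comp (fun σ => q ^ CP.fmaj σ), Fintype.sum_prod_type_right]
  simp only [key, Fintype.sum_prod_type (α₁ := Fin ℓ), ← Finset.mul_sum]
  rw [← Finset.sum_mul, qint_mul, mul_assoc]
  congr 1
  rw [qint, Finset.sum_range]

end Insert

/-! ### Inserting fixed points -/

section Place

variable {ℓ k f : ℕ} {S : Finset ℕ}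

lemma infinite_not_mem (S : Finset ℕ) : (Set.ofPred fun j => j ∉ S).Infinite :=
  S.finite_toSet.infinite_compl

/-- The `j`-th natural number outside `S`. -/
noncomputable def nthOut (S : Finset ℕ) (j : ℕ) : ℕ := Nat.nth (fun i => i ∉ S) j

lemma nthOut_strictMono (S : Finset ℕ) : StrictMono (nthOut S) :=
  Nat.nth_strictMono (infinite_not_mem S)

lemma nthOut_notMem (S : Finset ℕ) (j : ℕ) : nthOut S j ∉ S :=
  Nat.nth_mem_of_infinite (infinite_not_mem S) j

open Classical in
lemma nthOut_cnt {i : ℕ} (hi : i ∉ S) : nthOut S (cnt S i) = i :=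
  Nat.nth_count (p := fun j => j ∉ S) hi

open Classical in
lemma cnt_nthOut (S : Finset ℕ) (j : ℕ) : cnt S (nthOut S j) = j :=
  Nat.count_nth_of_infinite (infinite_not_mem S) j

lemma cnt_succ_of_mem {i : ℕ} (hi : i ∈ S) : cnt S (i + 1) = cnt S i := by
  simp [cnt, Nat.count_succ, hi]

lemma cnt_succ_of_notMem {i : ℕ} (hi : i ∉ S) : cnt S (i + 1) = cnt S i + 1 := by
  simp [cnt, Nat.count_succ, hi]

lemma nthOut_lt (hS : S ∈ powersetCard f (range (k + f))) {j : ℕ} (hj : j < k) :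
    nthOut S j < k + f := by
  classical
  refine Nat.nth_lt_of_lt_count (p := fun i => i ∉ S) ?_
  have := cnt_of_subset hS
  unfold cnt at this
  convert hj

open Classical in
lemma cnt_lt (hS : S ∈ powersetCard f (range (k + f))) {i : ℕ} (hi : i < k + f) (h : i ∉ S) :
    cnt S i < k := by
  rw [← cnt_of_subset hS]
  exact Nat.count_strict_mono (p := fun j => j ∉ S) h hi

/-- The increasing bijection from `Fin k` to the places outside `S`. -/
noncomputable def outEquiv (hS : S ∈ powersetCard f (range (k + f))) :
    Fin k ≃ {i : Fin (k + f) // (i : ℕ) ∉ S} where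
  toFun j := ⟨⟨nthOut S j, nthOut_lt hS j.2⟩, nthOut_notMem S j⟩
  invFun i := ⟨cnt S i.1, cnt_lt hS i.1.2 i.2⟩
  left_inv j := by simp [cnt_nthOut]
  right_inv i := by
    refine Subtype.ext (Fin.ext ?_)
    simp [nthOut_cnt i.2]

variable (hℓ : 1 ≤ ℓ) (hS : S ∈ powersetCard f (range (k + f))) (τ : CP ℓ k)

/-- The colored permutation with fixed points at the places in `S`, and in which the other places
carry a copy of `τ`. -/
noncomputable def place : CP ℓ (k + f) :=
  (τ.1.extendDomain (outEquiv hS),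
    fun i => if h : (i : ℕ) ∉ S then τ.2 ((outEquiv hS).symm ⟨i, h⟩) else ⟨0, hℓ⟩)

lemma place_fst_of_mem {i : Fin (k + f)} (hi : (i : ℕ) ∈ S) : (place hℓ hS τ).1 i = i :=
  Equiv.Perm.extendDomain_apply_not_subtype _ _ (by simpa using hi)

lemma place_snd_of_mem {i : Fin (k + f)} (hi : (i : ℕ) ∈ S) :
    ((place hℓ hS τ).2 i : ℕ) = 0 := by
  simp [place, hi]

lemma place_fst_out (j : Fin k) :
    (place hℓ hS τ).1 (outEquiv hS j).1 = (outEquiv hS (τ.1 j)).1 :=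
  Equiv.Perm.extendDomain_apply_image _ _ _

lemma place_snd_out (j : Fin k) : (place hℓ hS τ).2 (outEquiv hS j).1 = τ.2 j := by
  have h : ((outEquiv hS j).1 : ℕ) ∉ S := (outEquiv hS j).2
  simp [place, h]

lemma exists_out {i : Fin (k + f)} (hi : (i : ℕ) ∉ S) : ∃ j : Fin k, i = (outEquiv hS j).1 :=
  ⟨(outEquiv hS).symm ⟨i, hi⟩, by simp⟩

/-- The fixed points of `σ`, as a set of natural numbers. -/
def fixN {n : ℕ} (σ : CP ℓ n) : Finset ℕ := (CP.fixSet σ).map Fin.valEmbedding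

lemma mem_fixN {n : ℕ} (σ : CP ℓ n) (i : Fin n) :
    (i : ℕ) ∈ fixN σ ↔ σ.1 i = i ∧ (σ.2 i : ℕ) = 0 := by
  simp [fixN, CP.fixSet, Fin.val_inj]

lemma fixN_subset {n : ℕ} (σ : CP ℓ n) : fixN σ ⊆ range n := by
  intro i hi
  obtain ⟨j, _, rfl⟩ := Finset.mem_map.mp hi
  simp

lemma fixN_place (hτ : CP.fix τ = 0) : fixN (place hℓ hS τ) = S := by
  rw [CP.fix_eq_zero_iff] at hτ
  have hsub := (Finset.mem_powersetCard.mp hS).1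
  have main : ∀ i : Fin (k + f), (i : ℕ) ∈ fixN (place hℓ hS τ) ↔ (i : ℕ) ∈ S := by
    intro i
    rw [mem_fixN]
    by_cases hi : (i : ℕ) ∈ S
    · simp [hi, place_fst_of_mem hℓ hS τ hi, place_snd_of_mem hℓ hS τ hi]
    · obtain ⟨j, rfl⟩ := exists_out hS hi
      simp only [hi, iff_false]
      rw [place_fst_out, place_snd_out, Subtype.val_inj, (outEquiv hS).apply_eq_iff_eq]
      exact hτ j
  ext i
  by_cases hi : i < k + f
  · exact main ⟨i, hi⟩
  · have h1 : i ∉ S := fun h => hi (by simpa using hsub h)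
    have h2 : i ∉ fixN (place hℓ hS τ) := fun h => hi (by simpa using fixN_subset _ h)
    simp [h1, h2]

lemma place_injective : Function.Injective (place hℓ hS) := by
  intro τ τ' h
  refine Prod.ext (Equiv.ext fun j => ?_) (funext fun j => ?_)
  · apply (outEquiv hS).injective
    apply Subtype.ext
    rw [← place_fst_out hℓ hS, h, place_fst_out]
  · rw [← place_snd_out hℓ hS, h, place_snd_out]

lemma exists_place (σ : CP ℓ (k + f)) (hσ : fixN σ = S) :
    ∃ τ : CP ℓ k, CP.fix τ = 0 ∧ place hℓ hS τ = σ := by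
  have hmem : ∀ i : Fin (k + f), (i : ℕ) ∈ S ↔ σ.1 i = i ∧ (σ.2 i : ℕ) = 0 := by
    intro i
    rw [← hσ, mem_fixN]
  have hinv : ∀ i : Fin (k + f), (σ.1 i : ℕ) ∉ S ↔ (i : ℕ) ∉ S := by
    intro i
    rw [not_iff_not]
    constructor
    · intro h
      have h' := σ.1.injective ((hmem _).mp h).1
      rwa [h'] at h
    · intro h
      rwa [((hmem _).mp h).1]
  let τ : CP ℓ k :=
    ((outEquiv hS).trans (((σ.1.subtypePerm hinv)).trans (outEquiv hS).symm),
      fun j => σ.2 (outEquiv hS j).1)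
  have h1 : ∀ j, (outEquiv hS (τ.1 j)).1 = σ.1 (outEquiv hS j).1 := by
    intro j
    simp [τ]
  have h2 : ∀ j, τ.2 j = σ.2 (outEquiv hS j).1 := fun j => rfl
  refine ⟨τ, ?_, Prod.ext (Equiv.ext fun i => ?_) (funext fun i => ?_)⟩
  · rw [CP.fix_eq_zero_iff]
    rintro j ⟨hj1, hj2⟩
    refine (outEquiv hS j).2 ((hmem _).mpr ⟨?_, ?_⟩)
    · rw [← h1, hj1]
    · rw [← h2, hj2]
  · by_cases hi : (i : ℕ) ∈ S
    · rw [place_fst_of_mem hℓ hS τ hi, ((hmem i).mp hi).1]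
    · obtain ⟨j, rfl⟩ := exists_out hS hi
      rw [place_fst_out, h1]
  · by_cases hi : (i : ℕ) ∈ S
    · exact Fin.ext (by rw [place_snd_of_mem hℓ hS τ hi, ((hmem i).mp hi).2])
    · obtain ⟨j, rfl⟩ := exists_out hS hi
      rw [place_snd_out, h2]

lemma col_place : CP.col (place hℓ hS τ) = CP.col τ := by
  unfold CP.col
  rw [← Fintype.sum_subtype_add_sum_subtype (fun i : Fin (k + f) => (i : ℕ) ∉ S),
    ← (outEquiv hS).sum_comp, Finset.sum_eq_zero (s := (univ : Finset {i // ¬ (_ ∉ S)})), add_zero]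
  · simp only [place_snd_out]
  · rintro ⟨i, hi⟩ -
    exact place_snd_of_mem hℓ hS τ (not_not.mp hi)

lemma letter_place_of_mem {i : ℕ} (hi : i < k + f) (h : i ∈ S) :
    CP.letter (place hℓ hS τ) i = (0, i) := by
  have := CP.letter_val (place hℓ hS τ) ⟨i, hi⟩
  rw [place_fst_of_mem hℓ hS τ h, place_snd_of_mem hℓ hS τ h] at this
  exact this

lemma letter_place_of_notMem {i : ℕ} (hi : i < k + f) (h : i ∉ S) :
    CP.letter (place hℓ hS τ) i =
      ((CP.letter τ (cnt S i)).1, nthOut S (CP.letter τ (cnt S i)).2) := by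
  obtain ⟨j, hj⟩ := exists_out hS (i := ⟨i, hi⟩) h
  have hij : i = ((outEquiv hS j).1 : ℕ) := congrArg Fin.val hj
  have hij' : i = nthOut S j := hij
  have hc : cnt S i = j := by rw [hij', cnt_nthOut]
  rw [hc, CP.letter_val, hij, CP.letter_val, place_fst_out, place_snd_out]
  rfl

/-- The word of `place hℓ hS τ` has the descents of a shuffle of the word of `τ` with the fixed
points, where the excedances of `τ` of color index `0` count as bigger than all the fixed points, and
the other letters as smaller. -/
lemma desP_place (hτ : CP.fix τ = 0) {i : ℕ} (hi : i + 1 < k + f) :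
    CP.desP (place hℓ hS τ) i ↔
      shufDes S (CP.desP τ) (fun j => (CP.letter τ j).1 = 0 ∧ j < (CP.letter τ j).2) i := by
  have hder : ∀ j < k, (CP.letter τ j).1 = 0 → (CP.letter τ j).2 ≠ j := by
    intro j hj h1 h2
    rw [CP.fix_eq_zero_iff] at hτ
    have h := CP.letter_val τ ⟨j, hj⟩
    simp only at h
    rw [h] at h1 h2
    exact hτ ⟨j, hj⟩ ⟨Fin.ext h2, h1⟩
  have hmono := nthOut_strictMono S
  unfold CP.desP shufDes
  by_cases h1 : i ∈ S <;> by_cases h2 : i + 1 ∈ S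
  · rw [letter_place_of_mem hℓ hS τ (by omega) h1, letter_place_of_mem hℓ hS τ hi h2]
    simp [CP.gtLetter, h1, h2]
  · rw [letter_place_of_mem hℓ hS τ (by omega) h1, letter_place_of_notMem hℓ hS τ hi h2]
    have hlt := cnt_lt hS hi h2
    have hn := nthOut_cnt h2
    rw [cnt_succ_of_mem h1] at *
    generalize cnt S i = j at *
    have hd := hder j hlt
    have hne : nthOut S (CP.letter τ j).2 ≠ i := fun h => nthOut_notMem S _ (h ▸ h1)
    have m1 := hmono.lt_iff_lt (a := j) (b := (CP.letter τ j).2)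
    have m2 := hmono.lt_iff_lt (a := (CP.letter τ j).2) (b := j)
    simp only [CP.gtLetter, h1, h2]
    simp
    omega
  · rw [letter_place_of_notMem hℓ hS τ (by omega) h1, letter_place_of_mem hℓ hS τ hi h2]
    have hlt := cnt_lt hS (show i < k + f by omega) h1
    have hn := nthOut_cnt h1
    generalize cnt S i = j at *
    have hd := hder j hlt
    have hne : nthOut S (CP.letter τ j).2 ≠ i + 1 := fun h => nthOut_notMem S _ (h ▸ h2)
    have m1 := hmono.lt_iff_lt (a := j) (b := (CP.letter τ j).2)
    simp only [CP.gtLetter, h1, h2]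
    simp
    omega
  · rw [letter_place_of_notMem hℓ hS τ (by omega) h1, letter_place_of_notMem hℓ hS τ hi h2,
      cnt_succ_of_notMem h1]
    simp [CP.gtLetter, h1, h2, hmono.lt_iff_lt]

variable {R : Type*} [CommRing R]

/-- The colored permutations with `f` fixed points correspond to pairs of a set `S` of places and a
derangement `τ`; for each `τ` the sum over `S` is a shuffle sum. -/
lemma sum_fmaj_fiber (hℓ : 1 ≤ ℓ) (q : R) (f : ℕ) :
    ∑ S ∈ powersetCard f (range (k + f)), ∑ σ : CP ℓ (k + f) with fixN σ = S, q ^ CP.fmaj σ =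
      gauss (q ^ ℓ) k f * ∑ τ : CP ℓ k with CP.fix τ = 0, q ^ CP.fmaj τ := by
  have h1 : ∀ S ∈ powersetCard f (range (k + f)),
      ∑ σ : CP ℓ (k + f) with fixN σ = S, q ^ CP.fmaj σ =
      ∑ τ : CP ℓ k with CP.fix τ = 0, q ^ CP.col τ *
        (q ^ ℓ) ^ wmaj (shufDes S (CP.desP τ)
          (fun j => (CP.letter τ j).1 = 0 ∧ j < (CP.letter τ j).2)) (k + f - 1) := by
    intro S hS
    symm
    refine Finset.sum_bij (fun τ _ => place hℓ hS τ) ?_ ?_ ?_ ?_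
    · intro τ hτ
      simpa using fixN_place hℓ hS τ (by simpa using hτ)
    · intro τ _ τ' _ h
      exact place_injective hℓ hS h
    · intro σ hσ
      obtain ⟨τ, hτ, h⟩ := exists_place hℓ hS σ (by simpa using hσ)
      exact ⟨τ, by simpa using hτ, h⟩
    · intro τ hτ
      rw [CP.fmaj_pow, col_place, CP.maj_eq_wmaj]
      congr 2
      exact wmaj_congr fun i hi => (desP_place hℓ hS τ (by simpa using hτ) (by omega)).symm
  rw [Finset.sum_congr rfl h1, Finset.sum_comm, Finset.mul_sum]
  refine Finset.sum_congr rfl fun τ hτ => ?_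
  have hτ' : ∀ i, ¬ (τ.1 i = i ∧ (τ.2 i : ℕ) = 0) := by
    rw [← CP.fix_eq_zero_iff]; simpa using hτ
  rw [← Finset.mul_sum, shuffle_sum, CP.fmaj_pow, CP.maj_eq_wmaj]
  · ring
  · intro i hi
    have e1 := CP.letter_val τ ⟨i, by omega⟩
    have e2 := CP.letter_val τ ⟨i + 1, hi⟩
    have n1 := hτ' ⟨i, by omega⟩
    have n2 := hτ' ⟨i + 1, hi⟩
    rw [Fin.ext_iff] at n1 n2
    simp only [CP.desP, CP.gtLetter] at *
    rw [e1, e2]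
    simp only
    omega

/-- Classify the colored permutations by their set of fixed points. -/
lemma sum_fmaj_eq (hℓ : 1 ≤ ℓ) (q : R) (n : ℕ) :
    ∑ p ∈ antidiagonal n,
        gauss (q ^ ℓ) p.1 p.2 * ∑ τ : CP ℓ p.1 with CP.fix τ = 0, q ^ CP.fmaj τ =
      ∑ σ : CP ℓ n, q ^ CP.fmaj σ := by
  have h := Finset.sum_fiberwise_of_maps_to (s := (univ : Finset (CP ℓ n)))
    (t := (range n).powerset) (g := fixN) (fun σ _ => by simpa using fixN_subset σ)
    (fun σ => q ^ CP.fmaj σ)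
  rw [← h, Finset.sum_powerset, Finset.card_range,
    ← Finset.Nat.sum_antidiagonal_eq_sum_range_succ_mk (f := fun p : ℕ × ℕ =>
      ∑ S ∈ powersetCard p.1 (range n), ∑ σ : CP ℓ n with fixN σ = S, q ^ CP.fmaj σ),
    ← Finset.Nat.sum_antidiagonal_swap]
  refine Finset.sum_congr rfl fun p hp => ?_
  obtain rfl : p.2 + p.1 = n := by simpa [add_comm] using hp
  exact (sum_fmaj_fiber hℓ q p.1).symm

end Place

open Polynomial in
/-- Recurrence for the colored q-derangement numbers:
`d_{ℓ,n+1}(q) = [ℓ(n+1)]_q · d_{ℓ,n}(q) + (−1)^{n+1} q^{ℓ·C(n+1,2)}`. -/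
theorem colored_q_derangement_recurrence (ℓ : ℕ) (hℓ : 1 ≤ ℓ) (n : ℕ) :
    (∑ σ ∈ (univ : Finset (CP ℓ (n + 1))).filter fun σ => CP.fix σ = 0,
        (X : Polynomial ℤ) ^ CP.fmaj σ) =
      qint (X : Polynomial ℤ) (ℓ * (n + 1)) *
        (∑ σ ∈ (univ : Finset (CP ℓ n)).filter fun σ => CP.fix σ = 0,
          (X : Polynomial ℤ) ^ CP.fmaj σ) +
      (-1) ^ (n + 1) * (X : Polynomial ℤ) ^ (ℓ * (n + 1).choose 2) := by
  refine recurrence_of_convolution (X : Polynomial ℤ) ℓ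
    (fun n => ∑ σ ∈ (univ : Finset (CP ℓ n)).filter fun σ => CP.fix σ = 0,
      (X : Polynomial ℤ) ^ CP.fmaj σ)
    (fun n => ∑ σ : CP ℓ n, (X : Polynomial ℤ) ^ CP.fmaj σ) ?_ ?_ ?_ n
  · simp [CP.fmaj, CP.maj, CP.desSet, CP.col]
  · exact fun n => sum_fmaj_succ X
  · exact fun n => sum_fmaj_eq hℓ X n
end

section
/- Fix an integer ℓ≥1 and let the polynomials g_{ℓ,n}^m(q,x) (0≤m≤n) be defined by the recurrence g_{ℓ,n}^n(q,x) = g_{ℓ,n}(q,x) and g_{ℓ,n}^m(q,x) = g_{ℓ,n}^{m+1}(q,x) − x·q^{ℓ(n−m−1)}·g_{ℓ,n−1}^m(q,x) for 0≤m≤n−1. Then for all 0≤m≤n one has the explicit formula g_{ℓ,n}^m(q,x) = Σ_{k=0}^{n−m} (−x)^k · [n−m choose k]_{q^ℓ} · q^{ℓ·binom(k,2)} · g_{ℓ,n−k}(q,x). -/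
/-!
Put `d = n - m` and `Q = q ^ ℓ`. The recurrence expresses the entry of the table at distance
`d + 1` from the diagonal by two entries at distance `d`, so the formula follows by induction on
`d`. Comparing the coefficients of `g_{ℓ,n-k-1}`, the induction step is the q-Pascal rule
`[d+1, k+1] = [d, k+1] + Q^{d-k} [d, k]` (`qbinom_succ_succ'`), dual to the one which defines
`qbinom`, together with `binom(k+1, 2) = k + binom(k, 2)`.
-/

open Finset

/-- The Gaussian binomial coefficient `[n choose k]_q` (a polynomial in `q`, evaluated at
`q : R`), defined by the q-Pascal recurrence `[n+1,k+1]_q = [n,k]_q + q^{k+1}·[n,k+1]_q`;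
it equals `(q;q)_n / ((q;q)_k (q;q)_{n-k})`. -/
def qbinom {R : Type*} [CommSemiring R] (q : R) : ℕ → ℕ → R
  | _, 0 => 1
  | 0, _ + 1 => 0
  | n + 1, k + 1 => qbinom q n k + q ^ (k + 1) * qbinom q n (k + 1)

open MvPolynomial in
/-- `g_{ℓ,n}(q,x) = Σ_{k=0}^n (x−1)(x−q^ℓ)⋯(x−q^{ℓ(k−1)}) · [(k+1)ℓ]_q ⋯ [nℓ]_q`,
as a polynomial in `q = X 0` and `x = X 1`. -/
noncomputable def gPoly (ℓ n : ℕ) : MvPolynomial (Fin 2) ℤ :=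
  ∑ k ∈ range (n + 1),
    (∏ i ∈ range k, (X 1 - (X 0 : MvPolynomial (Fin 2) ℤ) ^ (ℓ * i))) *
      ∏ j ∈ Icc (k + 1) n, qint (X 0 : MvPolynomial (Fin 2) ℤ) (j * ℓ)

theorem qbinom_eq_zero_of_lt {R : Type*} [CommSemiring R] (q : R) :
    ∀ {n k : ℕ}, n < k → qbinom q n k = 0 := by
  intro n
  induction n with
  | zero =>
    intro k hk
    obtain ⟨k, rfl⟩ := Nat.exists_eq_succ_of_ne_zero (by omega : k ≠ 0)
    simp [qbinom]
  | succ n ih =>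
    intro k hk
    obtain ⟨k, rfl⟩ := Nat.exists_eq_succ_of_ne_zero (by omega : k ≠ 0)
    simp [qbinom, ih (show n < k by omega), ih (show n < k + 1 by omega)]

@[simp]
theorem qbinom_zero_right {R : Type*} [CommSemiring R] (q : R) (n : ℕ) : qbinom q n 0 = 1 := by
  cases n <;> simp [qbinom]

theorem qbinom_succ_succ {R : Type*} [CommSemiring R] (q : R) (n k : ℕ) :
    qbinom q (n + 1) (k + 1) = qbinom q n k + q ^ (k + 1) * qbinom q n (k + 1) := by
  simp [qbinom]

/-- The q-Pascal rule dual to the defining recurrence of `qbinom`. The bound `k ≤ n` makes the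
exponent a true subtraction. -/
theorem qbinom_succ_succ' {R : Type*} [CommSemiring R] (q : R) :
    ∀ {n k : ℕ}, k ≤ n →
      qbinom q (n + 1) (k + 1) = qbinom q n (k + 1) + q ^ (n - k) * qbinom q n k := by
  intro n
  induction n with
  | zero =>
    intro k hk
    obtain rfl : k = 0 := by omega
    simp [qbinom]
  | succ n ih =>
    intro k hk
    rcases k with _ | k
    · have h := ih (Nat.zero_le n)
      have h' := qbinom_succ_succ q n 0
      rw [qbinom_succ_succ, h, mul_add, ← add_assoc, ← h, h']
      simp
      ring
    · rw [qbinom_succ_succ q (n + 1) (k + 1)]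
      rcases (Nat.lt_or_ge k n) with hkn | hkn
      · obtain ⟨j, rfl⟩ := Nat.exists_eq_add_of_lt hkn
        have h1 := ih (show k ≤ k + j + 1 by omega)
        have h2 := ih (show k + 1 ≤ k + j + 1 by omega)
        rw [show k + j + 1 - k = j + 1 by omega] at h1
        rw [show k + j + 1 - (k + 1) = j by omega] at h2
        rw [show k + j + 1 + 1 - (k + 1) = j + 1 by omega]
        -- The left side is expanded by the dual rule, the right side by the defining one.
        conv_lhs => rw [h1, h2]
        conv_rhs => rw [qbinom_succ_succ q (k + j + 1) (k + 1), qbinom_succ_succ q (k + j + 1) k]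
        ring
      · obtain rfl : k = n := by omega
        simp [qbinom_eq_zero_of_lt q (show k + 1 < k + 1 + 1 by omega)]

/-- The right-hand side of the explicit formula satisfies, in the distance `d` from the diagonal,
the same recurrence as the table. Nothing about `gPoly` is needed, so an arbitrary sequence `f` in
a commutative ring takes its place. -/
theorem qbinom_transform_succ {R : Type*} [CommRing R] (q x : R) (ℓ : ℕ) (f : ℕ → R) (d n : ℕ) :
    ∑ k ∈ range (d + 1 + 1),
        (-1) ^ k * x ^ k * qbinom (q ^ ℓ) (d + 1) k * q ^ (ℓ * k.choose 2) * f (n - k) =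
      ∑ k ∈ range (d + 1),
          (-1) ^ k * x ^ k * qbinom (q ^ ℓ) d k * q ^ (ℓ * k.choose 2) * f (n - k) -
        x * q ^ (ℓ * d) * ∑ k ∈ range (d + 1),
          (-1) ^ k * x ^ k * qbinom (q ^ ℓ) d k * q ^ (ℓ * k.choose 2) * f (n - 1 - k) := by
  -- The first sum on the right may be extended by the vanishing term `k = d + 1`.
  have hext : ∑ k ∈ range (d + 1),
        (-1) ^ k * x ^ k * qbinom (q ^ ℓ) d k * q ^ (ℓ * k.choose 2) * f (n - k) =
      ∑ k ∈ range (d + 1 + 1),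
        (-1) ^ k * x ^ k * qbinom (q ^ ℓ) d k * q ^ (ℓ * k.choose 2) * f (n - k) := by
    rw [sum_range_succ _ (d + 1), qbinom_eq_zero_of_lt _ (Nat.lt_succ_self d)]
    simp
  rw [hext, sum_range_succ', sum_range_succ' _ (d + 1), add_sub_right_comm, mul_sum,
    ← sum_sub_distrib]
  congr 1
  · refine sum_congr rfl fun k hk => ?_
    have hkd : k ≤ d := by simpa [Nat.lt_succ_iff] using hk
    obtain ⟨j, rfl⟩ := Nat.exists_eq_add_of_le hkd
    rw [qbinom_succ_succ' _ hkd, show k + j - k = j by omega,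
      show n - 1 - k = n - (k + 1) by omega, Nat.choose_succ_succ' k 1, Nat.choose_one_right]
    ring
  · simp

open MvPolynomial in
/-- If the table `G n m = g_{ℓ,n}^m(q,x)` is defined by the diagonal values
`g_{ℓ,n}^n = g_{ℓ,n}` and the recurrence
`g_{ℓ,n}^m = g_{ℓ,n}^{m+1} − x·q^{ℓ(n−m−1)}·g_{ℓ,n−1}^m`, then for `0 ≤ m ≤ n`,
`g_{ℓ,n}^m(q,x) = Σ_{k=0}^{n−m} (−x)^k [n−m choose k]_{q^ℓ} q^{ℓ·C(k,2)} g_{ℓ,n−k}(q,x)`. -/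
theorem q_difference_table_explicit_formula (ℓ : ℕ) (hℓ : 1 ≤ ℓ)
    (G : ℕ → ℕ → MvPolynomial (Fin 2) ℤ)
    (hdiag : ∀ n, G n n = gPoly ℓ n)
    (hrec : ∀ n m, m < n →
      G n m = G n (m + 1) - X 1 * (X 0 : MvPolynomial (Fin 2) ℤ) ^ (ℓ * (n - m - 1)) * G (n - 1) m) :
    ∀ n m, m ≤ n →
      G n m = ∑ k ∈ range (n - m + 1),
        (-1 : MvPolynomial (Fin 2) ℤ) ^ k * (X 1) ^ k *
          qbinom ((X 0 : MvPolynomial (Fin 2) ℤ) ^ ℓ) (n - m) k *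
          (X 0 : MvPolynomial (Fin 2) ℤ) ^ (ℓ * k.choose 2) * gPoly ℓ (n - k) := by
  intro n m hmn
  obtain ⟨d, rfl⟩ := Nat.exists_eq_add_of_le hmn
  clear hmn
  induction d generalizing m with
  | zero => simp [hdiag]
  | succ d ih =>
    have h1 := ih (m + 1)
    have h2 := ih m
    rw [show m + 1 + d - (m + 1) = d by omega, show m + 1 + d = m + (d + 1) by omega] at h1
    rw [show m + d - m = d by omega] at h2
    rw [hrec _ _ (by omega), show m + (d + 1) - m = d + 1 by omega,
      qbinom_transform_succ, h1, show d + 1 - 1 = d by omega,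
      show m + (d + 1) - 1 = m + d by omega, h2]
end

section
/- Fix an integer ℓ≥1 and let the polynomials g_{ℓ,n}^m(q,x) (0≤m≤n) be defined by the recurrence g_{ℓ,n}^n(q,x) = g_{ℓ,n}(q,x) and g_{ℓ,n}^m(q,x) = g_{ℓ,n}^{m+1}(q,x) − x·q^{ℓ(n−m−1)}·g_{ℓ,n−1}^m(q,x) for 0≤m≤n−1. Then for all 0≤m≤n one has the combinatorial interpretation g_{ℓ,n}^m(q,x) = Σ_{σ ∈ G_{ℓ,n}^m} q^{fmaf σ} x^{fix σ}, where G_{ℓ,n}^m = {σ ∈ G_{ℓ,n} : σ(i) ≠ i for all i ≤ n−m}. -/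
/-!
Write `Q = q ^ ℓ`, let `D n` be the generating function of `fmaj` over the colored derangements
of length `n` (`derPoly`), and let `B n j` be the generating function of `(fmaf, fix)` over the
colored permutations whose first `j` positions are not fixed (`headSum`).

*Recurrence.* If `p` (counted from `0`) is the first fixed point of `σ`, deleting it leaves the
derangement part unchanged and lowers `maf` by exactly `p`. Hence
`B (n + 1) j = B (n + 1) (j + 1) + x q ^ (ℓ j) B n j` (`headSum_succ`), which is the recurrence of
the table. Iterating it down to derangements gives `B n 0 = ∑ₖ xᵏ [n choose k]_Q D (n - k)`
(`headSum_eq`).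

*Diagonal.* It remains to see that `gPoly ℓ n = B n 0`. The essential point is
`[ℓ][2ℓ]⋯[nℓ] = ∑ₖ [n choose k]_Q D (n - k)` (`qfac_eq_sum`). The left side is the generating
function of `fmaj` over the whole group (`sum_fmaj`). For the right side, the argument of Wachs
applies: the descents of `σ` do not change when excedances are regarded as letters greater than
all fixed points, the other non-fixed letters as smaller, and the fixed points as copies of one
letter (`maj_eq_rmaj`). Thus `σ` behaves like a shuffle of its derangement part with copies of one
letter, and Garsia and Gessel's shuffle theorem (`shuf_rmaj`) sums `Q ^ maj` over these shuffles.
The same theorem, for a single copy of the letter, drives the induction in `sum_fmaj`.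
Substituting `qfac_eq_sum` into the definition of `gPoly` and using Cauchy's `q`-binomial theorem
(`sum_qbinom_prod`) yields `B n 0` (`gPoly_eq`).
-/

open Finset

/-! ### Gaussian binomial coefficients -/

namespace QTable

section Algebra

variable {R : Type*} [CommRing R]

/-- The Gaussian binomial coefficient in the variable `Q`, defined by the Pascal rule. -/
def qbinom (Q : R) : ℕ → ℕ → R
  | _, 0 => 1
  | 0, _ + 1 => 0
  | n + 1, k + 1 => qbinom Q n k + Q ^ (k + 1) * qbinom Q n (k + 1)

@[simp] lemma qbinom_zero_right (Q : R) (n : ℕ) : qbinom Q n 0 = 1 := by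
  cases n <;> rfl

lemma qbinom_succ_succ (Q : R) (n k : ℕ) :
    qbinom Q (n + 1) (k + 1) = qbinom Q n k + Q ^ (k + 1) * qbinom Q n (k + 1) := rfl

lemma qbinom_eq_zero (Q : R) : ∀ n k, n < k → qbinom Q n k = 0
  | 0, k + 1, _ => rfl
  | n + 1, k + 1, h => by
    rw [qbinom_succ_succ, qbinom_eq_zero Q n k (by omega), qbinom_eq_zero Q n (k + 1) (by omega)]
    ring

lemma qbinom_self (Q : R) : ∀ n, qbinom Q n n = 1
  | 0 => rfl
  | n + 1 => by
    rw [qbinom_succ_succ, qbinom_self Q n, qbinom_eq_zero Q n (n + 1) (by omega)]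
    ring

/-- The second Pascal rule, written for `n = m + k` to avoid subtraction. -/
lemma qbinom_pascal (Q : R) : ∀ m k : ℕ,
    qbinom Q (m + k + 1) (k + 1) = Q ^ m * qbinom Q (m + k) k + qbinom Q (m + k) (k + 1)
  | 0, k => by
    simp [qbinom_self, qbinom_eq_zero Q k (k + 1) (by omega)]
  | m + 1, 0 => by
    have h := qbinom_pascal Q m 0
    simp only [add_zero, qbinom_zero_right, qbinom_succ_succ Q _ 0, zero_add, pow_one,
      mul_one] at h ⊢
    linear_combination Q * h
  | m + 1, k + 1 => by
    have h1 := qbinom_pascal Q (m + 1) k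
    have h2 := qbinom_pascal Q m (k + 1)
    have e : m + 1 + (k + 1) = m + 1 + k + 1 := by omega
    have e2 : m + (k + 1) = m + 1 + k := by omega
    rw [e2] at h2
    rw [e, qbinom_succ_succ Q (m + 1 + k + 1) (k + 1), qbinom_succ_succ Q (m + 1 + k) k]
    rw [qbinom_succ_succ Q (m + 1 + k) k] at h1
    rw [qbinom_succ_succ Q (m + 1 + k) (k + 1)] at h2 ⊢
    linear_combination h1 + Q ^ (k + 2) * h2

/-- The product `[ℓ][2ℓ]⋯[nℓ]`, a `q`-analogue of the order of the colored permutation group. -/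
def qfac (q : R) (ℓ n : ℕ) : R := ∏ j ∈ range n, qint q ((j + 1) * ℓ)

lemma qfac_succ (q : R) (ℓ n : ℕ) :
    qfac q ℓ (n + 1) = qfac q ℓ n * qint q ((n + 1) * ℓ) := prod_range_succ _ _

lemma qint_add (q : R) (a b : ℕ) : qint q (a + b) = qint q a + q ^ a * qint q b := by
  simp only [qint, sum_range_add, mul_sum, pow_add]

lemma qbinom_mul_qfac (q : R) (ℓ : ℕ) : ∀ m k : ℕ,
    qbinom (q ^ ℓ) (m + k) k * (qfac q ℓ m * qfac q ℓ k) = qfac q ℓ (m + k)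
  | m, 0 => by simp [qfac]
  | 0, k + 1 => by simp [qfac, qbinom_self]
  | m + 1, k + 1 => by
    have h1 := qbinom_mul_qfac q ℓ (m + 1) k
    have h2 := qbinom_mul_qfac q ℓ m (k + 1)
    have e : m + 1 + (k + 1) = m + 1 + k + 1 := by omega
    have e2 : m + (k + 1) = m + 1 + k := by omega
    have hq : qint q ((m + 1 + k + 1) * ℓ)
        = qint q ((k + 1) * ℓ) + q ^ ((k + 1) * ℓ) * qint q ((m + 1) * ℓ) := by
      rw [← qint_add]; congr 1; ring
    have hp : q ^ ((k + 1) * ℓ) = (q ^ ℓ) ^ (k + 1) := by rw [← pow_mul, mul_comm]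
    rw [hp] at hq
    rw [e2] at h2
    rw [e, qbinom_succ_succ, qfac_succ q ℓ (m + 1 + k), hq, qfac_succ q ℓ k]
    rw [qfac_succ q ℓ k] at h2
    rw [qfac_succ q ℓ m] at h1 ⊢
    linear_combination qint q ((k + 1) * ℓ) * h1
      + (q ^ ℓ) ^ (k + 1) * qint q ((m + 1) * ℓ) * h2

/-- Cauchy's form of the `q`-binomial theorem. -/
lemma sum_qbinom_prod (Q x : R) (s : ℕ) :
    ∑ k ∈ range (s + 1), qbinom Q s k * ∏ i ∈ range k, (x - Q ^ i) = x ^ s := by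
  induction s with
  | zero => simp
  | succ s ih =>
    rw [sum_range_succ']
    simp only [qbinom_succ_succ, add_mul, sum_add_distrib]
    have h2 := sum_range_succ' (fun k => Q ^ k * qbinom Q s k * ∏ i ∈ range k, (x - Q ^ i)) (s + 1)
    rw [sum_range_succ, qbinom_eq_zero Q s (s + 1) (by omega)] at h2
    simp only [mul_zero, zero_mul, add_zero, qbinom_zero_right, prod_range_zero, mul_one,
      pow_zero] at h2 ⊢
    rw [add_assoc, ← h2, ← sum_add_distrib, pow_succ, ← ih, sum_mul]
    refine sum_congr rfl fun k _ => ?_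
    rw [prod_range_succ]
    ring

/-! ### Shuffling a word with copies of one letter -/

/-- Sum of `f` over all shuffles of the word `L` with `k` copies of the letter `none`. -/
def shuf {β : Type*} : ℕ → List (Option β) → (List (Option β) → R) → R
  | 0, [], f => f []
  | k + 1, [], f => shuf k [] (fun s => f (none :: s))
  | 0, a :: L, f => shuf 0 L (fun s => f (a :: s))
  | k + 1, a :: L, f =>
    shuf k (a :: L) (fun s => f (none :: s)) + shuf (k + 1) L (fun s => f (a :: s))
  termination_by k L => k + L.length

lemma shuf_zero {β : Type*} : ∀ (L : List (Option β)) (f : List (Option β) → R),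
    shuf 0 L f = f L
  | [], f => by rw [shuf]
  | a :: L, f => by rw [shuf, shuf_zero L]

lemma shuf_one {β : Type*} : ∀ (L : List (Option β)) (f : List (Option β) → R),
    shuf 1 L f = ∑ i ∈ range (L.length + 1), f (L.insertIdx i none)
  | [], f => by simp [shuf]
  | a :: L, f => by
    rw [shuf, shuf_zero, shuf_one L, List.length_cons, sum_range_succ' _ (L.length + 1), add_comm]
    simp only [List.insertIdx_succ_cons, List.insertIdx_zero]

lemma shuf_congr {β : Type*} : ∀ (k : ℕ) (L : List (Option β)) (f g : List (Option β) → R),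
    (∀ s, s.length = k + L.length → f s = g s) → shuf k L f = shuf k L g
  | 0, [], f, g, h => by rw [shuf, shuf]; exact h _ rfl
  | k + 1, [], f, g, h => by
    rw [shuf, shuf]
    exact shuf_congr k [] _ _ fun s hs => h _ (by simp_all)
  | 0, a :: L, f, g, h => by
    rw [shuf, shuf]
    exact shuf_congr 0 L _ _ fun s hs => h _ (by simp_all)
  | k + 1, a :: L, f, g, h => by
    rw [shuf, shuf]
    congr 1
    · exact shuf_congr k (a :: L) _ _ fun s hs => h _ (by simp_all; omega)
    · exact shuf_congr (k + 1) L _ _ fun s hs => h _ (by simp_all; omega)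
  termination_by k L => k + L.length

lemma shuf_mul {β : Type*} (c : R) : ∀ (k : ℕ) (L : List (Option β)) (f : List (Option β) → R),
    shuf k L (fun s => c * f s) = c * shuf k L f
  | 0, [], f => by rw [shuf, shuf]
  | k + 1, [], f => by rw [shuf, shuf, shuf_mul c k []]
  | 0, a :: L, f => by rw [shuf, shuf, shuf_mul c 0 L]
  | k + 1, a :: L, f => by
    rw [shuf, shuf, shuf_mul c k (a :: L), shuf_mul c (k + 1) L, mul_add]
  termination_by k L => k + L.length

/-- The strict order on letters of a word in which `none` marks copies of a distinguished
letter `v` and `some (h, c, r)` is a letter of color `c` and absolute value `r`, with `h` telling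
whether the letter is greater than `v`. -/
def kgt : Option (Bool × ℕ × ℕ) → Option (Bool × ℕ × ℕ) → Bool
  | none, none => false
  | none, some b => !b.1
  | some a, none => a.1
  | some a, some b => (a.1 && !b.1) || (a.1 == b.1 && decide (CP.gtLetter a.2 b.2))

/-- Whether a letter is smaller than the distinguished letter. -/
def klow : Option (Bool × ℕ × ℕ) → Bool
  | none => false
  | some a => !a.1

/-- The major index of a word that is listed from its last letter to its first. -/
def rmaj : List (Option (Bool × ℕ × ℕ)) → ℕ
  | [] => 0
  | [_] => 0
  | a :: b :: L => (if kgt b a then L.length + 1 else 0) + rmaj (b :: L)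

/-- The shuffle generating function with a prescribed final letter `x` (the head, since words are
listed backwards). Keeping the final letter fixed is what makes the induction on the last
letter of the shuffle close up. -/
lemma shuf_rmaj_cons (Q : R) : ∀ (k : ℕ) (L : List (Option (Bool × ℕ × ℕ)))
    (x : Option (Bool × ℕ × ℕ)), (∀ a ∈ L, a ≠ none) →
    shuf k L (fun s => Q ^ rmaj (x :: s))
      = Q ^ (rmaj (x :: L) + if klow x then k else 0) * qbinom Q (L.length + k) k
  | 0, L, x, _ => by rw [shuf_zero]; simp
  | k + 1, [], x, h => by
    have hh := shuf_congr (R := R) k [] (fun s => Q ^ rmaj (x :: none :: s))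
      (fun s => Q ^ (if kgt none x then k + 1 else 0) * Q ^ rmaj (none :: s))
      (by intro s hs; simp only [List.length_nil, add_zero] at hs; rw [rmaj, pow_add, hs])
    rw [shuf, hh, shuf_mul, shuf_rmaj_cons Q k [] none (by simp)]
    rcases x with _ | ⟨_ | _, x⟩ <;> simp [kgt, klow, rmaj, qbinom_self]
  | k + 1, b :: L, x, h => by
    have h1 := shuf_congr (R := R) k (b :: L) (fun s => Q ^ rmaj (x :: none :: s))
      (fun s => Q ^ (if kgt none x then k + L.length + 2 else 0) * Q ^ rmaj (none :: s))
      (by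
        intro s hs
        simp only [List.length_cons] at hs
        rw [rmaj, pow_add, hs]; rfl)
    have h2 := shuf_congr (R := R) (k + 1) L (fun s => Q ^ rmaj (x :: b :: s))
      (fun s => Q ^ (if kgt b x then k + L.length + 2 else 0) * Q ^ rmaj (b :: s))
      (by intro s hs; rw [rmaj, pow_add, hs]; congr 3; omega)
    rw [shuf, h1, h2, shuf_mul, shuf_mul, shuf_rmaj_cons Q k (b :: L) none h,
      shuf_rmaj_cons Q (k + 1) L b (fun a ha => h a (by simp [ha]))]
    obtain ⟨b, rfl⟩ := Option.ne_none_iff_exists'.mp (h b (by simp))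
    have p1 := qbinom_succ_succ Q (L.length + 1 + k) k
    have p2 := qbinom_pascal Q (L.length + 1) k
    have e1 : (some b :: L).length + (k + 1) = L.length + 1 + k + 1 := by simp; omega
    have e2 : L.length + (k + 1) = L.length + 1 + k := by omega
    have e3 : (some b :: L).length + k = L.length + 1 + k := by simp
    rw [e1, e2, e3]
    simp only [rmaj]
    obtain ⟨hb, b⟩ := b
    generalize rmaj (some (hb, b) :: L) = M
    generalize L.length = m at *
    generalize qbinom Q (m + 1 + k) k = u at *
    generalize qbinom Q (m + 1 + k) (k + 1) = v at *
    generalize qbinom Q (m + 1 + k + 1) (k + 1) = w at *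
    rcases x with _ | ⟨_ | _, x⟩ <;> cases hb <;> simp [kgt, klow]
    · linear_combination -Q ^ M * p1
    · linear_combination -Q ^ (M + m + 1) * p1
    · split_ifs
      · linear_combination -Q ^ (M + k + m + 2) * p1
      · linear_combination -Q ^ (M + k + 1) * p2
    · linear_combination -Q ^ (M + k + m + 2) * p2
    · linear_combination -Q ^ M * p1
    · split_ifs
      · linear_combination -Q ^ (M + m + 1) * p1
      · linear_combination -Q ^ M * p2
  termination_by k L => k + L.length

/-- Garsia and Gessel's shuffle theorem for the shuffles of a word with copies of one letter. -/
lemma shuf_rmaj (Q : R) (k : ℕ) (L : List (Option (Bool × ℕ × ℕ))) (h : ∀ a ∈ L, a ≠ none) :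
    shuf k L (fun s => Q ^ rmaj s) = Q ^ rmaj L * qbinom Q (L.length + k) k := by
  cases k with
  | zero => simp [shuf_zero]
  | succ k =>
    cases L with
    | nil =>
      rw [shuf, shuf_rmaj_cons Q k [] none (by simp)]
      simp [klow, rmaj, qbinom_self]
    | cons b L =>
      rw [shuf, shuf_rmaj_cons Q k (b :: L) none h,
        shuf_rmaj_cons Q (k + 1) L b (fun a ha => h a (by simp [ha]))]
      obtain ⟨⟨hb, b⟩, rfl⟩ := Option.ne_none_iff_exists'.mp (h b (by simp))
      have p1 := qbinom_succ_succ Q (L.length + 1 + k) k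
      have p2 := qbinom_pascal Q (L.length + 1) k
      have e1 : (some (hb, b) :: L).length + (k + 1) = L.length + 1 + k + 1 := by simp; omega
      have e2 : L.length + (k + 1) = L.length + 1 + k := by omega
      have e3 : (some (hb, b) :: L).length + k = L.length + 1 + k := by simp
      rw [e1, e2, e3]
      simp only [rmaj]
      generalize rmaj (some (hb, b) :: L) = M
      cases hb <;> simp [kgt, klow]
      · linear_combination -Q ^ M * p1
      · linear_combination -Q ^ M * p2

end Algebra

end QTable

/-! ### Words listed backwards -/

namespace QTable

section Words

variable {β : Type*}

/-- The word `g 0, …, g (n - 1)`, listed from its last letter to its first. -/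
def bw (g : ℕ → β) : ℕ → List β
  | 0 => []
  | n + 1 => g n :: bw g n

/-- The letters `g r, …, g (r + t - 1)`, listed backwards, followed by `s`. -/
def pre (g : ℕ → β) (r : ℕ) : ℕ → List β → List β
  | 0, s => s
  | t + 1, s => g (r + t) :: pre g r t s

lemma pre_succ (g : ℕ → β) (r : ℕ) : ∀ (t : ℕ) (s : List β),
    pre g (r + 1) t (g r :: s) = pre g r (t + 1) s
  | 0, s => rfl
  | t + 1, s => by
    rw [pre, pre_succ g r t s, pre, pre, pre]
    congr 2; omega

lemma bw_add (g : ℕ → β) (r : ℕ) : ∀ t, bw g (r + t) = pre g r t (bw g r)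
  | 0 => rfl
  | t + 1 => by rw [pre, ← bw_add g r t]; rfl

lemma insertIdx_pre (g : ℕ → β) (r : ℕ) (a : β) : ∀ (t : ℕ) (s : List β),
    (pre g r t s).insertIdx t a = pre g r t (a :: s)
  | 0, s => by simp [pre]
  | t + 1, s => by rw [pre, List.insertIdx_succ_cons, insertIdx_pre g r a t s, pre]

@[simp] lemma length_bw (g : ℕ → β) : ∀ n, (bw g n).length = n
  | 0 => rfl
  | n + 1 => by rw [bw, List.length_cons, length_bw g n]

lemma bw_congr {g g' : ℕ → β} : ∀ {n : ℕ}, (∀ i < n, g i = g' i) → bw g n = bw g' n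
  | 0, _ => rfl
  | n + 1, h => by
    rw [bw, bw, h n (by omega), bw_congr fun i hi => h i (by omega)]

lemma mem_bw {g : ℕ → β} {a : β} : ∀ {n : ℕ}, a ∈ bw g n → ∃ i < n, g i = a
  | n + 1, h => by
    rcases List.mem_cons.mp h with h | h
    · exact ⟨n, by omega, h.symm⟩
    · obtain ⟨i, hi, e⟩ := mem_bw h
      exact ⟨i, by omega, e⟩

/-- Inserting a letter at position `p` of a word of length `p + t`. -/
lemma bw_insert {g g' : ℕ → β} (p t : ℕ) (h1 : ∀ i < p, g' i = g i)
    (h2 : ∀ i, p ≤ i → i < p + t → g' (i + 1) = g i) :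
    bw g' (p + t + 1) = (bw g (p + t)).insertIdx t (g' p) := by
  have e : ∀ s ≤ t, pre g' (p + 1) s (g' p :: bw g' p) = pre g p s (g' p :: bw g p) := by
    intro s
    induction s with
    | zero => intro _; rw [pre, pre, bw_congr h1]
    | succ s ih =>
      intro hs
      rw [pre, pre, ih (by omega), ← h2 (p + s) (by omega) (by omega)]
      congr 2; omega
  have e2 : bw g' (p + t + 1) = pre g' (p + 1) t (g' p :: bw g' p) := by
    rw [show p + t + 1 = (p + 1) + t by omega, bw_add]; rfl
  rw [e2, e t le_rfl, bw_add, insertIdx_pre]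

lemma rmaj_bw (g : ℕ → Option (Bool × ℕ × ℕ)) : ∀ n,
    rmaj (bw g n) = ∑ i ∈ (range (n - 1)).filter (fun i => kgt (g i) (g (i + 1))), (i + 1)
  | 0 => by simp [bw, rmaj]
  | 1 => by simp [bw, rmaj]
  | n + 2 => by
    have h := rmaj_bw g (n + 1)
    rw [bw, bw, rmaj, length_bw]
    rw [bw] at h
    rw [h, sum_filter, sum_filter, show n + 2 - 1 = n + 1 by omega, sum_range_succ, add_comm]
    rfl

end Words

/-! ### Inserting a letter into a colored permutation -/

section Insert

open CP

variable {ℓ n : ℕ}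

/-- Insert into the colored permutation `τ`, at position `p`, the letter of absolute value `v` and
color `c`; positions `≥ p` and values `≥ v` of `τ` are shifted up by one. -/
def ins (p v : Fin (n + 1)) (c : Fin ℓ) (τ : CP ℓ n) : CP ℓ (n + 1) :=
  (((finSuccEquiv' p).trans (Equiv.optionCongr τ.1)).trans (finSuccEquiv' v).symm,
    Fin.insertNth (α := fun _ => Fin ℓ) p c τ.2)

variable (p v : Fin (n + 1)) (c : Fin ℓ) (τ : CP ℓ n)

@[simp] lemma ins_fst_same : (ins p v c τ).1 p = v := by simp [ins]

@[simp] lemma ins_snd_same : (ins p v c τ).2 p = c := by simp [ins]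

@[simp] lemma ins_fst_succAbove (i : Fin n) :
    (ins p v c τ).1 (p.succAbove i) = v.succAbove (τ.1 i) := by simp [ins]

@[simp] lemma ins_snd_succAbove (i : Fin n) : (ins p v c τ).2 (p.succAbove i) = τ.2 i := by
  simp [ins]

lemma ins_injective : Function.Injective (ins p v c) := by
  intro τ τ' h
  refine Prod.ext (Equiv.ext fun i => ?_) (funext fun i => ?_)
  · have := congrArg (fun σ : CP ℓ (n + 1) => σ.1 (p.succAbove i)) h
    simpa using this
  · have := congrArg (fun σ : CP ℓ (n + 1) => σ.2 (p.succAbove i)) h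
    simpa using this

lemma ins_surjective (σ : CP ℓ (n + 1)) (hv : σ.1 p = v) (hc : σ.2 p = c) :
    ∃ τ, ins p v c τ = σ := by
  let e : Option (Fin n) ≃ Option (Fin n) :=
    ((finSuccEquiv' p).symm.trans σ.1).trans (finSuccEquiv' v)
  have hn : e none = none := by simp [e, hv]
  have hs : ∀ i, some (Equiv.removeNone e i) = e (some i) := by
    intro i
    refine Equiv.removeNone_some e (Option.ne_none_iff_exists'.mp fun h => ?_)
    exact Option.some_ne_none i (e.injective (h.trans hn.symm))
  refine ⟨(Equiv.removeNone e, fun i => σ.2 (p.succAbove i)), ?_⟩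
  refine Prod.ext (Equiv.ext fun i => ?_) (funext fun i => ?_)
  · rcases Fin.eq_self_or_eq_succAbove p i with rfl | ⟨i, rfl⟩
    · simp [hv]
    · rw [ins_fst_succAbove]
      apply (finSuccEquiv' v).injective
      rw [finSuccEquiv'_succAbove, hs]
      simp [e]
  · rcases Fin.eq_self_or_eq_succAbove p i with rfl | ⟨i, rfl⟩
    · simp [hc]
    · simp

/-- Colored permutations with a prescribed letter at a prescribed position correspond to colored
permutations of one letter less. -/
lemma sum_ins {R : Type*} [AddCommMonoid R] (P : CP ℓ (n + 1) → Prop) [DecidablePred P]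
    (hP : ∀ σ, P σ → σ.1 p = v ∧ σ.2 p = c) (g : CP ℓ (n + 1) → R) :
    ∑ σ ∈ univ.filter P, g σ = ∑ τ ∈ univ.filter (fun τ => P (ins p v c τ)), g (ins p v c τ) := by
  symm
  refine sum_nbij (ins p v c) ?_ (ins_injective p v c).injOn ?_ fun _ _ => rfl
  · intro τ hτ; simpa using hτ
  · intro σ hσ
    have hσ' : P σ := by simpa using hσ
    obtain ⟨τ, rfl⟩ := ins_surjective p v c σ (hP σ hσ').1 (hP σ hσ').2
    exact ⟨τ, by simpa using hσ', rfl⟩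

lemma col_ins : col (ins p v c τ) = c + col τ := by
  simp [col, Fin.sum_univ_succAbove _ p]

/-- `i` is a fixed point of `σ`: its value is `i` and its color is trivial. -/
abbrev IsFix (σ : CP ℓ n) (i : Fin n) : Prop := σ.1 i = i ∧ (σ.2 i : ℕ) = 0

lemma isFix_ins_succAbove (i : Fin n) : IsFix (ins p p c τ) (p.succAbove i) ↔ IsFix τ i := by
  simp [IsFix]

lemma letter_eq (σ : CP ℓ n) (i : Fin n) : letter σ i = ((σ.2 i : ℕ), (σ.1 i : ℕ)) := by
  simp [letter]

/-- The generating function of the flag major index over the whole group. The largest value is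
inserted at all positions in all colors; each color contributes one application of the shuffle
theorem for a single additional letter. -/
lemma sum_fmaj {R : Type*} [CommRing R] (q : R) (ℓ : ℕ) (n : ℕ) :
    ∑ σ : CP ℓ n, q ^ fmaj σ = qfac q ℓ n := by
  induction n with
  | zero =>
    simp [qfac, fmaj, maj, desSet, col]
  | succ n ih =>
    have key : ∀ (c : Fin ℓ) (τ : CP ℓ n),
        ∑ p : Fin (n + 1), q ^ fmaj (ins p (Fin.last n) c τ)
          = q ^ (c : ℕ) * q ^ fmaj τ * qbinom (q ^ ℓ) (n + 1) 1 := by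
      intro c τ
      -- letters compare with the inserted letter through their colors only
      let g : ℕ → Option (Bool × ℕ × ℕ) :=
        fun i => some (decide ((letter τ i).1 < c), letter τ i)
      have hkgt : ∀ a b : ℕ × ℕ,
          (kgt (some (decide (a.1 < c), a)) (some (decide (b.1 < c), b)) = true)
            ↔ gtLetter a b := by
        intro a b
        simp only [kgt, gtLetter]
        by_cases h1 : a.1 < c <;> by_cases h2 : b.1 < c <;> simp [h1, h2] <;> grind
      have hτ : rmaj (bw g n) = maj τ := by
        rw [rmaj_bw, maj, desSet]
        simp only [g, hkgt]
      have hp : ∀ p : Fin (n + 1), maj (ins p (Fin.last n) c τ)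
          = rmaj ((bw g n).insertIdx (n - p) none) := by
        intro p
        let g' : ℕ → Option (Bool × ℕ × ℕ) := fun i =>
          if i = p then none else some (decide ((letter (ins p (Fin.last n) c τ) i).1 < c),
            letter (ins p (Fin.last n) c τ) i)
        have hlt : ∀ i : Fin n, (i : ℕ) < p →
            letter (ins p (Fin.last n) c τ) i = letter τ i := by
          intro i hi
          have e : ((p.succAbove i : Fin (n + 1)) : ℕ) = i := by
            rw [Fin.succAbove_of_castSucc_lt _ _ (by simpa [Fin.lt_def] using hi)]; rfl
          have := letter_eq (ins p (Fin.last n) c τ) (p.succAbove i)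
          rw [e] at this
          rw [this, letter_eq]; simp
        have hge : ∀ i : Fin n, (p : ℕ) ≤ i →
            letter (ins p (Fin.last n) c τ) (i + 1) = letter τ i := by
          intro i hi
          have e : ((p.succAbove i : Fin (n + 1)) : ℕ) = i + 1 := by
            rw [Fin.succAbove_of_le_castSucc _ _ (by simpa [Fin.le_def] using hi)]; rfl
          have := letter_eq (ins p (Fin.last n) c τ) (p.succAbove i)
          rw [e] at this
          rw [this, letter_eq]; simp
        have hat : letter (ins p (Fin.last n) c τ) p = ((c : ℕ), n) := by
          rw [letter_eq]; simp
        have hpn : (p : ℕ) + (n - p) = n := by have := p.2; omega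
        have hb : bw g' (n + 1) = (bw g n).insertIdx (n - p) none := by
          have := bw_insert (g := g) (g' := g') p (n - p) ?_ ?_
          · rw [hpn] at this
            rw [this]; simp [g']
          · intro i hi
            have hin : i < n := by omega
            simp only [g', g, hi.ne, if_false]
            rw [hlt ⟨i, hin⟩ hi]
          · intro i hi hi'
            have hin : i < n := by omega
            simp only [g', g, show i + 1 ≠ p by omega, if_false]
            rw [hge ⟨i, hin⟩ hi]
        have hval : ∀ i : ℕ, i < n + 1 → i ≠ p → (letter (ins p (Fin.last n) c τ) i).2 < n := by
          intro i hi hne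
          rcases lt_or_gt_of_ne hne with h | h
          · have hin : i < n := by omega
            rw [hlt ⟨i, hin⟩ h, letter_eq]; exact (τ.1 ⟨i, hin⟩).2
          · obtain ⟨i, rfl⟩ : ∃ k, i = k + 1 := ⟨i - 1, by omega⟩
            have hin : i < n := by omega
            rw [hge ⟨i, hin⟩ (by simp; omega), letter_eq]; exact (τ.1 ⟨i, hin⟩).2
        rw [← hb, rmaj_bw, maj, desSet]
        refine sum_congr (filter_congr fun i hi => ?_) fun _ _ => rfl
        rw [mem_range] at hi
        by_cases h1 : i = p
        · have hv := hval (i + 1) (by omega) (by omega)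
          simp only [g', h1, if_true, show (p : ℕ) + 1 ≠ p by omega, if_false, hat, kgt, gtLetter]
          rw [h1] at hv
          simp; omega
        · by_cases h2 : i + 1 = p
          · have hv := hval i (by omega) h1
            simp only [g', h1, if_false, h2, if_true, hat, kgt, gtLetter]
            simp; omega
          · simp only [g', h1, h2, if_false, hkgt]
      have hs := shuf_rmaj (q ^ ℓ) 1 (bw g n)
        (by intro a ha; obtain ⟨i, _, rfl⟩ := mem_bw ha; simp [g])
      rw [shuf_one, length_bw, hτ, ← sum_range_reflect, ← Fin.sum_univ_eq_sum_range
        (fun j => (q ^ ℓ) ^ rmaj ((bw g n).insertIdx (n + 1 - 1 - j) none))] at hs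
      simp only [fmaj, col_ins, hp, pow_add, pow_mul]
      rw [← sum_mul]
      simp only [add_tsub_cancel_right] at hs
      rw [hs]
      ring
    have h1 : ∑ σ : CP ℓ (n + 1), q ^ fmaj σ
        = ∑ p : Fin (n + 1), ∑ c : Fin ℓ, ∑ τ : CP ℓ n, q ^ fmaj (ins p (Fin.last n) c τ) := by
      rw [← Finset.sum_fiberwise univ (fun σ : CP ℓ (n + 1) => σ.1.symm (Fin.last n))]
      refine sum_congr rfl fun p _ => ?_
      rw [← Finset.sum_fiberwise _ (fun σ : CP ℓ (n + 1) => σ.2 p)]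
      refine sum_congr rfl fun c _ => ?_
      rw [filter_filter, sum_ins p (Fin.last n) c]
      · refine sum_congr ?_ fun _ _ => rfl
        ext τ
        simp [Equiv.symm_apply_eq]
      · rintro σ ⟨h, h'⟩
        exact ⟨by rw [← h]; simp, h'⟩
    rw [h1, sum_comm]
    simp only [sum_comm (s := (univ : Finset (Fin (n + 1)))), key]
    simp only [← sum_mul, ← mul_sum, ih]
    have := qbinom_mul_qfac q ℓ n 1
    rw [← this, Fin.sum_univ_eq_sum_range (fun c => q ^ c) ℓ]
    simp only [qfac, prod_range_one, zero_add, one_mul, qint]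
    ring

end Insert

end QTable

/-! ### Flag major index: deleting the fixed points -/

namespace QTable

section Fmaj

open CP

variable {ℓ n : ℕ}

/-- The letter at position `i` of `σ` as seen by the descents of `σ`: `none` at a fixed point, and
otherwise the color, the rank of the absolute value among the values of the non-fixed points, and
whether `i` is an excedance. The excedances play the role of letters greater than all fixed
points, and the other non-fixed letters that of letters smaller than all fixed points. -/
def key (σ : CP ℓ n) (i : ℕ) : Option (Bool × ℕ × ℕ) :=
  if h : i < n then
    if IsFix σ ⟨i, h⟩ then none
    else some (decide ((σ.2 ⟨i, h⟩ : ℕ) = 0 ∧ (⟨i, h⟩ : Fin n) < σ.1 ⟨i, h⟩), (σ.2 ⟨i, h⟩ : ℕ),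
      ∑ j : Fin n, if ¬ IsFix σ j ∧ σ.1 j < σ.1 ⟨i, h⟩ then 1 else 0)
  else none

lemma key_eq (σ : CP ℓ n) (i : Fin n) :
    key σ i = if IsFix σ i then none
      else some (decide ((σ.2 i : ℕ) = 0 ∧ i < σ.1 i), (σ.2 i : ℕ),
        ∑ j : Fin n, if ¬ IsFix σ j ∧ σ.1 j < σ.1 i then 1 else 0) := by
  simp [key]

lemma key_ins_succAbove (p : Fin (n + 1)) (c : Fin ℓ) (hc : (c : ℕ) = 0) (τ : CP ℓ n)
    (i : Fin n) : key (ins p p c τ) (p.succAbove i : Fin (n + 1)) = key τ i := by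
  have hp : IsFix (ins p p c τ) p := by simp [IsFix, hc]
  rw [key_eq, key_eq, Fin.sum_univ_succAbove _ p]
  have hn : ¬ (¬ IsFix (ins p p c τ) p ∧
      (ins p p c τ).1 p < (ins p p c τ).1 (p.succAbove i)) := fun h => h.1 hp
  rw [if_neg hn, zero_add]
  simp only [isFix_ins_succAbove, ins_fst_succAbove, ins_snd_succAbove,
    Fin.succAbove_lt_succAbove_iff]

/-- Deleting a fixed point removes one `none` from the word of keys. -/
lemma bw_key_ins (p : Fin (n + 1)) (c : Fin ℓ) (hc : (c : ℕ) = 0) (τ : CP ℓ n) :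
    bw (key (ins p p c τ)) (n + 1) = (bw (key τ) n).insertIdx (n - p) none := by
  have hpn : (p : ℕ) + (n - p) = n := by have := p.2; omega
  have hp : key (ins p p c τ) p = none := by
    rw [key_eq, if_pos]; simp [IsFix, hc]
  have := bw_insert (g := key τ) (g' := key (ins p p c τ)) p (n - p) ?_ ?_
  · rw [hpn, hp] at this
    exact this
  · intro i hi
    have hin : i < n := by omega
    have := key_ins_succAbove p c hc τ ⟨i, hin⟩
    rwa [Fin.succAbove_of_castSucc_lt _ _ (by simpa [Fin.lt_def] using hi)] at this
  · intro i hi hi'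
    have hin : i < n := by omega
    have := key_ins_succAbove p c hc τ ⟨i, hin⟩
    rwa [Fin.succAbove_of_le_castSucc _ _ (by simpa [Fin.le_def] using hi)] at this

lemma rank_lt_iff (σ : CP ℓ n) {i j : Fin n} (hi : ¬ IsFix σ i) :
    (∑ k : Fin n, if ¬ IsFix σ k ∧ σ.1 k < σ.1 i then 1 else 0)
      < (∑ k : Fin n, if ¬ IsFix σ k ∧ σ.1 k < σ.1 j then 1 else 0) ↔ σ.1 i < σ.1 j := by
  simp only [sum_boole, Nat.cast_id]
  constructor
  · intro h
    by_contra hle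
    refine absurd h (not_lt.mpr (card_le_card ?_))
    intro k hk
    simp only [mem_filter, mem_univ, true_and] at hk ⊢
    exact ⟨hk.1, hk.2.trans_le (not_lt.mp hle)⟩
  · intro h
    apply card_lt_card
    rw [ssubset_iff_of_subset]
    · exact ⟨i, mem_filter.mpr ⟨mem_univ _, hi, h⟩, by simp⟩
    · intro k hk
      simp only [mem_filter, mem_univ, true_and] at hk ⊢
      exact ⟨hk.1, hk.2.trans h⟩

/-- The keys have the same descents as the word of `σ`. -/
lemma maj_eq_rmaj (σ : CP ℓ n) : maj σ = rmaj (bw (key σ) n) := by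
  rw [rmaj_bw, maj, desSet]
  refine sum_congr (filter_congr fun i hi => ?_) fun _ _ => rfl
  rw [mem_range] at hi
  have h1 : i < n := by omega
  have h2 : i + 1 < n := by omega
  obtain ⟨a, ha⟩ : ∃ a : Fin n, a = ⟨i, h1⟩ := ⟨_, rfl⟩
  obtain ⟨b, hb⟩ : ∃ b : Fin n, b = ⟨i + 1, h2⟩ := ⟨_, rfl⟩
  have hai : (a : ℕ) = i := by rw [ha]
  have hbi : (b : ℕ) = i + 1 := by rw [hb]
  have hne : (σ.1 a : ℕ) ≠ σ.1 b := by
    intro h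
    have := σ.1.injective (Fin.ext h)
    rw [Fin.ext_iff] at this
    omega
  rw [← hai, show (a : ℕ) + 1 = b by omega, letter_eq, letter_eq, key_eq, key_eq]
  have hfix : ∀ k : Fin n, IsFix σ k ↔ (σ.1 k : ℕ) = k ∧ (σ.2 k : ℕ) = 0 := by
    intro k; rw [IsFix, Fin.ext_iff]
  by_cases fa : IsFix σ a <;> by_cases fb : IsFix σ b
  · rw [if_pos fa, if_pos fb]
    rw [hfix] at fa fb
    simp only [kgt, gtLetter]
    simp; omega
  · rw [if_pos fa, if_neg fb]
    rw [hfix] at fa fb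
    simp only [kgt, gtLetter, Fin.lt_def]
    simp; omega
  · rw [if_neg fa, if_pos fb]
    rw [hfix] at fa fb
    simp only [kgt, gtLetter, Fin.lt_def]
    simp; omega
  · rw [if_neg fa, if_neg fb]
    have hr := rank_lt_iff σ (i := b) (j := a) fb
    rw [Fin.lt_def] at hr
    rw [hfix] at fa fb
    simp only [kgt, gtLetter, Fin.lt_def] at hr ⊢
    simp only [hr, Bool.or_eq_true, Bool.and_eq_true, decide_eq_true_eq, beq_iff_eq,
      Bool.not_eq_true', decide_eq_false_iff_not, decide_eq_decide]
    omega

variable {R : Type*} [CommRing R] (q : R)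

/-- The colored derangements. -/
abbrev derang (ℓ n : ℕ) : Finset (CP ℓ n) := univ.filter fun σ => ∀ i, ¬ IsFix σ i

/-- Sum of `f` over the key words of the colored permutations without fixed points at
(0-based) positions `≥ j`, weighted by color. -/
def tailSum (ℓ n j : ℕ) (f : List (Option (Bool × ℕ × ℕ)) → R) : R :=
  ∑ σ ∈ (univ : Finset (CP ℓ n)).filter (fun σ => ∀ i : Fin n, j ≤ (i : ℕ) → ¬ IsFix σ i),
    q ^ col σ * f (bw (key σ) n)

/-- Splitting according to whether `j` is the last fixed point. -/
lemma tailSum_succ (hℓ : 1 ≤ ℓ) (j t : ℕ) (f : List (Option (Bool × ℕ × ℕ)) → R) :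
    tailSum q ℓ (j + t + 1) (j + 1) f = tailSum q ℓ (j + t + 1) j f
      + tailSum q ℓ (j + t) j (fun L => f (L.insertIdx t none)) := by
  let p : Fin (j + t + 1) := ⟨j, by omega⟩
  let c : Fin ℓ := ⟨0, hℓ⟩
  rw [tailSum, ← sum_filter_add_sum_filter_not _ (fun σ => ¬ IsFix σ p)]
  congr 1
  · rw [tailSum, filter_filter]
    refine sum_congr (filter_congr fun σ _ => ?_) fun _ _ => rfl
    constructor
    · rintro ⟨h, h'⟩ i hi
      rcases hi.eq_or_lt with e | e
      · rwa [show i = p from Fin.ext e.symm]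
      · exact h i e
    · exact fun h => ⟨fun i hi => h i (by omega), h p le_rfl⟩
  · rw [tailSum, filter_filter, sum_ins p p c]
    · refine sum_congr ?_ fun τ _ => ?_
      · refine filter_congr fun τ _ => ?_
        have hp : IsFix (ins p p c τ) p := by simp [IsFix, c]
        rw [Fin.forall_iff_succAbove p]
        simp only [isFix_ins_succAbove, not_not]
        have hcmp : ∀ i : Fin (j + t),
            j + 1 ≤ ((p.succAbove i : Fin (j + t + 1)) : ℕ) ↔ j ≤ (i : ℕ) := by
          intro i
          by_cases h : (i : ℕ) < j
          · rw [Fin.succAbove_of_castSucc_lt _ _ (by simpa [Fin.lt_def, p] using h)]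
            simp; omega
          · rw [Fin.succAbove_of_le_castSucc _ _ (by simpa [Fin.le_def, p] using h)]
            simp
        simp only [hcmp]
        exact ⟨fun h => h.1.2, fun h => ⟨⟨fun hlt => absurd hlt (by simp [p]), h⟩, hp⟩⟩
      · rw [col_ins, bw_key_ins p c rfl]
        simp [c, p]
    · rintro σ ⟨_, h⟩
      rw [not_not] at h
      exact ⟨h.1, Fin.ext h.2⟩

/-- Contribution to `tailSum` of the words with `k` fixed points, where the derangement that
remains has length `m`, and all fixed points precede its last `t` letters. -/
def tailTerm (ℓ k m r t : ℕ) (f : List (Option (Bool × ℕ × ℕ)) → R) : R :=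
  ∑ δ ∈ derang ℓ m, q ^ col δ * shuf k (bw (key δ) r) (fun s => f (pre (key δ) r t s))

lemma tailTerm_zero (m r t : ℕ) (f : List (Option (Bool × ℕ × ℕ)) → R) :
    tailTerm q ℓ 0 m (r + 1) t f = tailTerm q ℓ 0 m r (t + 1) f := by
  refine sum_congr rfl fun δ _ => ?_
  rw [shuf_zero, shuf_zero, bw, pre_succ]

lemma tailTerm_succ (k m r t : ℕ) (f : List (Option (Bool × ℕ × ℕ)) → R) :
    tailTerm q ℓ (k + 1) m (r + 1) t f
      = tailTerm q ℓ (k + 1) m r (t + 1) f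
        + tailTerm q ℓ k m (r + 1) t (fun L => f (L.insertIdx t none)) := by
  rw [tailTerm, tailTerm, tailTerm, ← sum_add_distrib]
  refine sum_congr rfl fun δ _ => ?_
  simp only [insertIdx_pre]
  rw [bw, shuf]
  simp only [pre_succ]
  ring

lemma tailTerm_succ_zero (k m t : ℕ) (f : List (Option (Bool × ℕ × ℕ)) → R) :
    tailTerm q ℓ (k + 1) m 0 t f = tailTerm q ℓ k m 0 t (fun L => f (L.insertIdx t none)) := by
  refine sum_congr rfl fun δ _ => ?_
  simp only [insertIdx_pre]
  rw [bw, shuf]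

lemma tailSum_eq (hℓ : 1 ≤ ℓ) (j : ℕ) : ∀ (t : ℕ) (f : List (Option (Bool × ℕ × ℕ)) → R),
    tailSum q ℓ (j + t) j f
      = ∑ k ∈ range (j + 1), tailTerm q ℓ k (j + t - k) (j - k) t f := by
  induction j with
  | zero =>
    intro t f
    have h : ∀ m, m = t → tailSum q ℓ m 0 f = tailTerm q ℓ 0 t 0 t f := by
      rintro m rfl
      rw [tailSum, tailTerm]
      refine sum_congr (filter_congr fun δ _ => by simp only [zero_le, forall_const]) fun δ _ => ?_
      have := bw_add (key δ) 0 m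
      rw [zero_add] at this
      rw [shuf_zero, this]
    rw [h _ (zero_add t)]
    simp
  | succ j ih =>
    intro t f
    have h1 : tailSum q ℓ (j + t + 1) j f = _ := ih (t + 1) f
    have h2 := ih t (fun L => f (L.insertIdx t none))
    rw [show j + 1 + t = j + t + 1 by omega, tailSum_succ q hℓ, h1, h2]
    rw [sum_range_succ' _ j, sum_range_succ' _ (j + 1), sum_range_succ _ j, sum_range_succ _ j]
    have e0 : tailTerm q ℓ 0 (j + t + 1 - 0) (j + 1 - 0) t f
        = tailTerm q ℓ 0 (j + (t + 1) - 0) (j - 0) (t + 1) f := tailTerm_zero q _ _ _ _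
    have e1 : tailTerm q ℓ (j + 1) (j + t + 1 - (j + 1)) (j + 1 - (j + 1)) t f
        = tailTerm q ℓ j (j + t - j) (j - j) t (fun L => f (L.insertIdx t none)) := by
      rw [show j + t + 1 - (j + 1) = j + t - j by omega, Nat.sub_self, Nat.sub_self,
        tailTerm_succ_zero]
    have e2 : ∀ k ∈ range j, tailTerm q ℓ (k + 1) (j + t + 1 - (k + 1)) (j + 1 - (k + 1)) t f
        = tailTerm q ℓ (k + 1) (j + (t + 1) - (k + 1)) (j - (k + 1)) (t + 1) f
          + tailTerm q ℓ k (j + t - k) (j - k) t (fun L => f (L.insertIdx t none)) := by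
      intro k hk
      rw [mem_range] at hk
      rw [show j + t + 1 - (k + 1) = j + t - k by omega,
        show j + (t + 1) - (k + 1) = j + t - k by omega,
        show j + 1 - (k + 1) = j - (k + 1) + 1 by omega, tailTerm_succ,
        show j - (k + 1) + 1 = j - k by omega]
    rw [e0, e1, sum_congr rfl e2, sum_add_distrib]
    ring

/-- The flag-major-index generating function of the colored derangements. -/
def derPoly (q : R) (ℓ n : ℕ) : R := ∑ δ ∈ derang ℓ n, q ^ fmaj δ

/-- Wachs' identity for colored permutations, summed over all derangement parts. -/
lemma qfac_eq_sum (hℓ : 1 ≤ ℓ) (n : ℕ) :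
    qfac q ℓ n = ∑ k ∈ range (n + 1), qbinom (q ^ ℓ) n k * derPoly q ℓ (n - k) := by
  have h := tailSum_eq q hℓ n 0 (fun s => (q ^ ℓ) ^ rmaj s)
  rw [← sum_fmaj q ℓ n]
  have h0 : ∑ σ : CP ℓ n, q ^ fmaj σ = tailSum q ℓ (n + 0) n (fun s => (q ^ ℓ) ^ rmaj s) := by
    rw [tailSum, filter_true_of_mem]
    · refine sum_congr rfl fun σ _ => ?_
      rw [fmaj, maj_eq_rmaj, pow_add, pow_mul, mul_comm]
      rfl
    · intro σ _ i hi
      have := i.2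
      omega
  rw [h0, h]
  refine sum_congr rfl fun k hk => ?_
  rw [mem_range] at hk
  rw [tailTerm, derPoly, mul_sum, add_zero]
  refine sum_congr rfl fun δ hδ => ?_
  have hδ' : ∀ i, ¬ IsFix δ i := by simpa using hδ
  simp only [pre]
  rw [shuf_rmaj, length_bw, Nat.sub_add_cancel (by omega), fmaj, maj_eq_rmaj, pow_add, pow_mul]
  · ring
  · intro a ha
    obtain ⟨i, hi, rfl⟩ := mem_bw ha
    have := key_eq δ ⟨i, hi⟩
    rw [if_neg (hδ' _)] at this
    rw [show key δ i = _ from this]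
    simp

end Fmaj

end QTable

/-! ### The statistic `fmaf`: deleting the first fixed point -/

namespace QTable

section Fmaf

open CP

variable {ℓ n : ℕ}

lemma mem_fixSet (σ : CP ℓ n) (i : Fin n) : i ∈ fixSet σ ↔ IsFix σ i := by
  simp [fixSet, IsFix]

/-- The major index of the derangement part, computed on the original letters: `e` enumerates the
non-fixed positions increasingly, and replacing values by ranks does not affect comparisons. -/
lemma maj_Der (σ : CP ℓ n) (m : ℕ) (hm : m = n - fix σ) (e : Fin m → Fin n) (he : StrictMono e)
    (hf : ∀ i, ¬ IsFix σ (e i)) :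
    maj (Der σ) = ∑ i ∈ (range (m - 1)).filter (fun i => ∃ (h : i < m) (h' : i + 1 < m),
      gtLetter ((σ.2 (e ⟨i, h⟩) : ℕ), (σ.1 (e ⟨i, h⟩) : ℕ))
        ((σ.2 (e ⟨i + 1, h'⟩) : ℕ), (σ.1 (e ⟨i + 1, h'⟩) : ℕ))), (i + 1) := by
  subst hm
  have hu := orderEmbOfFin_unique (card_nonfix σ) (f := e)
    (fun i => by rw [mem_compl, mem_fixSet]; exact hf i) he
  have hu' : ∀ i, ((((fixSet σ)ᶜ).orderIsoOfFin (card_nonfix σ) i : _) : Fin n) = e i := by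
    intro i
    rw [coe_orderIsoOfFin_apply, hu]
  rw [maj, desSet]
  refine sum_congr (filter_congr fun i hi => ?_) fun _ _ => rfl
  rw [mem_range] at hi
  have h : i < n - fix σ := by omega
  have h' : i + 1 < n - fix σ := by omega
  have l1 := letter_eq (Der σ) ⟨i, h⟩
  have l2 := letter_eq (Der σ) ⟨i + 1, h'⟩
  simp only at l1 l2
  rw [l1, l2]
  simp only [h, h', exists_true_left, gtLetter]
  have c1 : ∀ k, (Der σ).2 k = σ.2 (e k) := fun k => by rw [← hu' k]; rfl
  have c2 : ∀ k k', (((Der σ).1 k : Fin _) : ℕ) < ((Der σ).1 k' : Fin _)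
      ↔ (σ.1 (e k) : ℕ) < σ.1 (e k') := by
    intro k k'
    rw [← hu' k, ← hu' k', ← Fin.lt_def, ← Fin.lt_def]
    exact (((((fixSet σ)ᶜ).image σ.1).orderIsoOfFin (card_vals σ)).symm.lt_iff_lt).trans Iff.rfl
  rw [c1, c1, c2]

lemma maj_Der_of_derangement (σ : CP ℓ n) (h : ∀ i, ¬ IsFix σ i) : maj (Der σ) = maj σ := by
  have hfix : fix σ = 0 := by
    rw [fix, card_eq_zero, eq_empty_iff_forall_notMem]
    intro i hi
    exact h i ((mem_fixSet σ i).mp hi)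
  rw [maj_Der σ n (by omega) id strictMono_id h, maj, desSet]
  refine sum_congr (filter_congr fun i hi => ?_) fun _ _ => rfl
  rw [mem_range] at hi
  have h1 : i < n := by omega
  have h2 : i + 1 < n := by omega
  simp [letter, h1, h2]

lemma fmaf_of_derangement (σ : CP ℓ n) (h : ∀ i, ¬ IsFix σ i) :
    fmaf σ = fmaj σ ∧ fix σ = 0 := by
  have he : fixSet σ = ∅ := by
    rw [eq_empty_iff_forall_notMem]
    intro i hi
    exact h i ((mem_fixSet σ i).mp hi)
  have hfix : fix σ = 0 := by rw [fix, he, card_empty]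
  refine ⟨?_, hfix⟩
  rw [fmaf, fmaj, maf, maj_Der_of_derangement σ h, he]
  simp

lemma fixSet_ins (p : Fin (n + 1)) (c : Fin ℓ) (hc : (c : ℕ) = 0) (τ : CP ℓ n) :
    fixSet (ins p p c τ) = insert p ((fixSet τ).map p.succAboveEmb) := by
  ext i
  rw [mem_fixSet, mem_insert, mem_map]
  rcases Fin.eq_self_or_eq_succAbove p i with rfl | ⟨i, rfl⟩
  · simp [IsFix, hc]
  · rw [isFix_ins_succAbove]
    simp [mem_fixSet, Fin.succAbove_ne]

lemma fix_ins (p : Fin (n + 1)) (c : Fin ℓ) (hc : (c : ℕ) = 0) (τ : CP ℓ n) :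
    fix (ins p p c τ) = fix τ + 1 := by
  rw [fix, fixSet_ins p c hc, card_insert_of_notMem, card_map, fix]
  simp [Fin.succAbove_ne]

lemma maj_Der_ins (p : Fin (n + 1)) (c : Fin ℓ) (hc : (c : ℕ) = 0) (τ : CP ℓ n) :
    maj (Der (ins p p c τ)) = maj (Der τ) := by
  let e := ((fixSet τ)ᶜ).orderEmbOfFin (card_nonfix τ)
  have hf : ∀ i, ¬ IsFix τ (e i) := by
    intro i
    rw [← mem_fixSet, ← mem_compl]
    exact orderEmbOfFin_mem _ _ _
  rw [maj_Der τ (n - fix τ) rfl e e.strictMono hf,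
    maj_Der (ins p p c τ) (n - fix τ) (by rw [fix_ins p c hc]; omega)
      (fun i => p.succAbove (e i)) ((Fin.strictMono_succAbove p).comp e.strictMono)
      (fun i => by rw [isFix_ins_succAbove]; exact hf i)]
  simp only [ins_fst_succAbove, ins_snd_succAbove, gtLetter, ← Fin.lt_def,
    Fin.succAbove_lt_succAbove_iff]

lemma choose_two_le_sum (s : Finset ℕ) : s.card.choose 2 ≤ ∑ i ∈ s, i := by
  induction s using Finset.induction_on_max with
  | empty => simp
  | insert a s h ih =>
    have hn : a ∉ s := fun ha => lt_irrefl _ (h a ha)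
    have hc : s.card ≤ a := by
      have := card_le_card (s := s) (t := range a) fun x hx => mem_range.mpr (h x hx)
      simpa using this
    have hch : (s.card + 1).choose 2 = s.card + s.card.choose 2 := by
      rw [Nat.choose_succ_succ' _ 1, Nat.choose_one_right]
    rw [card_insert_of_notMem hn, sum_insert hn, hch]
    omega

/-- Inserting a fixed point at `p`, before all other fixed points, adds `p` to `maf`. The
hypothesis ensures that the positions of the other fixed points increase by one, which their
increased index compensates. -/
lemma fmaf_ins (p : Fin (n + 1)) (c : Fin ℓ) (hc : (c : ℕ) = 0) (τ : CP ℓ n)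
    (h : ∀ i : Fin n, (i : ℕ) < p → ¬ IsFix τ i) :
    fmaf (ins p p c τ) = ℓ * p + fmaf τ := by
  have hs : ∑ i ∈ fixSet (ins p p c τ), (i : ℕ)
      = p + (∑ i ∈ fixSet τ, (i : ℕ) + fix τ) := by
    rw [fixSet_ins p c hc, sum_insert (by simp [Fin.succAbove_ne]), sum_map, fix,
      card_eq_sum_ones, ← sum_add_distrib]
    congr 1
    refine sum_congr rfl fun i hi => ?_
    have hpi : (p : ℕ) ≤ i := by
      by_contra hlt
      exact h i (by omega) ((mem_fixSet τ i).mp hi)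
    rw [Fin.coe_succAboveEmb,
      Fin.succAbove_of_le_castSucc _ _ (by simpa [Fin.le_def] using hpi), Fin.val_succ]
  have hle : (fix τ).choose 2 ≤ ∑ i ∈ fixSet τ, (i : ℕ) := by
    have := choose_two_le_sum ((fixSet τ).map Fin.valEmbedding)
    rwa [card_map, sum_map] at this
  have hch : (fix τ + 1).choose 2 = fix τ + (fix τ).choose 2 := by
    rw [Nat.choose_succ_succ' _ 1, Nat.choose_one_right]
  rw [fmaf, fmaf, maf, maf, maj_Der_ins p c hc, hs, fix_ins p c hc, hch, col_ins, hc]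
  have : (p : ℕ) + (∑ i ∈ fixSet τ, (i : ℕ) + fix τ) - (fix τ + (fix τ).choose 2)
      = p + (∑ i ∈ fixSet τ, (i : ℕ) - (fix τ).choose 2) := by omega
  rw [this]
  ring

variable {R : Type*} [CommRing R] (q x : R)

/-- Generating function of `(fmaf, fix)` over the colored permutations without fixed points at
(0-based) positions `< j`. -/
def headSum (ℓ n j : ℕ) : R :=
  ∑ σ ∈ (univ : Finset (CP ℓ n)).filter (fun σ => ∀ i : Fin n, (i : ℕ) < j → ¬ IsFix σ i),
    q ^ fmaf σ * x ^ fix σ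

/-- Splitting according to whether `j` is the first fixed point. -/
lemma headSum_succ (hℓ : 1 ≤ ℓ) (n j : ℕ) (hj : j ≤ n) :
    headSum q x ℓ (n + 1) j
      = headSum q x ℓ (n + 1) (j + 1) + x * q ^ (ℓ * j) * headSum q x ℓ n j := by
  let p : Fin (n + 1) := ⟨j, by omega⟩
  let c : Fin ℓ := ⟨0, hℓ⟩
  rw [headSum, ← sum_filter_add_sum_filter_not _ (fun σ => ¬ IsFix σ p)]
  congr 1
  · rw [headSum, filter_filter]
    refine sum_congr (filter_congr fun σ _ => ?_) fun _ _ => rfl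
    constructor
    · rintro ⟨h, h'⟩ i hi
      rcases (Nat.lt_succ_iff.mp hi).eq_or_lt with e | e
      · rwa [show i = p from Fin.ext e]
      · exact h i e
    · exact fun h => ⟨fun i hi => h i (by omega), h p (by simp [p])⟩
  · rw [headSum, filter_filter, sum_ins p p c, mul_sum]
    · refine sum_congr ?_ fun τ hτ => ?_
      · refine filter_congr fun τ _ => ?_
        have hp : IsFix (ins p p c τ) p := by simp [IsFix, c]
        rw [Fin.forall_iff_succAbove p]
        simp only [isFix_ins_succAbove, not_not]
        have hcmp : ∀ i : Fin n,
            ((p.succAbove i : Fin (n + 1)) : ℕ) < j ↔ (i : ℕ) < j := by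
          intro i
          by_cases h : (i : ℕ) < j
          · rw [Fin.succAbove_of_castSucc_lt _ _ (by simpa [Fin.lt_def, p] using h)]
            simp
          · rw [Fin.succAbove_of_le_castSucc _ _ (by simpa [Fin.le_def, p] using h)]
            simp; omega
        simp only [hcmp]
        exact ⟨fun h => h.1.2, fun h => ⟨⟨fun hlt => absurd hlt (by simp [p]), h⟩, hp⟩⟩
      · have hτ' : ∀ i : Fin n, (i : ℕ) < j → ¬ IsFix τ i := (mem_filter.mp hτ).2
        rw [fmaf_ins p c rfl τ hτ', fix_ins p c rfl, pow_add, pow_succ]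
        ring
    · rintro σ ⟨_, h⟩
      rw [not_not] at h
      exact ⟨h.1, Fin.ext h.2⟩

lemma headSum_self (j : ℕ) : headSum q x ℓ j j = derPoly q ℓ j := by
  rw [headSum, derPoly]
  refine sum_congr (filter_congr fun σ _ => ?_) fun σ hσ => ?_
  · exact ⟨fun h i => h i i.2, fun h i _ => h i⟩
  · obtain ⟨h1, h2⟩ := fmaf_of_derangement σ (mem_filter.mp hσ).2
    rw [h1, h2, pow_zero, mul_one]

lemma headSum_eq (hℓ : 1 ≤ ℓ) (r : ℕ) : ∀ j : ℕ,
    headSum q x ℓ (j + r) j = ∑ k ∈ range (r + 1),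
      x ^ k * (q ^ ℓ) ^ (j * k) * qbinom (q ^ ℓ) r k * derPoly q ℓ (j + r - k) := by
  induction r with
  | zero => intro j; simp [headSum_self]
  | succ r ih =>
    intro j
    have h1 := ih (j + 1)
    have e : j + 1 + r = j + r + 1 := by omega
    rw [e] at h1
    rw [← add_assoc, headSum_succ q x hℓ (j + r) j (by omega), h1, ih j,
      sum_range_succ' _ (r + 1)]
    have h2 := sum_range_succ' (fun k => x ^ k * (q ^ ℓ) ^ ((j + 1) * k) * qbinom (q ^ ℓ) r k
      * derPoly q ℓ (j + r + 1 - k)) (r + 1)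
    rw [sum_range_succ, qbinom_eq_zero _ r (r + 1) (by omega), mul_zero, zero_mul, add_zero] at h2
    rw [h2, mul_sum]
    simp only [mul_zero, pow_zero, qbinom_zero_right]
    rw [add_right_comm, ← sum_add_distrib]
    congr 1
    refine sum_congr rfl fun k _ => ?_
    rw [qbinom_succ_succ, show j + r + 1 - (k + 1) = j + r - k by omega]
    ring

end Fmaf

/-! ### The diagonal of the table -/

section Diagonal

open MvPolynomial

lemma qfac_ne_zero (ℓ n : ℕ) (hℓ : 1 ≤ ℓ) :
    qfac (X 0 : MvPolynomial (Fin 2) ℤ) ℓ n ≠ 0 := by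
  intro h
  -- all `q`-integers of positive index specialize to positive integers at `q = 1`
  have := congrArg (MvPolynomial.eval (fun _ => (1 : ℤ))) h
  simp only [qfac, qint, map_prod, map_sum, map_pow, eval_X, one_pow, map_zero, sum_const,
    card_range, nsmul_eq_mul, mul_one] at this
  rw [prod_eq_zero_iff] at this
  obtain ⟨j, _, hj⟩ := this
  have : (j + 1) * ℓ = 0 := by exact_mod_cast hj
  have : 0 < (j + 1) * ℓ := by positivity
  omega

lemma qbinom_trinomial (ℓ k j i : ℕ) (hℓ : 1 ≤ ℓ) :
    qbinom ((X 0 : MvPolynomial (Fin 2) ℤ) ^ ℓ) (k + j + i) k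
        * qbinom ((X 0 : MvPolynomial (Fin 2) ℤ) ^ ℓ) (j + i) j
      = qbinom ((X 0 : MvPolynomial (Fin 2) ℤ) ^ ℓ) (k + j + i) (k + j)
        * qbinom ((X 0 : MvPolynomial (Fin 2) ℤ) ^ ℓ) (k + j) k := by
  have h1 := qbinom_mul_qfac (X 0 : MvPolynomial (Fin 2) ℤ) ℓ (j + i) k
  have h2 := qbinom_mul_qfac (X 0 : MvPolynomial (Fin 2) ℤ) ℓ i j
  have h3 := qbinom_mul_qfac (X 0 : MvPolynomial (Fin 2) ℤ) ℓ i (k + j)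
  have h4 := qbinom_mul_qfac (X 0 : MvPolynomial (Fin 2) ℤ) ℓ j k
  rw [show j + i + k = k + j + i by omega] at h1
  rw [add_comm i j] at h2
  rw [add_comm i (k + j)] at h3
  rw [add_comm j k] at h4
  have hne : qfac (X 0 : MvPolynomial (Fin 2) ℤ) ℓ i * qfac (X 0) ℓ j * qfac (X 0) ℓ k ≠ 0 :=
    mul_ne_zero (mul_ne_zero (qfac_ne_zero ℓ i hℓ) (qfac_ne_zero ℓ j hℓ)) (qfac_ne_zero ℓ k hℓ)
  apply mul_right_cancel₀ hne
  rw [← h2] at h1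
  rw [← h4] at h3
  linear_combination h1 - h3

lemma prod_Icc_qint (ℓ n k : ℕ) (hℓ : 1 ≤ ℓ) (hk : k ≤ n) :
    ∏ j ∈ Icc (k + 1) n, qint (X 0 : MvPolynomial (Fin 2) ℤ) (j * ℓ)
      = qbinom (X 0 ^ ℓ) n k * qfac (X 0) ℓ (n - k) := by
  apply mul_right_cancel₀ (qfac_ne_zero ℓ k hℓ)
  have h := qbinom_mul_qfac (X 0 : MvPolynomial (Fin 2) ℤ) ℓ (n - k) k
  rw [Nat.sub_add_cancel hk] at h
  rw [mul_assoc, h]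
  have h2 : ∏ j ∈ Icc (k + 1) n, qint (X 0 : MvPolynomial (Fin 2) ℤ) (j * ℓ)
      = ∏ j ∈ Ico k n, qint (X 0 : MvPolynomial (Fin 2) ℤ) ((j + 1) * ℓ) := by
    rw [prod_Ico_add' (fun j => qint (X 0 : MvPolynomial (Fin 2) ℤ) (j * ℓ)) k n 1]
    rfl
  rw [h2, mul_comm, qfac, qfac, prod_range_mul_prod_Ico _ hk]

/-- Expanding `[ℓ]⋯[(n-k)ℓ]` through derangements and summing by Cauchy's theorem turns `gPoly`
into the generating function of `(fmaf, fix)`. -/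
lemma gPoly_eq (ℓ n : ℕ) (hℓ : 1 ≤ ℓ) :
    gPoly ℓ n = headSum (X 0 : MvPolynomial (Fin 2) ℤ) (X 1) ℓ n 0 := by
  have h := headSum_eq (X 0 : MvPolynomial (Fin 2) ℤ) (X 1) hℓ n 0
  simp only [zero_add, zero_mul, pow_zero, mul_one] at h
  rw [h, gPoly]
  have hl : ∀ k ∈ range (n + 1),
      (∏ i ∈ range k, (X 1 - (X 0 : MvPolynomial (Fin 2) ℤ) ^ (ℓ * i))) *
        ∏ j ∈ Icc (k + 1) n, qint (X 0 : MvPolynomial (Fin 2) ℤ) (j * ℓ)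
      = ∑ j ∈ range (n + 1 - k), (∏ i ∈ range k, (X 1 - ((X 0 : MvPolynomial (Fin 2) ℤ) ^ ℓ) ^ i))
          * (qbinom (X 0 ^ ℓ) n (k + j) * qbinom (X 0 ^ ℓ) (k + j) k
            * derPoly (X 0) ℓ (n - (k + j))) := by
    intro k hk
    rw [mem_range] at hk
    rw [prod_Icc_qint ℓ n k hℓ (by omega), qfac_eq_sum _ hℓ, show n - k + 1 = n + 1 - k by omega,
      mul_sum, mul_sum]
    refine sum_congr rfl fun j hj => ?_
    rw [mem_range] at hj
    obtain ⟨i, rfl⟩ : ∃ i, n = k + j + i := ⟨n - (k + j), by omega⟩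
    have ht := qbinom_trinomial ℓ k j i hℓ
    rw [show k + j + i - k = j + i by omega, show j + i - j = i by omega,
      show k + j + i - (k + j) = i by omega, ← ht]
    simp only [pow_mul]
    ring
  rw [sum_congr rfl hl, ← sum_range_diag_flip (n + 1) (fun k j =>
    (∏ i ∈ range k, (X 1 - ((X 0 : MvPolynomial (Fin 2) ℤ) ^ ℓ) ^ i))
          * (qbinom (X 0 ^ ℓ) n (k + j) * qbinom (X 0 ^ ℓ) (k + j) k
            * derPoly (X 0) ℓ (n - (k + j))))]
  refine sum_congr rfl fun s _ => ?_
  rw [← sum_qbinom_prod ((X 0 : MvPolynomial (Fin 2) ℤ) ^ ℓ) (X 1) s, sum_mul, sum_mul]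
  refine sum_congr rfl fun k hk => ?_
  rw [mem_range] at hk
  rw [show k + (s - k) = s by omega]
  ring

end Diagonal

end QTable

open MvPolynomial in
/-- With the table `G n m = g_{ℓ,n}^m(q,x)` defined by the diagonal values
`g_{ℓ,n}^n = g_{ℓ,n}` and the recurrence
`g_{ℓ,n}^m = g_{ℓ,n}^{m+1} − x·q^{ℓ(n−m−1)}·g_{ℓ,n−1}^m`, for `0 ≤ m ≤ n` one has
`g_{ℓ,n}^m(q,x) = Σ_{σ ∈ G_{ℓ,n}^m} q^{fmaf σ} x^{fix σ}`, where `G_{ℓ,n}^m` consists of the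
colored permutations with `σ(i) ≠ i` for all (1-based) `i ≤ n−m`. -/
theorem q_difference_table_combinatorial_interpretation (ℓ : ℕ) (hℓ : 1 ≤ ℓ)
    (G : ℕ → ℕ → MvPolynomial (Fin 2) ℤ)
    (hdiag : ∀ n, G n n = gPoly ℓ n)
    (hrec : ∀ n m, m < n →
      G n m = G n (m + 1) - X 1 * (X 0 : MvPolynomial (Fin 2) ℤ) ^ (ℓ * (n - m - 1)) * G (n - 1) m) :
    ∀ n m, m ≤ n →
      G n m = ∑ σ ∈ (univ : Finset (CP ℓ n)).filter
          (fun σ => ∀ i : Fin n, (i : ℕ) < n - m → ¬(σ.1 i = i ∧ (σ.2 i : ℕ) = 0)),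
        (X 0 : MvPolynomial (Fin 2) ℤ) ^ CP.fmaf σ * (X 1) ^ CP.fix σ := by
  suffices h : ∀ n m, m ≤ n → G n m = QTable.headSum (X 0) (X 1) ℓ n (n - m) from h
  intro n
  induction n with
  | zero =>
    intro m hm
    obtain rfl : m = 0 := by omega
    rw [hdiag, QTable.gPoly_eq ℓ 0 hℓ]
  | succ n ihn =>
    intro m hm
    induction hm using Nat.decreasingInduction with
    | self => rw [hdiag, QTable.gPoly_eq ℓ _ hℓ, Nat.sub_self]
    | of_succ m hm ih =>
      have hs := QTable.headSum_succ (X 0 : MvPolynomial (Fin 2) ℤ) (X 1) hℓ n (n - m) (by omega)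
      rw [hrec (n + 1) m hm, ih, show n + 1 - 1 = n by omega, ihn m (by omega),
        show n + 1 - m - 1 = n - m by omega, show n + 1 - (m + 1) = n - m by omega,
        show n + 1 - m = n - m + 1 by omega, hs]
      ring
end

section
/- Let R be a commutative ring, let (x_m)_{m≥0} and (z_m)_{m≥0} and (y_n)_{n≥1} be sequences in R, and define an array (a_{n,m})_{n,m≥0} by a_{0,m} = x_m for all m, and a_{n,m} = z_m·a_{n−1,m+1} + y_n·a_{n−1,m} for n≥1. Then for all n,m≥0: a_{n,m} = Σ_{k=0}^n x_{m+k} · (z_m z_{m+1}⋯z_{m+k−1}) · e_{n−k}(y_1, y_2, …, y_n), where e_i denotes the i-th elementary symmetric polynomial (with the empty product z_m⋯z_{m+k−1} = 1 when k=0). -/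
open Finset

/-!
The proof is by induction on `n`, uniformly in `m`. The recurrence for the array matches the Pascal-type
recurrence `e_{i+1}(y_1,…,y_{n+1}) = e_{i+1}(y_1,…,y_n) + y_{n+1} e_i(y_1,…,y_n)`
(`sum_powersetCard_Icc_succ`): the term `y_{n+1} a_{n,m}` supplies the second summand, while
multiplying `a_{n,m+1}` by `z_m` extends each product `z_{m+1}⋯z_{m+k}` to `z_m⋯z_{m+k}` and
shifts the summation index by one, supplying the first summand. The boundary terms are
`e_{n+1}(y_1,…,y_n) = 0` and `e_0 = 1`.
-/

/-- Split the `(i + 1)`-subsets of `{1,…,n+1}` according to whether they contain `n + 1`. -/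
theorem sum_powersetCard_Icc_succ {R : Type*} [CommRing R] (y : ℕ → R) (n i : ℕ) :
    ∑ T ∈ (Icc 1 (n + 1)).powersetCard (i + 1), ∏ j ∈ T, y j =
      ∑ T ∈ (Icc 1 n).powersetCard (i + 1), ∏ j ∈ T, y j +
        y (n + 1) * ∑ T ∈ (Icc 1 n).powersetCard i, ∏ j ∈ T, y j := by
  have hn : n + 1 ∉ Icc 1 n := by simp
  have hnotMem : ∀ {d : ℕ}, ∀ T ∈ (Icc 1 n).powersetCard d, n + 1 ∉ T :=
    fun T hT h => hn ((mem_powersetCard.1 hT).1 h)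
  rw [← insert_Icc_right_eq_Icc_add_one (by omega), powersetCard_succ_insert hn, sum_union,
    sum_image, mul_sum]
  · congr 1
    exact sum_congr rfl fun T hT => prod_insert (hnotMem T hT)
  · intro S hS T hT h
    rw [← erase_insert (hnotMem S hS), ← erase_insert (hnotMem T hT)]
    exact congrArg (fun U => U.erase (n + 1)) h
  · rw [disjoint_left]
    intro T hT hT'
    obtain ⟨S, -, rfl⟩ := mem_image.1 hT'
    exact hnotMem _ hT (mem_insert_self _ _)

/-- For an array defined by `a 0 m = x m` and
`a n m = z m · a (n−1) (m+1) + y n · a (n−1) m`, one has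
`a n m = Σ_{k=0}^n x_{m+k} (z_m⋯z_{m+k−1}) e_{n−k}(y_1,…,y_n)`,
where `e_i(y_1,…,y_n) = Σ_{T ⊆ {1,…,n}, |T| = i} Π_{j ∈ T} y_j`. -/
theorem array_explicit_formula {R : Type*} [CommRing R]
    (x z : ℕ → R) (y : ℕ → R) (a : ℕ → ℕ → R)
    (h0 : ∀ m, a 0 m = x m)
    (hrec : ∀ n m, a (n + 1) m = z m * a n (m + 1) + y (n + 1) * a n m) :
    ∀ n m, a n m = ∑ k ∈ range (n + 1),
      x (m + k) * (∏ i ∈ range k, z (m + i)) *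
        ∑ T ∈ (Icc 1 n).powersetCard (n - k), ∏ j ∈ T, y j := by
  intro n
  induction n with
  | zero => intro m; simp [h0]
  | succ n ih =>
    intro m
    have hzero : ∑ T ∈ (Icc 1 n).powersetCard (n + 1), ∏ j ∈ T, y j = 0 := by
      rw [powersetCard_eq_empty.2 (by simp), sum_empty]
    -- The index `k` is shifted by one; the new term `k = 0` carries `e_{n+1}(y_1,…,y_n) = 0`.
    have hshift : z m * a n (m + 1) = ∑ k ∈ range (n + 2),
        x (m + k) * (∏ i ∈ range k, z (m + i)) *
          ∑ T ∈ (Icc 1 n).powersetCard (n + 1 - k), ∏ j ∈ T, y j := by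
      rw [sum_range_succ', Nat.sub_zero, hzero, mul_zero, add_zero, ih, mul_sum]
      refine sum_congr rfl fun k _ => ?_
      rw [prod_range_succ', Nat.add_sub_add_right]
      simp only [add_zero, add_assoc, add_comm 1]
      ring
    -- Only for `k ≤ n` is the index `n + 1 - k` positive, as the recurrence for `e` requires.
    rw [hrec, hshift, ih, sum_range_succ _ (n + 1), sum_range_succ _ (n + 1),
      mul_sum _ _ (y (n + 1)), add_right_comm, ← sum_add_distrib]
    congr 1
    · refine sum_congr rfl fun k hk => ?_
      rw [Nat.sub_add_comm (Nat.lt_succ_iff.1 (mem_range.1 hk)), sum_powersetCard_Icc_succ]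
      ring
    · simp
end
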